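/- Let k ≥ 2 be an integer and let χ be a quadratic Dirichlet character modulo D with χ(−1) = (−1)^k. For a sequence d : ℕ → ℂ the following are equivalent. (1) For every f ∈ M^{!,∞}_{2−k}(D,χ) with Fourier coefficients c(m), one has ∑_{m≥0} c(−m)·d(m) = 0 (a finite sum, since c(−m) = 0 for m sufficiently large). (2) The formal series ∑_{m≥0} d(m)q^m is the q-expansion of an element of M^∞_k(D,χ); that is, there exists g ∈ M^∞_k(D,χ) with g(τ) = ∑_{m≥0} d(m)e^{2πimτ} for all τ ∈ ℍ. -/

import Mathlib

/-!
# Why the criterion holds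

Forms of level `Γ₀(D)` and character `χ` are induced to vector-valued forms for `SL₂(ℤ)`, with
components indexed by the cosets `SL₂(ℤ)/Γ₀(D)` and permuted up to the signs `eps`
(`comp_VV`, `VV.slash_i0`). The component at the trivial coset `i0` is the original form. The other
components describe its behaviour at the cusps other than `∞`, because a matrix outside `Γ₀(D)`
never fixes `i0`.

*Forms are orthogonal to principal parts* (`orth_abs`, `criterion_mpr`). If `F` has weight `2 - k`
and `G` has weight `k`, then `∑ i, F i * G i` is a level one weakly holomorphic form of weight two.
Its constant term is zero (`Lv.ct_zero`): subtracting derivatives of weight zero forms leaves a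
holomorphic form of weight two, hence `0`. The components away from `i0` tend to zero at `i∞`, so
the constant term of `F i0 * G i0`, which is `∑ c(-m) d(m)`, vanishes as well.

*Orthogonal sequences come from forms* (`dual_abs`, `criterion_mp`). The main point is to find as
many vector-valued forms `f a` as there are cosets such that `det (f a i)` vanishes nowhere on `ℍ`.
The Eisenstein series `hE` of weight `k + 2` is nonzero at `∞` and zero at the other cusps, so the
squares of its components are pairwise distinct and a Vandermonde argument shows that its odd powers
have determinant not identically zero (`initial_basis`). If the determinant vanishes at `z₀`, then a
linear relation at `z₀`, with coefficients replaced by suitable monomials in `E₄` and `E₆`, gives a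
form divisible by a level one form `H` whose only zeros are simple zeros on the orbit of `z₀`; the
quotient replaces a basis element of larger weight (`Bs.reduce`, `Bs.reduce_all`). The total weight
is nonnegative, since the square of the determinant is a holomorphic level one form, so this stops
(`exists_nonvanishing`). The existence of `H` rests on two facts. Its zeros are simple because the
Rankin–Cohen bracket of `E₄` and `E₆` is a nonzero multiple of `Δ` (`wr_ne_zero`). They form one
orbit because `E₄` and `E₆` determine all the Eisenstein series `∑ (m z + n)⁻ᵏ`, `k ≥ 4` even, and
such power sums recover the lattice (`forms_match`, `powsum_mem`, `orbit_unique`).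

In coordinates with respect to this basis a form of weight `2 - k` is an arbitrary tuple of level
one weakly holomorphic forms. The functional pairing the principal part at `∞` with `d`, defined on
vectors bounded at the other cusps, kills the forms of weight `2 - k` among them, so it extends to a
functional killing all of these forms (`ext_dual`). Level one duality (`level_one_duality`) turns
each coordinate of the extension into a level one form `t a` (`exists_tuple`). The vector
`g i = ∑ a, t a * dB f a i`, with `dB f` the transposed inverse of the basis matrix, is a form of
weight `k`, and evaluating the functional on vectors supported at one cusp reads off its Fourier
coefficients: `d` at `∞`, and zero in exponents `≤ 0` at the other cusps.
-/

/-!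
Modularity criterion (Theorem 3.2.2 / `thm:modularity criterion`): for `k ≥ 2` and a quadratic
Dirichlet character `χ` mod `D` with `χ(-1) = (-1)^k`, a sequence `d : ℕ → ℂ` pairs to zero
against the principal parts of all `f ∈ M^{!,∞}_{2-k}(D,χ)` if and only if `∑ d(m) q^m` is the
`q`-expansion of an element of `M^∞_k(D,χ)`.
-/

noncomputable section

/-- The complex upper half plane, as a subset of `ℂ`. -/
def UHP : Set ℂ := {z : ℂ | 0 < z.im}

/-- A `2 × 2` integer matrix viewed as a real matrix. -/
def matR (g : Matrix (Fin 2) (Fin 2) ℤ) : Matrix (Fin 2) (Fin 2) ℝ :=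
  g.map fun x => (x : ℝ)

/-- The weight `w` slash action of a real `2 × 2` matrix `g = [[a,b],[c,d]]` (of positive
determinant) on functions: `(f ∣[w] g)(τ) = det(g)^{w/2} (cτ+d)^{-w} f((aτ+b)/(cτ+d))`. -/
def slash (w : ℤ) (g : Matrix (Fin 2) (Fin 2) ℝ) (f : ℂ → ℂ) : ℂ → ℂ := fun τ =>
  (Real.sqrt g.det : ℂ) ^ w * ((g 1 0 : ℂ) * τ + (g 1 1 : ℂ)) ^ (-w) *
    f (((g 0 0 : ℂ) * τ + (g 0 1 : ℂ)) / ((g 1 0 : ℂ) * τ + (g 1 1 : ℂ)))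

/-- `χ : ℤ → ℂ` is a quadratic Dirichlet character modulo `D`. -/
structure IsQuadDirChar (D : ℕ) (χ : ℤ → ℂ) : Prop where
  periodic : ∀ a : ℤ, χ (a + D) = χ a
  mul : ∀ a b : ℤ, χ (a * b) = χ a * χ b
  eq_zero_iff : ∀ a : ℤ, χ a = 0 ↔ ¬ IsCoprime a (D : ℤ)
  sq_vals : ∀ a : ℤ, χ a = 0 ∨ χ a = 1 ∨ χ a = -1

/-- `f : ℍ → ℂ` is a weakly holomorphic modular form of weight `w`, level `Γ₀(D)`, character
`χ`, holomorphic outside the cusp `∞`, with Fourier coefficients `c`; i.e. `f ∈ M^{!,∞}_w(D,χ)`.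
Only the restriction of `f` to the upper half plane matters. -/
structure IsWeaklyHolInfty (D : ℕ) (χ : ℤ → ℂ) (w : ℤ) (f : ℂ → ℂ) (c : ℤ → ℂ) : Prop where
  holo : DifferentiableOn ℂ f UHP
  transform : ∀ γ : Matrix.SpecialLinearGroup (Fin 2) ℤ, (D : ℤ) ∣ γ 1 0 →
    ∀ τ ∈ UHP, slash w (matR γ) f τ = χ (γ 1 1) * f τ
  coeff_bddBelow : ∃ m₀ : ℤ, ∀ m : ℤ, m < -m₀ → c m = 0
  fourier : ∀ τ ∈ UHP,
    HasSum (fun m : ℤ => c m * Complex.exp (2 * (Real.pi : ℂ) * Complex.I * m * τ)) (f τ)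
  bdd_at_other_cusps : ∀ γ : Matrix.SpecialLinearGroup (Fin 2) ℤ, ¬ (D : ℤ) ∣ γ 1 0 →
    ∃ C : ℝ, ∀ τ : ℂ, 1 ≤ τ.im → ‖slash w (matR γ) f τ‖ ≤ C

/-- `g ∈ M^∞_k(D,χ)`: a holomorphic modular form of weight `k`, level `Γ₀(D)`, character `χ`,
vanishing at all cusps other than `∞`. -/
structure MemMInftySpace (D : ℕ) (χ : ℤ → ℂ) (k : ℤ) (g : ℂ → ℂ) : Prop where
  holo : DifferentiableOn ℂ g UHP
  transform : ∀ γ : Matrix.SpecialLinearGroup (Fin 2) ℤ, (D : ℤ) ∣ γ 1 0 →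
    ∀ τ ∈ UHP, slash k (matR γ) g τ = χ (γ 1 1) * g τ
  bdd_at_infty : ∃ C : ℝ, ∀ τ : ℂ, 1 ≤ τ.im → ‖g τ‖ ≤ C
  vanish_at_other_cusps : ∀ γ : Matrix.SpecialLinearGroup (Fin 2) ℤ, ¬ (D : ℤ) ∣ γ 1 0 →
    Filter.Tendsto (fun τ : ℂ => slash k (matR γ) g τ)
      (Filter.comap Complex.im Filter.atTop) (nhds 0)

/-! ### Fourier expansions at a cusp of width `h` -/

section
open UpperHalfPlane Filter Topology Asymptotics Function Complex
open scoped MatrixGroups Manifold ModularForm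

namespace MC

/-- The exponential `e(mz/h)`, i.e. the `m`-th power of the local parameter of width `h`. -/
def qp (h : ℝ) (m : ℤ) (z : ℍ) : ℂ := Periodic.qParam h z ^ m

/-- Holomorphic functions on `ℍ` of period `h` that are meromorphic at `i∞` (expressed as at most
exponential growth in the imaginary part). -/
structure Mf (h : ℝ) (F : ℍ → ℂ) : Prop where
  hol : MDiff F
  per : ∀ z : ℍ, F (h +ᵥ z) = F z
  mer : ∃ n : ℕ, IsBoundedAtImInfty (F * qp h n)

/-- The constant Fourier coefficient of a function of period `h`, as a mean along `Im z = 1`. -/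
def ct (h : ℝ) (F : ℍ → ℂ) : ℂ := 1 / h * ∫ x in (0 : ℝ)..h, F (x +ᵥ UpperHalfPlane.I)

/-- The `m`-th Fourier coefficient of a function of period `h`. -/
def coef (h : ℝ) (F : ℍ → ℂ) (m : ℤ) : ℂ := ct h (F * qp h (-m))

lemma qp_ne (h : ℝ) (m : ℤ) (z : ℍ) : qp h m z ≠ 0 :=
  zpow_ne_zero _ (Periodic.qParam_ne_zero _)

lemma qp_add (h : ℝ) (m n : ℤ) : qp h (m + n) = qp h m * qp h n := by
  ext z; exact zpow_add₀ (Periodic.qParam_ne_zero _) _ _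

lemma qp_zero (h : ℝ) : qp h 0 = 1 := by
  ext z; simp [qp]

lemma qp_neg_mul (h : ℝ) (m : ℤ) : qp h (-m) * qp h m = 1 := by
  rw [← qp_add]; simp [qp_zero]

lemma qp_exp (h : ℝ) (m : ℤ) (z : ℍ) : qp h m z = cexp (2 * Real.pi * Complex.I * m * z / h) := by
  rw [qp, Periodic.qParam, ← Complex.exp_int_mul]; congr 1; ring

lemma norm_qp (h : ℝ) (m : ℤ) (z : ℍ) :
    ‖qp h m z‖ = Real.exp (-2 * Real.pi * z.im / h) ^ m := by
  rw [qp, norm_zpow, Periodic.norm_qParam]; rfl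

lemma qp_per {h : ℝ} (hh : 0 < h) (m : ℤ) (z : ℍ) : qp h m (h +ᵥ z) = qp h m z := by
  simp only [qp]
  congr 1
  rw [Periodic.qParam, Periodic.qParam, coe_vadd,
    show 2 * (Real.pi : ℂ) * Complex.I * ((h : ℂ) + z) / h =
      2 * Real.pi * Complex.I * z / h + 2 * Real.pi * Complex.I by
        have : (h : ℂ) ≠ 0 := by exact_mod_cast hh.ne'
        field_simp; ring, Complex.exp_periodic]

lemma qp_hol (h : ℝ) (m : ℤ) : MDiff (qp h m) := by
  rw [UpperHalfPlane.mdifferentiable_iff]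
  have : DifferentiableOn ℂ (fun z : ℂ => cexp (2 * Real.pi * Complex.I * m * z / h))
    {z | 0 < z.im} := by fun_prop
  refine this.congr fun z hz => ?_
  simp only [comp_apply]
  rw [qp_exp, UpperHalfPlane.ofComplex_apply_of_im_pos hz]

lemma qp_bdd {h : ℝ} (hh : 0 < h) (n : ℕ) : IsBoundedAtImInfty (qp h n) := by
  rw [isBoundedAtImInfty_iff]
  refine ⟨1, 0, fun z _ => ?_⟩
  rw [norm_qp, zpow_natCast]
  refine pow_le_one₀ (Real.exp_pos _).le (Real.exp_le_one_iff.2 ?_)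
  have := z.im_pos
  have := Real.pi_pos
  have : 0 ≤ 2 * Real.pi * z.im / h := by positivity
  have e : -2 * Real.pi * z.im / h = -(2 * Real.pi * z.im / h) := by ring
  linarith

lemma qp_zero_at {h : ℝ} (hh : 0 < h) {n : ℤ} (hn : 0 < n) : IsZeroAtImInfty (qp h n) := by
  have := (UpperHalfPlane.qParam_tendsto_atImInfty hh).pow n.toNat
  have h0 : n.toNat ≠ 0 := by omega
  rw [zero_pow h0] at this
  refine this.congr fun z => ?_
  have : (n.toNat : ℤ) = n := by omega
  conv_rhs => rw [qp, ← this, zpow_natCast]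

lemma Mf.periodic {h : ℝ} {F : ℍ → ℂ} (hp : ∀ z : ℍ, F (h +ᵥ z) = F z) :
    Periodic (F ∘ ofComplex) h := by
  intro w
  by_cases! hw : 0 < Complex.im w
  · have : 0 < Complex.im (w + h) := by simp [hw]
    simp only [comp_apply, ofComplex_apply_of_im_pos this, ofComplex_apply_of_im_pos hw]
    rw [← hp ⟨w, hw⟩]
    congr 1
    ext
    simp [add_comm]
  · have : Complex.im (w + h) ≤ 0 := by simpa using hw
    simp [ofComplex_apply_of_im_nonpos this, ofComplex_apply_of_im_nonpos hw]

lemma MDiff_mul {F G : ℍ → ℂ} (hF : MDiff F) (hG : MDiff G) : MDiff (F * G) := hF.mul hG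
lemma MDiff_add {F G : ℍ → ℂ} (hF : MDiff F) (hG : MDiff G) : MDiff (F + G) := hF.add hG
lemma MDiff_const (c : ℂ) : MDiff (fun _ : ℍ => c) := mdifferentiable_const

lemma bdd_mul {F G : ℍ → ℂ} (hF : IsBoundedAtImInfty F) (hG : IsBoundedAtImInfty G) :
    IsBoundedAtImInfty (F * G) := BoundedAtFilter.mul hF hG

lemma bdd_mono {h : ℝ} (hh : 0 < h) {F : ℍ → ℂ} {m n : ℤ} (hmn : m ≤ n)
    (hF : IsBoundedAtImInfty (F * qp h m)) : IsBoundedAtImInfty (F * qp h n) := by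
  have : n = m + ((n - m).toNat : ℤ) := by omega
  rw [this, qp_add, ← mul_assoc]
  exact bdd_mul hF (qp_bdd hh _)

lemma Mf.mk' {h : ℝ} (hh : 0 < h) {F : ℍ → ℂ} (h1 : MDiff F) (h2 : ∀ z : ℍ, F (h +ᵥ z) = F z)
    {n : ℤ} (h3 : IsBoundedAtImInfty (F * qp h n)) : Mf h F :=
  ⟨h1, h2, n.toNat, bdd_mono hh (by omega) h3⟩

lemma Mf.qp {h : ℝ} (hh : 0 < h) (m : ℤ) : Mf h (qp h m) :=
  Mf.mk' hh (qp_hol h m) (qp_per hh m) (n := -m) (by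
    rw [← qp_add]; simp only [add_neg_cancel, qp_zero]; exact const_boundedAtFilter _ 1)

lemma Mf.mul {h : ℝ} {F G : ℍ → ℂ} (hF : Mf h F) (hG : Mf h G) : Mf h (F * G) := by
  obtain ⟨n, hn⟩ := hF.mer
  obtain ⟨m, hm⟩ := hG.mer
  refine ⟨MDiff_mul hF.hol hG.hol, fun z => by simp [hF.per, hG.per], n + m, ?_⟩
  have : F * G * MC.qp h ((n + m : ℕ) : ℤ) = F * MC.qp h n * (G * MC.qp h m) := by
    push_cast; rw [qp_add]; ring
  rw [this]; exact bdd_mul hn hm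

lemma Mf.add {h : ℝ} (hh : 0 < h) {F G : ℍ → ℂ} (hF : Mf h F) (hG : Mf h G) : Mf h (F + G) := by
  obtain ⟨n, hn⟩ := hF.mer
  obtain ⟨m, hm⟩ := hG.mer
  refine ⟨MDiff_add hF.hol hG.hol, fun z => by simp [hF.per, hG.per], n + m, ?_⟩
  rw [add_mul]
  exact BoundedAtFilter.add (bdd_mono hh (by simp) hn) (bdd_mono hh (by simp) hm)

lemma Mf.const (h : ℝ) (c : ℂ) : Mf h (fun _ => c) :=
  ⟨MDiff_const c, fun _ => rfl, 0, by
    simp only [Nat.cast_zero, qp_zero, mul_one]; exact const_boundedAtFilter _ c⟩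

lemma Mf.zero (h : ℝ) : Mf h 0 := Mf.const h 0
lemma Mf.one (h : ℝ) : Mf h 1 := Mf.const h 1

lemma Mf.smul {h : ℝ} {F : ℍ → ℂ} (hF : Mf h F) (c : ℂ) : Mf h (c • F) :=
  (Mf.const h c).mul hF

lemma Mf.neg {h : ℝ} {F : ℍ → ℂ} (hF : Mf h F) : Mf h (-F) := by
  simpa using hF.smul (-1)

lemma Mf.sub {h : ℝ} (hh : 0 < h) {F G : ℍ → ℂ} (hF : Mf h F) (hG : Mf h G) : Mf h (F - G) := by
  rw [sub_eq_add_neg]; exact hF.add hh hG.neg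

lemma Mf.sum {h : ℝ} (hh : 0 < h) {ι : Type*} (s : Finset ι) {F : ι → ℍ → ℂ}
    (hF : ∀ i ∈ s, Mf h (F i)) : Mf h (∑ i ∈ s, F i) := by
  classical
  induction s using Finset.induction_on with
  | empty => simpa using Mf.zero h
  | insert a s ha ih =>
    rw [Finset.sum_insert ha]
    exact (hF a (by simp)).add hh (ih fun i hi => hF i (by simp [hi]))

lemma Mf.prod {h : ℝ} {ι : Type*} (s : Finset ι) {F : ι → ℍ → ℂ}
    (hF : ∀ i ∈ s, Mf h (F i)) : Mf h (∏ i ∈ s, F i) := by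
  classical
  induction s using Finset.induction_on with
  | empty => simpa using Mf.one h
  | insert a s ha ih =>
    rw [Finset.prod_insert ha]
    exact (hF a (by simp)).mul (ih fun i hi => hF i (by simp [hi]))

lemma Mf.pow {h : ℝ} {F : ℍ → ℂ} (hF : Mf h F) (n : ℕ) : Mf h (F ^ n) := by
  induction n with
  | zero => simpa using Mf.one h
  | succ n ih => rw [pow_succ]; exact ih.mul hF

/-- The space of holomorphic functions of period `h` that are meromorphic at `i∞`. -/
def Msub (h : ℝ) (hh : 0 < h) : Submodule ℂ (ℍ → ℂ) where
  carrier := {F | Mf h F}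
  add_mem' := fun h1 h2 => Mf.add hh h1 h2
  zero_mem' := Mf.zero h
  smul_mem' := fun c _ h => h.smul c

lemma cont_line {F : ℍ → ℂ} (hF : MDiff F) :
    Continuous fun x : ℝ => F (x +ᵥ UpperHalfPlane.I) := by
  refine hF.continuous.comp ?_
  rw [UpperHalfPlane.isEmbedding_coe.continuous_iff]
  have : (UpperHalfPlane.coe ∘ fun x : ℝ => (x +ᵥ UpperHalfPlane.I : ℍ)) =
    fun x : ℝ => (x : ℂ) + UpperHalfPlane.I := by ext x; simp
  rw [this]; fun_prop

lemma ct_add {h : ℝ} {F G : ℍ → ℂ} (hF : MDiff F) (hG : MDiff G) :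
    ct h (F + G) = ct h F + ct h G := by
  simp only [ct, Pi.add_apply]
  rw [intervalIntegral.integral_add, mul_add]
  · exact (cont_line hF).intervalIntegrable _ _
  · exact (cont_line hG).intervalIntegrable _ _

lemma ct_smul {h : ℝ} {F : ℍ → ℂ} (c : ℂ) : ct h (c • F) = c * ct h F := by
  simp only [ct, Pi.smul_apply, smul_eq_mul, intervalIntegral.integral_const_mul]; ring

lemma coef_add {h : ℝ} {F G : ℍ → ℂ} (hF : MDiff F) (hG : MDiff G) (m : ℤ) :
    coef h (F + G) m = coef h F m + coef h G m := by
  rw [coef, add_mul, ct_add (MDiff_mul hF (qp_hol _ _)) (MDiff_mul hG (qp_hol _ _))]; rfl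

lemma coef_smul {h : ℝ} {F : ℍ → ℂ} (c : ℂ) (m : ℤ) :
    coef h (c • F) m = c * coef h F m := by
  rw [coef, smul_mul_assoc, ct_smul]; rfl

lemma coef_neg {h : ℝ} {F : ℍ → ℂ} (m : ℤ) : coef h (-F) m = - coef h F m := by
  simpa using coef_smul (F := F) (-1) m

lemma coef_sub {h : ℝ} {F G : ℍ → ℂ} (hF : MDiff F) (hG : MDiff G) (m : ℤ) :
    coef h (F - G) m = coef h F m - coef h G m := by
  rw [sub_eq_add_neg, coef_add hF hG.neg, coef_neg]; ring

lemma coef_zero_fun (h : ℝ) (m : ℤ) : coef h 0 m = 0 := by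
  simpa using coef_smul (F := 0) (h := h) 0 m

lemma MDiff_sum {ι : Type*} (s : Finset ι) {F : ι → ℍ → ℂ}
    (hF : ∀ i ∈ s, MDiff (F i)) : MDiff (∑ i ∈ s, F i) := by
  classical
  induction s using Finset.induction_on with
  | empty => exact MDiff_const 0
  | insert a s ha ih =>
    rw [Finset.sum_insert ha]
    exact MDiff_add (hF a (by simp)) (ih fun i hi => hF i (by simp [hi]))

lemma coef_sum {h : ℝ} {ι : Type*} (s : Finset ι) {F : ι → ℍ → ℂ}
    (hF : ∀ i ∈ s, MDiff (F i)) (m : ℤ) : coef h (∑ i ∈ s, F i) m = ∑ i ∈ s, coef h (F i) m := by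
  classical
  induction s using Finset.induction_on with
  | empty => simpa using coef_zero_fun h m
  | insert a s ha ih =>
    have h2 : ∀ i ∈ s, MDiff (F i) := fun i hi => hF i (by simp [hi])
    rw [Finset.sum_insert ha, Finset.sum_insert ha, coef_add (hF a (by simp)) (MDiff_sum s h2),
      ih h2]

lemma coef_zero {h : ℝ} (F : ℍ → ℂ) : coef h F 0 = ct h F := by
  simp [coef, qp_zero]

lemma coef_mul_qp {h : ℝ} (F : ℍ → ℂ) (m n : ℤ) : coef h (F * qp h n) m = coef h F (m - n) := by
  rw [coef, coef, mul_assoc, ← qp_add]; congr 3; ring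

lemma coef_nat {h : ℝ} (hh : 0 < h) {F : ℍ → ℂ} (hF : MDiff F) (hp : ∀ z : ℍ, F (h +ᵥ z) = F z)
    (hb : IsBoundedAtImInfty F) (n : ℕ) : coef h F n = (qExpansion h F).coeff n := by
  rw [qExpansion_coeff_eq_intervalIntegral hh (Mf.periodic hp) hF hb n one_pos, coef, ct]
  congr 2; ext x
  have : (x +ᵥ UpperHalfPlane.I : ℍ) = ⟨x + (1 : ℝ) * Complex.I, by simp⟩ := by ext; simp
  rw [this]
  simp [qp, mul_comm]

lemma ct_tendsto {h : ℝ} (hh : 0 < h) {F : ℍ → ℂ} (hF : MDiff F)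
    (hp : ∀ z : ℍ, F (h +ᵥ z) = F z) (hb : IsBoundedAtImInfty F) :
    Tendsto F atImInfty (𝓝 (ct h F)) := by
  have ha := analyticAt_cuspFunction_zero hh (Mf.periodic hp) hF hb
  have h0 : ct h F = cuspFunction h F 0 := by
    rw [← coef_zero, ← Nat.cast_zero, coef_nat hh hF hp hb,
      qExpansion_coeff_zero hh ha (Mf.periodic hp), cuspFunction_apply_zero hh ha (Mf.periodic hp)]
  rw [h0]
  have : (cuspFunction h F ∘ fun τ ↦ Periodic.qParam h τ : ℍ → ℂ) = F := by
    funext τ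
    simpa using eq_cuspFunction τ hh.ne' (Mf.periodic hp)
  simpa [this] using ha.continuousAt.tendsto.comp (qParam_tendsto_atImInfty hh)

lemma zero_mul_bdd {F G : ℍ → ℂ} (hF : IsBoundedAtImInfty F) (hG : IsZeroAtImInfty G) :
    IsZeroAtImInfty (F * G) := by
  have h3 : G =o[atImInfty] (1 : ℍ → ℝ) := (isLittleO_one_iff ℝ).2 hG
  have := IsBigO.mul_isLittleO (f₁ := F) hF h3
  exact (isLittleO_one_iff ℝ).1 (this.congr_right fun x => by simp)

lemma coef_neg_of_bdd {h : ℝ} (hh : 0 < h) {F : ℍ → ℂ} (hF : MDiff F)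
    (hp : ∀ z : ℍ, F (h +ᵥ z) = F z) (hb : IsBoundedAtImInfty F) {m : ℤ} (hm : m < 0) :
    coef h F m = 0 := by
  have hz : IsZeroAtImInfty (F * qp h (-m)) := zero_mul_bdd hb (qp_zero_at hh (by omega))
  have hd := MDiff_mul hF (qp_hol h (-m))
  have := ct_tendsto hh hd (by intro z; simp [hp, qp_per hh]) (hz.isBigO_one ℝ)
  exact tendsto_nhds_unique this hz

/-- A function which is `O(q^M)` has no Fourier coefficients below `M`. -/
lemma Mf.coef_lt {h : ℝ} (hh : 0 < h) {F : ℍ → ℂ} (hF : Mf h F) {M : ℤ}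
    (hb : IsBoundedAtImInfty (F * MC.qp h (-M))) {m : ℤ} (hm : m < M) : coef h F m = 0 := by
  have := coef_neg_of_bdd hh (hF.mul (Mf.qp hh (-M))).hol (hF.mul (Mf.qp hh (-M))).per hb
    (m := m - M) (by omega)
  rwa [coef_mul_qp, show m - M - -M = m by ring] at this

lemma Mf.coef_bddBelow {h : ℝ} (hh : 0 < h) {F : ℍ → ℂ} (hF : Mf h F) :
    ∃ N : ℕ, ∀ m < -(N : ℤ), coef h F m = 0 := by
  obtain ⟨n, hn⟩ := hF.mer
  exact ⟨n, fun m hm => hF.coef_lt hh (M := -n) (by simpa using hn) hm⟩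

lemma Mf.hasSum_nat {h : ℝ} (hh : 0 < h) {F : ℍ → ℂ} (hF : Mf h F) {N : ℤ}
    (hb : IsBoundedAtImInfty (F * MC.qp h N)) (z : ℍ) :
    HasSum (fun n : ℕ => coef h F (n - N) * MC.qp h (n - N) z) (F z) := by
  have hG := hF.mul (Mf.qp hh N)
  have := (hasSum_qExpansion hh (Mf.periodic hG.per) hG.hol hb z).mul_right (MC.qp h (-N) z)
  have e : (F * MC.qp h N) z * MC.qp h (-N) z = F z := by
    have := congrFun (qp_neg_mul h N) z
    simp only [Pi.mul_apply, Pi.one_apply] at this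
    simp only [Pi.mul_apply]
    linear_combination (F z) * this
  rw [e] at this
  refine Eq.mp (congrArg (fun f => HasSum f _) (funext fun n => ?_)) this
  rw [← coef_nat hh hG.hol hG.per hb, coef_mul_qp, sub_eq_add_neg (n : ℤ) N, qp_add]
  simp [MC.qp, mul_assoc]

lemma hasSum_shift {f : ℤ → ℂ} {N : ℤ} (hf : ∀ m < -N, f m = 0) (a : ℂ) :
    HasSum (fun n : ℕ => f (n - N)) a ↔ HasSum f a := by
  have hi : Function.Injective (fun n : ℕ => (n : ℤ) - N) := by
    intro a b h; simpa using h
  refine hi.hasSum_iff (f := f) (fun m hm => hf m ?_)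
  by_contra hc
  exact hm ⟨(m + N).toNat, by simp only; omega⟩

/-- The Fourier expansion. -/
lemma Mf.hasSum {h : ℝ} (hh : 0 < h) {F : ℍ → ℂ} (hF : Mf h F) (z : ℍ) :
    HasSum (fun m : ℤ => coef h F m * MC.qp h m z) (F z) := by
  obtain ⟨n, hn⟩ := hF.mer
  refine (hasSum_shift (N := n) (fun m hm => ?_) _).1 (hF.hasSum_nat hh hn z)
  rw [hF.coef_lt hh (M := -n) (by simpa using hn) hm, zero_mul]

/-- A Fourier expansion with finite principal part defines an element of the space, and
determines the Fourier coefficients. -/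
lemma Mf.of_hasSum {h : ℝ} (hh : 0 < h) {F : ℍ → ℂ} (hF : MDiff F) {c : ℤ → ℂ} {N : ℤ}
    (hc : ∀ m < -N, c m = 0) (hs : ∀ z, HasSum (fun m : ℤ => c m * MC.qp h m z) (F z)) :
    Mf h F ∧ IsBoundedAtImInfty (F * MC.qp h N) ∧ coef h F = c := by
  have hs' : ∀ z : ℍ, HasSum (fun n : ℕ => c (n - N) • Periodic.qParam h z ^ n)
      ((F * MC.qp h N) z) := by
    intro z
    have := ((hasSum_shift (N := N) (f := fun m => c m * MC.qp h m z)
      (fun m hm => by simp [hc m hm]) _).2 (hs z)).mul_right (MC.qp h N z)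
    refine Eq.mp (congrArg (fun f => HasSum f _) (funext fun n => ?_)) this
    rw [sub_eq_add_neg (n : ℤ) N, qp_add]
    have := congrFun (qp_neg_mul h N) z
    simp only [Pi.mul_apply, Pi.one_apply] at this
    simp only [Pi.mul_apply, smul_eq_mul]
    have e : MC.qp h n z = Periodic.qParam h z ^ n := by simp [MC.qp]
    rw [e]
    linear_combination (c (n + -N) * Periodic.qParam h z ^ n) * this
  have hb := isBoundedAtImInfty_of_hasSum_qExpansion hh hs'
  have hp : ∀ z : ℍ, F (h +ᵥ z) = F z := by
    intro z
    refine (hs (h +ᵥ z)).unique ?_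
    simp only [qp_per hh]
    exact hs z
  have hM : Mf h F := Mf.mk' hh hF hp hb
  refine ⟨hM, hb, ?_⟩
  have hG := hM.mul (Mf.qp hh N)
  have ha := analyticAt_cuspFunction_zero hh (Mf.periodic hG.per) hG.hol hb
  ext m
  by_cases hm : m < -N
  · rw [hM.coef_lt hh (M := -N) (by simpa using hb) hm, hc m hm]
  · have h1 := coef_nat hh hG.hol hG.per hb (m + N).toNat
    rw [coef_mul_qp] at h1
    have e : ((m + N).toNat : ℤ) - N = m := by omega
    rw [e] at h1
    rw [h1]
    have h2 := (hasFPowerSeriesOnBall_cuspFunction hh ha hs').hasFPowerSeriesAt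
    have h3 := (hasFPowerSeriesOnBall_cuspFunction hh ha
      (hasSum_qExpansion hh (Mf.periodic hG.per) hG.hol hb)).hasFPowerSeriesAt
    have h4 := congrArg (fun p => p.coeff (m + N).toNat) (h3.eq_formalMultilinearSeries h2)
    simp only [FormalMultilinearSeries.coeff_ofScalars] at h4
    rw [h4, e]

/-- A function without Fourier coefficients below `M` is `O(q^M)`. -/
lemma Mf.bdd_of_coef {h : ℝ} (hh : 0 < h) {F : ℍ → ℂ} (hF : Mf h F) {M : ℤ}
    (hc : ∀ m < M, coef h F m = 0) : IsBoundedAtImInfty (F * MC.qp h (-M)) :=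
  (Mf.of_hasSum hh hF.hol (N := -M) (by simpa using hc) (hF.hasSum hh)).2.1

lemma Mf.zero_of_coef {h : ℝ} (hh : 0 < h) {F : ℍ → ℂ} (hF : Mf h F)
    (hc : ∀ m ≤ 0, coef h F m = 0) : IsZeroAtImInfty F := by
  have h1 := hF.bdd_of_coef hh (M := 1) (fun m hm => hc m (by omega))
  have := zero_mul_bdd h1 (qp_zero_at hh (n := 1) one_pos)
  rwa [mul_assoc, qp_neg_mul, mul_one] at this

lemma Mf.bdd_of_coef' {h : ℝ} (hh : 0 < h) {F : ℍ → ℂ} (hF : Mf h F)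
    (hc : ∀ m < 0, coef h F m = 0) : IsBoundedAtImInfty F := by
  simpa [qp_zero] using hF.bdd_of_coef hh hc

lemma Mf.ext {h : ℝ} (hh : 0 < h) {F G : ℍ → ℂ} (hF : Mf h F) (hG : Mf h G)
    (hc : ∀ m, coef h F m = coef h G m) : F = G := by
  ext z
  refine (hF.hasSum hh z).unique ?_
  simp only [hc]
  exact hG.hasSum hh z

lemma Mf.tendsto {h : ℝ} (hh : 0 < h) {F : ℍ → ℂ} (hF : Mf h F) (hb : IsBoundedAtImInfty F) :
    Tendsto F atImInfty (𝓝 (coef h F 0)) := by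
  rw [coef_zero]; exact ct_tendsto hh hF.hol hF.per hb

lemma Mf.coef_of_zero {h : ℝ} (hh : 0 < h) {F : ℍ → ℂ} (hF : Mf h F) (hb : IsZeroAtImInfty F)
    {m : ℤ} (hm : m ≤ 0) : coef h F m = 0 := by
  rcases hm.lt_or_eq with hm | rfl
  · exact coef_neg_of_bdd hh hF.hol hF.per (hb.isBigO_one ℝ) hm
  · exact tendsto_nhds_unique (hF.tendsto hh (hb.isBigO_one ℝ)) hb

lemma coef_qp {h : ℝ} (hh : 0 < h) (m n : ℤ) : coef h (qp h m) n = if n = m then 1 else 0 := by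
  have := (Mf.of_hasSum hh (qp_hol h m) (c := fun n => if n = m then 1 else 0) (N := -m)
    (fun n hn => if_neg (by omega)) (fun z => ?_)).2.2
  · rw [this]
  · convert hasSum_ite_eq m (qp h m z) using 2 with n
    split_ifs with h
    · rw [h, one_mul]
    · simp

/-- A linear functional that kills `O(q^M)` is determined by its values on the powers of `q`. -/
lemma functional_expand {h : ℝ} (hh : 0 < h) (L : Msub h hh →ₗ[ℂ] ℂ) {M : ℤ}
    (hL : ∀ G : Msub h hh, IsBoundedAtImInfty (G.1 * qp h (-M)) → L G = 0) (G : Msub h hh) :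
    L G = ∑ᶠ m : ℤ, coef h G.1 m * L ⟨qp h m, Mf.qp hh m⟩ := by
  classical
  have hG : Mf h G.1 := G.2
  obtain ⟨N, hN⟩ := hG.coef_bddBelow hh
  have hq : ∀ m : ℤ, M ≤ m → L ⟨qp h m, Mf.qp hh m⟩ = 0 := by
    intro m hm
    apply hL
    simp only
    rw [← qp_add]
    have : m + -M = ((m - M).toNat : ℤ) := by omega
    rw [this]; exact qp_bdd hh _
  rw [finsum_eq_sum_of_support_subset (s := Finset.Ico (-(N : ℤ)) M)]
  swap
  · intro m hm
    rw [Function.mem_support] at hm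
    simp only [Finset.coe_Ico, Set.mem_Ico]
    constructor
    · by_contra hc; exact hm (by rw [hN m (by omega), zero_mul])
    · by_contra hc; exact hm (by rw [hq m (by omega), mul_zero])
  set R : Msub h hh := G - ∑ m ∈ Finset.Ico (-(N : ℤ)) M, coef h G.1 m • ⟨qp h m, Mf.qp hh m⟩
    with hR
  have hR0 : L R = 0 := by
    apply hL
    refine Mf.bdd_of_coef hh R.2 fun m hm => ?_
    have e : R.1 = G.1 - ∑ m ∈ Finset.Ico (-(N : ℤ)) M, coef h G.1 m • qp h m := by
      rw [hR]; simp
    have hs : ∀ i ∈ Finset.Ico (-(N : ℤ)) M, MDiff (coef h G.1 i • qp h i) :=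
      fun i _ => ((Mf.qp hh i).smul _).hol
    rw [e, coef_sub hG.hol (MDiff_sum _ hs), coef_sum _ hs]
    simp only [coef_smul, coef_qp hh, mul_ite, mul_one, mul_zero, Finset.sum_ite_eq,
      Finset.mem_Ico]
    split_ifs with h1
    · simp
    · rw [hN m (by omega)]; simp
  rw [hR, map_sub, map_sum, sub_eq_zero] at hR0
  rw [hR0]
  simp

/-- The constant term of a product. -/
lemma coef_mul {h : ℝ} (hh : 0 < h) {F G : ℍ → ℂ} (hF : Mf h F) (hG : Mf h G) :
    coef h (F * G) 0 = ∑ᶠ m : ℤ, coef h G m * coef h F (-m) := by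
  let L : Msub h hh →ₗ[ℂ] ℂ :=
    { toFun := fun G => coef h (F * G.1) 0
      map_add' := fun a b => by
        have h1 : Mf h a.1 := a.2
        have h2 : Mf h b.1 := b.2
        simp only [Submodule.coe_add, mul_add]
        exact coef_add (hF.mul h1).hol (hF.mul h2).hol 0
      map_smul' := fun c a => by
        simp only [Submodule.coe_smul, mul_smul_comm, coef_smul]; rfl }
  obtain ⟨n, hn⟩ := hF.mer
  have := functional_expand hh L (M := n + 1) (fun G hb => ?_) ⟨G, hG⟩
  · refine this.trans (finsum_congr fun m => ?_)
    show _ * coef h (F * qp h m) 0 = _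
    rw [coef_mul_qp, zero_sub]
  · have hG : Mf h G.1 := G.2
    have h1 := bdd_mul hn hb
    have : F * qp h n * (G.1 * qp h (-(n + 1))) = F * G.1 * qp h (-1) := by
      rw [show -((n : ℤ) + 1) = -n + -1 by ring, qp_add]
      have := qp_neg_mul h n
      linear_combination (F * G.1 * qp h (-1)) * this
    rw [this] at h1
    exact (hF.mul hG).coef_lt hh h1 zero_lt_one

/-- Functions in the space are bounded on `Im z ≥ 1` as soon as they are bounded at `i∞`. -/
lemma Mf.bdd_im {h : ℝ} (hh : 0 < h) {F : ℍ → ℂ} (hF : Mf h F) (hb : IsBoundedAtImInfty F) :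
    ∃ C : ℝ, ∀ z : ℍ, 1 ≤ z.im → ‖F z‖ ≤ C := by
  have hs := hF.hasSum_nat hh (N := 0) (by simpa [qp_zero] using hb)
  have h1 := (hs UpperHalfPlane.I).summable.norm
  refine ⟨∑' n : ℕ, ‖coef h F (n - 0) * MC.qp h (n - 0) UpperHalfPlane.I‖, fun z hz => ?_⟩
  rw [← (hs z).tsum_eq]
  refine tsum_of_norm_bounded h1.hasSum fun n => ?_
  rw [norm_mul, norm_mul]
  refine mul_le_mul_of_nonneg_left ?_ (norm_nonneg _)
  rw [norm_qp, norm_qp, sub_zero, zpow_natCast, zpow_natCast]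
  refine pow_le_pow_left₀ (Real.exp_pos _).le (Real.exp_le_exp.2 ?_) _
  have := Real.pi_pos
  rw [div_le_div_iff_of_pos_right hh]
  have : (UpperHalfPlane.I : ℍ).im = 1 := UpperHalfPlane.I_im
  rw [this]; nlinarith

/-- Enlarging the period. -/
lemma Mf.of_one {F : ℍ → ℂ} (hF : Mf 1 F) {n : ℕ} (hn : 0 < n) : Mf n F := by
  obtain ⟨N, hN⟩ := hF.mer
  have e : ∀ m : ℤ, MC.qp 1 m = MC.qp n (n * m) := by
    intro m; ext z
    rw [qp_exp, qp_exp]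
    have : (n : ℂ) ≠ 0 := by exact_mod_cast hn.ne'
    congr 1; push_cast; field_simp
  have hp : ∀ (r : ℕ) (z : ℍ), F ((r : ℝ) +ᵥ z) = F z := by
    intro r z
    induction r with
    | zero => simp
    | succ r ih =>
      rw [← ih, ← hF.per ((r : ℝ) +ᵥ z), vadd_vadd]; congr 2; push_cast; ring
  refine Mf.mk' (by exact_mod_cast hn) hF.hol (hp n) (n := n * N) ?_
  rw [← e]; exact hN

end MC

end

/-! ### Level one weakly holomorphic forms and their duality -/

section
open UpperHalfPlane Filter Topology Asymptotics Function Complex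
open scoped MatrixGroups Manifold ModularForm

namespace MC

/-- Level one weakly holomorphic modular forms of weight `w`. -/
structure Lv (w : ℤ) (F : ℍ → ℂ) : Prop where
  hol : MDiff F
  tr : ∀ (γ : SL(2, ℤ)) (z : ℍ), F (γ • z) = denom γ z ^ w * F z
  mer : ∃ n : ℕ, IsBoundedAtImInfty (F * qp 1 n)

lemma tr_iff_slash {w : ℤ} {F : ℍ → ℂ} (γ : SL(2, ℤ)) :
    (∀ z : ℍ, F (γ • z) = denom γ z ^ w * F z) ↔ F ∣[w] γ = F := by
  have key : ∀ z : ℍ, F (γ • z) = denom γ z ^ w * F z ↔ (F ∣[w] γ) z = F z := by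
    intro z
    rw [ModularForm.SL_slash_apply]
    have := zpow_ne_zero w (denom_ne_zero γ z)
    rw [zpow_neg]
    constructor
    · intro h; rw [h]; field_simp
    · intro h; rw [← h]; field_simp
  constructor
  · intro h; ext z; exact (key z).1 (h z)
  · intro h z; exact (key z).2 (congrFun h z)

lemma Lv.slash {w : ℤ} {F : ℍ → ℂ} (h : Lv w F) (γ : SL(2, ℤ)) : F ∣[w] γ = F :=
  (tr_iff_slash γ).1 (h.tr γ)

lemma T_denom (z : ℍ) : denom (ModularGroup.T : SL(2, ℤ)) z = 1 := by
  rw [ModularGroup.denom_apply]; simp [ModularGroup.T]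

lemma Lv.mf {w : ℤ} {F : ℍ → ℂ} (h : Lv w F) : Mf 1 F :=
  ⟨h.hol, fun z => by rw [← modular_T_smul, h.tr, T_denom]; simp, h.mer⟩

lemma Lv.mul {w v : ℤ} {F G : ℍ → ℂ} (hF : Lv w F) (hG : Lv v G) : Lv (w + v) (F * G) :=
  ⟨MDiff_mul hF.hol hG.hol, fun γ z => by
    simp only [Pi.mul_apply, hF.tr, hG.tr, zpow_add₀ (denom_ne_zero γ z)]; ring,
    (hF.mf.mul hG.mf).mer⟩

lemma Lv.add {w : ℤ} {F G : ℍ → ℂ} (hF : Lv w F) (hG : Lv w G) : Lv w (F + G) :=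
  ⟨MDiff_add hF.hol hG.hol, fun γ z => by
    simp only [Pi.add_apply, hF.tr, hG.tr]; ring, (hF.mf.add one_pos hG.mf).mer⟩

lemma Lv.zero (w : ℤ) : Lv w 0 := ⟨MDiff_const 0, fun γ z => by simp, (Mf.zero 1).mer⟩

lemma Lv.one : Lv 0 1 := ⟨MDiff_const 1, fun γ z => by simp, (Mf.one 1).mer⟩

lemma Lv.smul {w : ℤ} {F : ℍ → ℂ} (hF : Lv w F) (c : ℂ) : Lv w (c • F) :=
  ⟨(hF.mf.smul c).hol, fun γ z => by
    simp only [Pi.smul_apply, hF.tr, smul_eq_mul]; ring, (hF.mf.smul c).mer⟩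

lemma Lv.sub {w : ℤ} {F G : ℍ → ℂ} (hF : Lv w F) (hG : Lv w G) : Lv w (F - G) := by
  have := hF.add (hG.smul (-1))
  simpa [sub_eq_add_neg] using this

lemma Lv.cast {w v : ℤ} {F : ℍ → ℂ} (hF : Lv w F) (h : w = v) : Lv v F := h ▸ hF

lemma Lv.pow {w : ℤ} {F : ℍ → ℂ} (hF : Lv w F) (n : ℕ) : Lv (n * w) (F ^ n) := by
  induction n with
  | zero => simpa using Lv.one
  | succ n ih => rw [pow_succ]; exact (ih.mul hF).cast (by push_cast; ring)

lemma Lv.sum {ι : Type*} {w : ℤ} (s : Finset ι) {F : ι → ℍ → ℂ}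
    (hF : ∀ i ∈ s, Lv w (F i)) : Lv w (∑ i ∈ s, F i) := by
  classical
  induction s using Finset.induction_on with
  | empty => simpa using Lv.zero w
  | insert a s ha ih =>
    rw [Finset.sum_insert ha]
    exact (hF a (by simp)).add (ih fun i hi => hF i (by simp [hi]))

lemma Lv.of_modularForm {w : ℤ} (f : ModularForm 𝒮ℒ w) : Lv w f ∧ IsBoundedAtImInfty f := by
  have hb : IsBoundedAtImInfty f := by
    have : Fact (IsCusp OnePoint.infty 𝒮ℒ) :=
      ⟨Subgroup.isCusp_of_mem_strictPeriods one_pos one_mem_strictPeriods_SL⟩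
    exact ModularFormClass.bdd_at_infty f
  refine ⟨⟨f.holo', fun γ => (tr_iff_slash γ).2 (f.slash_action_eq' _ ⟨γ, rfl⟩), 0, ?_⟩, hb⟩
  simpa [qp_zero] using hb

/-- A level one form that is bounded at `i∞`, as a modular form in the library sense. -/
def Lv.toModularForm {w : ℤ} {F : ℍ → ℂ} (h : Lv w F) (hb : IsBoundedAtImInfty F) :
    ModularForm 𝒮ℒ w where
  toFun := F
  slash_action_eq' := fun _ ⟨γ, hγ⟩ ↦ hγ ▸ h.slash γ
  holo' := h.hol
  bdd_at_cusps' {c} hc := by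
    rw [Subgroup.IsArithmetic.isCusp_iff_isCusp_SL2Z] at hc
    rw [OnePoint.isBoundedAt_iff_forall_SL2Z hc]
    intro γ _
    rw [h.slash γ]; exact hb

lemma Lv.weight_two {F : ℍ → ℂ} (h : Lv 2 F) (hb : IsBoundedAtImInfty F) : F = 0 := by
  have h0 : h.toModularForm hb = 0 := by
    have := rank_zero_iff.1 ModularForm.levelOne_weight_two_rank_zero
    exact Subsingleton.elim _ _
  exact congrArg (fun f : ModularForm 𝒮ℒ 2 => (f : ℍ → ℂ)) h0

lemma Lv.weight_neg {w : ℤ} (hw : w < 0) {F : ℍ → ℂ} (h : Lv w F) (hb : IsBoundedAtImInfty F) :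
    F = 0 :=
  ModularFormClass.levelOne_neg_weight_eq_zero hw (h.toModularForm hb)

lemma Lv.weight_zero {F : ℍ → ℂ} (h : Lv 0 F) (hb : IsBoundedAtImInfty F) :
    ∃ c, F = fun _ => c :=
  ModularFormClass.levelOne_weight_zero_const (h.toModularForm hb)

lemma Lv.weight_odd {w : ℤ} (hw : Odd w) {F : ℍ → ℂ} (h : Lv w F) : F = 0 := by
  ext z
  have := h.tr (-1) z
  rw [ModularGroup.SL_neg_smul, one_smul, ModularGroup.denom_apply] at this
  simp [hw.neg_one_zpow] at this
  have h2 : 2 * F z = 0 := by linear_combination this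
  simpa using h2

open Derivative in
lemma D_bdd {F : ℍ → ℂ} (hF : MDiff F) (hp : ∀ z : ℍ, F ((1 : ℝ) +ᵥ z) = F z)
    (hb : IsBoundedAtImInfty F) : IsBoundedAtImInfty (normalizedDerivOfComplex F) := by
  have hpc := Mf.periodic hp
  have ha := analyticAt_cuspFunction_zero one_pos hpc hF hb
  have e : ∀ z : ℍ, normalizedDerivOfComplex F z =
      Periodic.qParam 1 z * deriv (cuspFunction 1 F) (Periodic.qParam 1 z) := by
    intro z
    have h1 : (F ∘ ofComplex) = (cuspFunction 1 F) ∘ (Periodic.qParam 1) := by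
      ext w
      exact (Periodic.eq_cuspFunction one_ne_zero hpc w).symm
    have h2 : HasDerivAt (Periodic.qParam 1) (Periodic.qParam 1 z * (2 * Real.pi * Complex.I)) z := by
      have h3 : HasDerivAt (fun w : ℂ => 2 * (Real.pi : ℂ) * Complex.I * w / ((1 : ℝ) : ℂ))
          (2 * Real.pi * Complex.I) z := by
        have := ((hasDerivAt_id (z : ℂ)).const_mul (2 * (Real.pi : ℂ) * Complex.I)).div_const
          ((1 : ℝ) : ℂ)
        simpa using this
      exact h3.cexp
    have h4 := (differentiableAt_cuspFunction one_pos hpc hF hb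
      (Periodic.norm_qParam_lt_one one_pos z.im_pos)).hasDerivAt
    have h5 := h4.comp (z : ℂ) h2
    rw [normalizedDerivOfComplex, h1, h5.deriv]
    have : (Real.pi : ℂ) ≠ 0 := by exact_mod_cast Real.pi_ne_zero
    have := Complex.I_ne_zero
    field_simp
  have h1 : Tendsto (fun z : ℍ => Periodic.qParam 1 z * deriv (cuspFunction 1 F)
      (Periodic.qParam 1 z)) atImInfty (𝓝 (0 * deriv (cuspFunction 1 F) 0)) := by
    have h2 := qParam_tendsto_atImInfty (h := 1) one_pos
    exact h2.mul ((ha.deriv.continuousAt.tendsto).comp h2)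
  have h2 : Tendsto (normalizedDerivOfComplex F) atImInfty (𝓝 _) :=
    h1.congr fun z => (e z).symm
  exact h2.isBigO_one ℝ

open Derivative in
lemma D_qp (m : ℤ) : normalizedDerivOfComplex (qp 1 m) = (m : ℂ) • qp 1 m := by
  ext z
  have h1 : HasDerivAt ((qp 1 m) ∘ ofComplex) (qp 1 m z * (2 * Real.pi * Complex.I * m)) z := by
    have h3 : HasDerivAt (fun w : ℂ => 2 * (Real.pi : ℂ) * Complex.I * m * w / ((1 : ℝ) : ℂ))
          (2 * Real.pi * Complex.I * m) z := by
      have := ((hasDerivAt_id (z : ℂ)).const_mul (2 * (Real.pi : ℂ) * Complex.I * m)).div_const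
        ((1 : ℝ) : ℂ)
      simpa using this
    have h4 := h3.cexp
    rw [← qp_exp] at h4
    refine h4.congr_of_eventuallyEq ?_
    filter_upwards [(isOpen_upperHalfPlaneSet).mem_nhds z.im_pos] with w hw
    simp only [comp_apply]
    rw [qp_exp, UpperHalfPlane.ofComplex_apply_of_im_pos hw]
  rw [normalizedDerivOfComplex, h1.deriv]
  have : (Real.pi : ℂ) ≠ 0 := by exact_mod_cast Real.pi_ne_zero
  have := Complex.I_ne_zero
  simp only [Pi.smul_apply, smul_eq_mul]
  field_simp

open Derivative in
lemma D_per {F : ℍ → ℂ} (hp : ∀ z : ℍ, F ((1 : ℝ) +ᵥ z) = F z) (z : ℍ) :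
    normalizedDerivOfComplex F ((1 : ℝ) +ᵥ z) = normalizedDerivOfComplex F z := by
  rw [normalizedDerivOfComplex, normalizedDerivOfComplex]
  congr 1
  have := Mf.periodic hp
  have h2 : (F ∘ ofComplex) = fun w => (F ∘ ofComplex) (w + (1 : ℝ)) := by
    ext w; exact (this w).symm
  conv_rhs => rw [h2]
  rw [deriv_comp_add_const]
  congr 1
  simp [add_comm]

open Derivative in
lemma Mf.D {F : ℍ → ℂ} (hF : Mf 1 F) : Mf 1 (normalizedDerivOfComplex F) := by
  obtain ⟨n, hn⟩ := hF.mer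
  have hG := hF.mul (Mf.qp one_pos n)
  have h1 := D_bdd hG.hol hG.per hn
  rw [normalizedDerivOfComplex_mul _ _ hF.hol (qp_hol 1 n), D_qp] at h1
  refine ⟨normalizedDerivOfComplex_mdifferentiable hF.hol, D_per hF.per, n, ?_⟩
  have h2 : IsBoundedAtImInfty ((n : ℂ) • (F * MC.qp 1 n)) := BoundedAtFilter.smul (n : ℂ) hn
  have h3 := BoundedAtFilter.add h1 (BoundedAtFilter.neg h2)
  refine (congrArg IsBoundedAtImInfty ?_).mp h3
  ext z; simp

open Derivative in
lemma ct_D {F : ℍ → ℂ} (hF : Mf 1 F) : ct 1 (normalizedDerivOfComplex F) = 0 := by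
  have hd : ∀ x : ℝ, HasDerivAt (fun x : ℝ => (2 * Real.pi * Complex.I)⁻¹ *
      F (x +ᵥ UpperHalfPlane.I)) (normalizedDerivOfComplex F (x +ᵥ UpperHalfPlane.I)) x := by
    intro x
    have h1 : HasDerivAt (F ∘ ofComplex)
        (deriv (F ∘ ofComplex) ((x +ᵥ UpperHalfPlane.I : ℍ) : ℂ)) ((x +ᵥ UpperHalfPlane.I : ℍ) : ℂ) :=
      (UpperHalfPlane.mdifferentiableAt_iff.1 (hF.hol _)).hasDerivAt
    have h2 : HasDerivAt (fun x : ℝ => (x : ℂ) + Complex.I) 1 x :=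
      (Complex.ofRealCLM.hasDerivAt (x := x)).add_const Complex.I
    have e : ((x +ᵥ UpperHalfPlane.I : ℍ) : ℂ) = (x : ℂ) + Complex.I := by simp
    rw [e] at h1
    have h3 := (HasDerivAt.scomp x h1 h2).const_mul ((2 * Real.pi * Complex.I)⁻¹ : ℂ)
    rw [normalizedDerivOfComplex, e]
    have e2 : (fun x : ℝ => (2 * Real.pi * Complex.I)⁻¹ * F (x +ᵥ UpperHalfPlane.I)) =
      fun y : ℝ => (2 * Real.pi * Complex.I)⁻¹ *
        ((F ∘ ofComplex) ∘ fun x : ℝ => (x : ℂ) + Complex.I) y := by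
      ext y
      simp only [comp_apply]
      congr 2
      have : 0 < ((y : ℂ) + Complex.I).im := by simp
      rw [ofComplex_apply_of_im_pos this]
      ext; simp
    rw [e2]
    simpa using h3
  rw [ct, intervalIntegral.integral_eq_sub_of_hasDerivAt (fun x _ => hd x)
    ((cont_line hF.D.hol).intervalIntegrable _ _)]
  rw [hF.per]; simp

open Derivative in
lemma coef_D {F : ℍ → ℂ} (hF : Mf 1 F) (m : ℤ) :
    coef 1 (normalizedDerivOfComplex F) m = m * coef 1 F m := by
  have hq := Mf.qp (h := 1) one_pos (-m)
  have h := ct_D (hF.mul hq)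
  rw [normalizedDerivOfComplex_mul _ _ hF.hol hq.hol, D_qp, ct_add (hF.D.mul hq).hol
    (hF.mul (hq.smul _)).hol, mul_smul_comm, ct_smul] at h
  change coef 1 _ m + _ * coef 1 F m = 0 at h
  push_cast at h
  linear_combination h

/-- `F` is a `q`-series with leading term `q ^ n`. -/
def Lead (F : ℍ → ℂ) (n : ℤ) : Prop := Tendsto (F * qp 1 (-n)) atImInfty (𝓝 1)

lemma Lead.mul {F G : ℍ → ℂ} {m n : ℤ} (hF : Lead F m) (hG : Lead G n) : Lead (F * G) (m + n) := by
  have := Tendsto.mul hF hG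
  rw [one_mul] at this
  refine this.congr fun z => ?_
  rw [neg_add, qp_add]; simp; ring

lemma Lead.one : Lead 1 0 := by
  simp only [Lead, neg_zero, qp_zero, mul_one]; exact tendsto_const_nhds

lemma Lead.pow {F : ℍ → ℂ} {m : ℤ} (hF : Lead F m) (n : ℕ) : Lead (F ^ n) (n * m) := by
  induction n with
  | zero => simpa using Lead.one
  | succ n ih =>
    rw [pow_succ]
    have := ih.mul hF
    rwa [show (n : ℤ) * m + m = (n + 1 : ℕ) * m by push_cast; ring] at this

lemma Lead.coef {F : ℍ → ℂ} {n : ℤ} (h : Lead F n) (hF : Mf 1 F) :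
    coef 1 F n = 1 ∧ ∀ m < n, coef 1 F m = 0 := by
  have hb : IsBoundedAtImInfty (F * qp 1 (-n)) := Tendsto.isBigO_one ℝ h
  refine ⟨?_, fun m hm => hF.coef_lt one_pos hb hm⟩
  have := tendsto_nhds_unique ((hF.mul (Mf.qp one_pos (-n))).tendsto one_pos hb) h
  rwa [coef_mul_qp, zero_sub, neg_neg] at this

lemma lead_of_coef {F : ℍ → ℂ} {n : ℤ} (hF : Mf 1 F) (h1 : MC.coef 1 F n = 1)
    (h2 : ∀ m < n, MC.coef 1 F m = 0) : Lead F n := by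
  have hb := hF.bdd_of_coef one_pos h2
  have := (hF.mul (Mf.qp one_pos (-n))).tendsto one_pos hb
  rwa [coef_mul_qp, zero_sub, neg_neg, h1] at this

open ModularForm EisensteinSeries

lemma lv_E4 : Lv 4 E₄ := (Lv.of_modularForm E₄).1
lemma lv_E6 : Lv 6 E₆ := (Lv.of_modularForm E₆).1
lemma lead_E4 : Lead E₄ 0 := by
  have hb := (Lv.of_modularForm E₄).2
  refine lead_of_coef lv_E4.mf ?_ (fun m hm => coef_neg_of_bdd one_pos lv_E4.hol lv_E4.mf.per hb hm)
  rw [← Nat.cast_zero, coef_nat one_pos lv_E4.hol lv_E4.mf.per hb]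
  exact E_qExpansion_coeff_zero _ ⟨2, rfl⟩
lemma lead_E6 : Lead E₆ 0 := by
  have hb := (Lv.of_modularForm E₆).2
  refine lead_of_coef lv_E6.mf ?_ (fun m hm => coef_neg_of_bdd one_pos lv_E6.hol lv_E6.mf.per hb hm)
  rw [← Nat.cast_zero, coef_nat one_pos lv_E6.hol lv_E6.mf.per hb]
  exact E_qExpansion_coeff_zero _ ⟨3, rfl⟩

lemma bdd_delta : IsBoundedAtImInfty discriminant :=
  discriminant_isZeroAtImInfty.isBigO_one ℝ

lemma lv_delta : Lv 12 discriminant :=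
  ⟨CuspForm.discriminant.holo', fun γ => (tr_iff_slash γ).2
    (CuspForm.discriminant.slash_action_eq' _ ⟨γ, rfl⟩), 0, by
      simpa [qp_zero] using bdd_delta⟩

lemma lead_delta : Lead discriminant 1 := by
  refine lead_of_coef lv_delta.mf ?_ (fun m hm => lv_delta.mf.coef_of_zero one_pos
    discriminant_isZeroAtImInfty (by omega))
  have := coef_nat one_pos lv_delta.hol lv_delta.mf.per bdd_delta 1
  rw [Nat.cast_one] at this
  exact this.trans discriminant_qExpansion_coeff_one

/-- The monomial `E₄ ^ a * E₆ ^ b * Δ ^ c`. -/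
def ee (a b : ℕ) (c : ℤ) : ℍ → ℂ := E₄ ^ a * E₆ ^ b * fun z => discriminant z ^ c

lemma MDiff_inv {F : ℍ → ℂ} (hF : MDiff F) (h0 : ∀ z, F z ≠ 0) : MDiff (fun z => (F z)⁻¹) := by
  have := (MDiff_const 1).div hF h0
  refine (congrArg (fun f : ℍ → ℂ => MDiff f) ?_).mp this
  ext z; simp

lemma delta_zpow (c : ℤ) : Lead (fun z => discriminant z ^ c) c ∧
    Lv (12 * c) (fun z => discriminant z ^ c) := by
  have hl : Lead (fun z => discriminant z ^ c) c := by
    have := Tendsto.zpow₀ lead_delta c (Or.inl one_ne_zero)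
    rw [one_zpow] at this
    refine this.congr fun z => ?_
    simp only [Pi.mul_apply, mul_zpow]
    congr 1
    rw [qp, qp, ← zpow_mul]; congr 1; ring
  refine ⟨hl, ?_, fun γ z => ?_, (-c).toNat, ?_⟩
  · have : MDiff (fun z => discriminant z ^ c.natAbs) := by
      have := (lv_delta.pow c.natAbs).hol
      exact this
    rcases c.natAbs_eq with h | h
    · rw [h]; simpa only [zpow_natCast] using this
    · rw [h]
      simp only [zpow_neg, zpow_natCast]
      exact MDiff_inv this fun z => pow_ne_zero _ (discriminant_ne_zero z)
  · rw [lv_delta.tr, mul_zpow, ← zpow_mul]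
  · exact bdd_mono one_pos (by omega) (Tendsto.isBigO_one ℝ hl)

lemma ee_lv (a b : ℕ) (c : ℤ) : Lv (4 * a + 6 * b + 12 * c) (ee a b c) :=
  (((lv_E4.pow a).mul (lv_E6.pow b)).mul (delta_zpow c).2).cast (by ring)

lemma ee_lead (a b : ℕ) (c : ℤ) : Lead (ee a b c) c := by
  have := ((lead_E4.pow a).mul (lead_E6.pow b)).mul (delta_zpow c).1
  simpa [ee] using this

open Derivative in
lemma lv_D_zero {F : ℍ → ℂ} (hF : Lv 0 F) : Lv 2 (normalizedDerivOfComplex F) := by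
  refine ⟨hF.mf.D.hol, fun γ => (tr_iff_slash γ).2 ?_, hF.mf.D.mer⟩
  have := normalizedDerivOfComplex_SL_slash (k := 0) hF.hol (γ := γ)
  rw [hF.slash γ] at this
  rw [show (2 : ℤ) = 0 + 2 by norm_num]
  conv_rhs => rw [this]
  ext z; simp

/-- The constant term of a weakly holomorphic level one form of weight two vanishes. -/
lemma Lv.ct_zero {F : ℍ → ℂ} (hF : Lv 2 F) : MC.coef 1 F 0 = 0 := by
  -- The leading polar term is removed by a multiple of the derivative of `(E₄³/Δ)ⁿ⁺¹`.
  obtain ⟨n, hn⟩ := hF.mer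
  induction n generalizing F with
  | zero =>
    rw [hF.weight_two (by simpa [qp_zero] using hn), coef_zero_fun]
  | succ n ih =>
    set J := ee (3 * (n + 1)) 0 (-(n + 1 : ℤ))
    have hJ : Lv 0 J := (ee_lv (3 * (n + 1)) 0 (-(n + 1 : ℤ))).cast (by push_cast; ring)
    have hJl : Lead J _ := ee_lead (3 * (n + 1)) 0 (-(n + 1 : ℤ))
    set c := MC.coef 1 F (-(n + 1 : ℤ))
    have hn1 : (n + 1 : ℂ) ≠ 0 := by exact_mod_cast n.succ_ne_zero
    have hD := (lv_D_zero hJ).smul (c / (n + 1))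
    have key := ih (hF.add hD) ?_
    · rw [coef_add hF.hol hD.hol, coef_smul, coef_D hJ.mf] at key
      simpa using key
    · have := (hF.add hD).mf.bdd_of_coef one_pos (M := -n) ?_
      · simpa using this
      · intro m hm
        rw [coef_add hF.hol hD.hol, coef_smul, coef_D hJ.mf]
        rcases eq_or_ne m (-(n + 1 : ℤ)) with rfl | hne
        · rw [(hJl.coef hJ.mf).1]
          push_cast; field_simp
          simp only [c]; ring
        · rw [(hJl.coef hJ.mf).2 m (by omega), hF.mf.coef_lt one_pos (M := -(n + 1 : ℕ))
            (by simpa using hn) (by push_cast; omega)]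
          simp

/-- Normal form of an even weight. -/
lemma even_weight {w : ℤ} (hw : Even w) : ∃ (a b : ℕ) (c : ℤ), a ≤ 2 ∧ b ≤ 1 ∧
    w = 4 * a + 6 * b + 12 * c := by
  obtain ⟨v, hv⟩ := hw
  have : v % 6 = 0 ∨ v % 6 = 1 ∨ v % 6 = 2 ∨ v % 6 = 3 ∨ v % 6 = 4 ∨ v % 6 = 5 := by omega
  rcases this with h | h | h | h | h | h
  · exact ⟨0, 0, v / 6, by omega, by omega, by push_cast; omega⟩
  · exact ⟨2, 1, v / 6 - 1, by omega, by omega, by push_cast; omega⟩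
  · exact ⟨1, 0, v / 6, by omega, by omega, by push_cast; omega⟩
  · exact ⟨0, 1, v / 6, by omega, by omega, by push_cast; omega⟩
  · exact ⟨2, 0, v / 6, by omega, by omega, by push_cast; omega⟩
  · exact ⟨1, 1, v / 6, by omega, by omega, by push_cast; omega⟩

/-- In weight `4a + 6b + 12c` there are weakly holomorphic forms with any leading exponent `≤ c`. -/
lemma exists_lead {a b : ℕ} {c p : ℤ} (hp : p ≤ c) :
    ∃ F, Lv (4 * a + 6 * b + 12 * c) F ∧ Lead F p := by
  obtain ⟨r, hr⟩ := Int.eq_ofNat_of_zero_le (sub_nonneg.2 hp)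
  exact ⟨ee (a + 3 * r) b p, (ee_lv _ _ _).cast (by push_cast; rw [← hr]; ring), ee_lead _ _ _⟩

/-- The coefficients of exponent `≤ c` of a form of weight `4a + 6b + 12c` can be prescribed freely,
subject to being bounded below in support. -/
lemma exists_prescribed {a b : ℕ} {c : ℤ} (K : ℕ) (t : ℤ → ℂ) (ht : ∀ n < c + 1 - K, t n = 0) :
    ∃ T, Lv (4 * a + 6 * b + 12 * c) T ∧ ∀ n ≤ c, MC.coef 1 T n = t n := by
  induction K generalizing t with
  | zero => exact ⟨0, Lv.zero _, fun n hn => by rw [coef_zero_fun, ht n (by simp; omega)]⟩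
  | succ K ih =>
    obtain ⟨F, hF, hl⟩ := exists_lead (a := a) (b := b) (c := c) (p := c - K) (by omega)
    obtain ⟨T, hT, hc⟩ := ih (fun n => t n - t (c - K) * MC.coef 1 F n) (fun n hn => by
      rcases eq_or_ne n (c - K) with rfl | hne
      · simp [(hl.coef hF.mf).1]
      · rw [(hl.coef hF.mf).2 n (by omega), ht n (by push_cast; omega)]; simp)
    refine ⟨T + t (c - K) • F, hT.add (hF.smul _), fun n hn => ?_⟩
    rw [coef_add hT.hol (hF.smul _).hol, coef_smul, hc n hn]; ring

/-- Level one duality: a sequence orthogonal to all weakly holomorphic forms of even weight `w`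
consists of the Fourier coefficients of a weakly holomorphic form of weight `2 - w`. A form with
the right coefficients up to the exponent `c` exists; the remaining coefficients are forced by
pairing with forms of weight `w` of each leading exponent `< -c`. -/
lemma level_one_duality {w : ℤ} (hw : Even w) (t : ℤ → ℂ) {N : ℤ} (ht : ∀ n < -N, t n = 0)
    (horth : ∀ s, Lv w s → ∑ᶠ n : ℤ, t n * MC.coef 1 s (-n) = 0) :
    ∃ T, Lv (2 - w) T ∧ MC.coef 1 T = t := by
  obtain ⟨a, b, c, ha, hb, hw'⟩ := even_weight (w := 2 - w) (by
    obtain ⟨v, rfl⟩ := hw; exact ⟨1 - v, by ring⟩)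
  obtain ⟨T, hT, hc⟩ := exists_prescribed (a := a) (b := b) (c := c) (c + 1 + N).toNat t
    (fun n hn => ht n (by omega))
  rw [← hw'] at hT
  refine ⟨T, hT, ?_⟩
  have hdiff : ∀ s, Lv w s → ∑ᶠ n : ℤ, (t n - MC.coef 1 T n) * MC.coef 1 s (-n) = 0 := by
    intro s hs
    obtain ⟨N1, hN1⟩ := hs.mf.coef_bddBelow one_pos
    obtain ⟨N2, hN2⟩ := hT.mf.coef_bddBelow one_pos
    have f1 : (Function.support fun n : ℤ => t n * MC.coef 1 s (-n)).Finite := by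
      refine (Set.finite_Icc (-N) N1).subset fun n hn => ?_
      rw [Function.mem_support] at hn
      constructor
      · by_contra h; exact hn (by rw [ht n (by omega), zero_mul])
      · by_contra h; exact hn (by rw [hN1 (-n) (by omega), mul_zero])
    have f2 : (Function.support fun n : ℤ => MC.coef 1 T n * MC.coef 1 s (-n)).Finite := by
      refine (Set.finite_Icc (-(N2 : ℤ)) N1).subset fun n hn => ?_
      rw [Function.mem_support] at hn
      constructor
      · by_contra h; exact hn (by rw [hN2 n (by omega), zero_mul])
      · by_contra h; exact hn (by rw [hN1 (-n) (by omega), mul_zero])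
    have h2 : ∑ᶠ n : ℤ, MC.coef 1 T n * MC.coef 1 s (-n) = 0 := by
      rw [← coef_mul one_pos hs.mf hT.mf]
      exact ((hs.mul hT).cast (by ring)).ct_zero
    simp only [sub_mul]
    rw [finsum_sub_distrib f1 f2, horth s hs, h2, sub_zero]
  have key : ∀ (r : ℕ), ∀ n : ℤ, n < c + 1 + r → t n - MC.coef 1 T n = 0 := by
    intro r
    induction r with
    | zero => intro n hn; rw [hc n (by simp at hn; omega), sub_self]
    | succ r ih =>
      intro n hn
      rcases (show n < c + 1 + r ∨ n = c + 1 + r by push_cast at hn; omega) with h | h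
      · exact ih n h
      · obtain ⟨s, hs, hl⟩ := exists_lead (a := 2 - a) (b := 1 - b) (c := -1 - c)
          (p := -(c + 1 + r)) (by omega)
        have hs' : Lv w s := hs.cast (by push_cast [ha, hb]; linarith)
        have := hdiff s hs'
        rw [finsum_eq_single _ (c + 1 + r : ℤ)] at this
        · rw [(hl.coef hs.mf).1, mul_one] at this
          rw [h]; exact this
        · intro m hm
          rcases lt_or_gt_of_ne hm with h1 | h1
          · rw [ih m h1, zero_mul]
          · rw [(hl.coef hs.mf).2 _ (by omega), mul_zero]
  ext n
  have := key (n - c).toNat n (by omega)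
  exact (sub_eq_zero.1 this).symm

end MC

end

/-! ### Points with proportional `(E₄, E₆)` are equivalent -/

section
open UpperHalfPlane Filter Topology Asymptotics Function Complex
open scoped MatrixGroups Manifold ModularForm
namespace MC

/-- If `P` kills all other points of modulus at least `‖x₁‖`, high power sums weighted by `P` isolate
the contribution of `x₁`. -/
lemma powsum_limit {ι : Type*} {x : ι → ℂ} (hs : Summable fun i => ‖x i‖ ^ 3) (P : Polynomial ℂ)
    {x₁ : ℂ} (h1 : x₁ ≠ 0) (hP : ∀ i, ‖x₁‖ ≤ ‖x i‖ → x i ≠ x₁ → P.eval (x i) = 0) :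
    Tendsto (fun n : ℕ => ∑' i, P.eval (x i) * x i ^ 3 * (x i / x₁) ^ n) atTop
      (𝓝 (∑' i, open Classical in if x i = x₁ then P.eval x₁ * x₁ ^ 3 else 0)) := by
  classical
  have hr : 0 < ‖x₁‖ := norm_pos_iff.2 h1
  obtain ⟨C, hC⟩ := (isCompact_closedBall (0 : ℂ) ‖x₁‖).exists_bound_of_continuousOn
    (P.continuous.continuousOn)
  refine tendsto_tsum_of_dominated_convergence (bound := fun i => C * ‖x i‖ ^ 3) (hs.mul_left C)
    (fun i => ?_) (Eventually.of_forall fun n i => ?_)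
  · by_cases hi : x i = x₁
    · simp [hi, h1]
    rw [if_neg hi]
    by_cases h2 : ‖x₁‖ ≤ ‖x i‖
    · simp [hP i h2 hi]
    · have : ‖x i / x₁‖ < 1 := by rw [norm_div, div_lt_one hr]; exact not_le.1 h2
      simpa using (tendsto_pow_atTop_nhds_zero_of_norm_lt_one this).const_mul
        (P.eval (x i) * x i ^ 3)
  · rw [norm_mul, norm_mul, norm_pow, norm_pow]
    by_cases hi : x i = x₁
    · rw [hi, div_self h1]
      simp only [norm_one, one_pow, mul_one]
      gcongr
      exact hC _ (by simp)
    by_cases h2 : ‖x₁‖ ≤ ‖x i‖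
    · rw [hP i h2 hi]
      simp only [norm_zero, zero_mul]
      exact mul_nonneg ((norm_nonneg _).trans (hC 0 (by simp))) (by positivity)
    · have h3 : ‖x i / x₁‖ ≤ 1 := by rw [norm_div, div_le_one hr]; exact (not_le.1 h2).le
      have h4 : ‖x i / x₁‖ ^ n ≤ 1 := pow_le_one₀ (norm_nonneg _) h3
      calc _ ≤ ‖P.eval (x i)‖ * ‖x i‖ ^ 3 * 1 := by gcongr
        _ ≤ _ := by
          rw [mul_one]; gcongr
          exact hC _ (by simpa using (not_le.1 h2).le)

lemma powsum_summable {ι : Type*} {x : ι → ℂ} (hs : Summable fun i => ‖x i‖ ^ 3) (n : ℕ)  :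
    Summable fun i => x i ^ (n + 3) := by
  have h0 := hs.tendsto_cofinite_zero.eventually (eventually_le_nhds (b := 1) one_pos)
  refine Summable.of_norm_bounded_eventually hs ?_
  filter_upwards [h0] with i hi
  have : ‖x i‖ ≤ 1 := by
    by_contra! h
    exact absurd hi (not_le.2 (one_lt_pow₀ h (by norm_num)))
  rw [norm_pow]
  exact pow_le_pow_of_le_one (norm_nonneg _) this (by omega)

lemma powsum_poly {ι : Type*} {x : ι → ℂ} (hs : Summable fun i => ‖x i‖ ^ 3) (P : Polynomial ℂ)
    (n : ℕ) (x₁ : ℂ) : ∑' i, P.eval (x i) * x i ^ 3 * (x i / x₁) ^ n =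
      ∑ e ∈ Finset.range (P.natDegree + 1), P.coeff e / x₁ ^ n * ∑' i, x i ^ (e + n + 3) := by
  simp_rw [← tsum_mul_left]
  rw [← Summable.tsum_finsetSum]
  · refine tsum_congr fun i => ?_
    rw [Polynomial.eval_eq_sum_range, Finset.sum_mul, Finset.sum_mul]
    refine Finset.sum_congr rfl fun e _ => ?_
    rw [div_pow, pow_add, pow_add]; ring
  · intro e _
    exact (powsum_summable hs _).mul_left _

lemma powsum_finite {ι : Type*} {x : ι → ℂ} (hx : Summable fun i => ‖x i‖ ^ 3) {r : ℝ}
    (hr : 0 < r) : {j | r ≤ ‖x j‖}.Finite := by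
  have h0 := hx.tendsto_cofinite_zero.eventually (eventually_lt_nhds (b := r ^ 3) (by positivity))
  rw [Filter.eventually_cofinite] at h0
  refine h0.subset fun j hj => ?_
  simp only [Set.mem_ofPred_eq, not_lt] at hj ⊢
  gcongr

/-- Absolutely convergent power sums determine the set of nonzero points. -/
lemma powsum_mem {ι κ : Type*} {x : ι → ℂ} {y : κ → ℂ} (hx : Summable fun i => ‖x i‖ ^ 3)
    (hy : Summable fun i => ‖y i‖ ^ 3) (hinj : Injective x)
    (h : ∀ n : ℕ, ∑' i, x i ^ (n + 3) = ∑' i, y i ^ (n + 3)) (i : ι) (hi : x i ≠ 0) :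
    ∃ j, y j = x i := by
  classical
  by_contra! hne
  have hr : 0 < ‖x i‖ := norm_pos_iff.2 hi
  have hfx := powsum_finite hx hr
  have hfy := powsum_finite hy hr
  set F : Finset ℂ := (hfx.toFinset.image x ∪ hfy.toFinset.image y).erase (x i) with hF
  set P : Polynomial ℂ := ∏ a ∈ F, (Polynomial.X - Polynomial.C a) with hPdef
  have hPe : ∀ u, P.eval u = ∏ a ∈ F, (u - a) := fun u => by simp [hPdef, Polynomial.eval_prod]
  have h1 := powsum_limit hx P hi (fun j hj hj' => by
    rw [hPe]
    refine Finset.prod_eq_zero (i := x j) ?_ (sub_self _)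
    simp only [hF, Finset.mem_erase, Finset.mem_union, Finset.mem_image, Set.Finite.mem_toFinset]
    exact ⟨hj', Or.inl ⟨j, hj, rfl⟩⟩)
  have h2 := powsum_limit hy P hi (fun j hj hj' => by
    rw [hPe]
    refine Finset.prod_eq_zero (i := y j) ?_ (sub_self _)
    simp only [hF, Finset.mem_erase, Finset.mem_union, Finset.mem_image, Set.Finite.mem_toFinset]
    exact ⟨hj', Or.inr ⟨j, hj, rfl⟩⟩)
  have h3 := tendsto_nhds_unique h1 (h2.congr fun n => by
    rw [powsum_poly hx, powsum_poly hy]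
    simp_rw [h])
  rw [tsum_eq_single i (fun j hj => if_neg fun h => hj (hinj h)), if_pos rfl] at h3
  simp only [hne, if_false, tsum_zero] at h3
  refine (mul_ne_zero ?_ (pow_ne_zero 3 hi)) h3
  rw [hPe, Finset.prod_ne_zero_iff]
  intro a ha hz
  exact (Finset.mem_erase.1 ha).1 (sub_eq_zero.1 hz).symm

open ModularForm EisensteinSeries

/-- If `E₄` and `E₆` have values at `z₀` and `z₁` that agree up to weighted scaling, so do all level
one modular forms. -/
lemma forms_match {z₀ z₁ : ℍ} {l : ℂ} (h4 : E₄ z₁ = l ^ 4 * E₄ z₀) (h6 : E₆ z₁ = l ^ 6 * E₆ z₀)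
    (k : ℕ) : ∀ F : ℍ → ℂ, Lv k F → IsBoundedAtImInfty F → F z₁ = l ^ k * F z₀ := by
  have hΔ : discriminant z₁ = l ^ 12 * discriminant z₀ := by
    rw [discriminant_eq_E₄_cube_sub_E₆_sq, discriminant_eq_E₄_cube_sub_E₆_sq, h4, h6]; ring
  induction k using Nat.strong_induction_on with
  | _ k ih =>
  intro F hF hb
  rcases Nat.even_or_odd k with hk | hk
  swap
  · rw [hF.weight_odd (by exact_mod_cast hk)]; simp
  by_cases hk0 : k = 0
  · subst hk0
    obtain ⟨c, hc⟩ := Lv.weight_zero hF hb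
    simp [hc]
  by_cases hk2 : k = 2
  · subst hk2
    rw [Lv.weight_two hF hb]; simp
  obtain ⟨a, b, hab⟩ : ∃ a b : ℕ, k = 4 * a + 6 * b := by
    obtain ⟨r, hr⟩ := hk
    rcases Nat.even_or_odd r with ⟨s, hs⟩ | ⟨s, hs⟩
    · exact ⟨s, 0, by omega⟩
    · exact ⟨s - 1, 1, by omega⟩
  set c := coef 1 F 0
  have hM : Lv k (ee a b 0) := (ee_lv a b 0).cast (by rw [hab]; push_cast; ring)
  have hMl := ee_lead a b 0
  set G := F - c • ee a b 0 with hG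
  have hGL : Lv k G := hF.sub (hM.smul c)
  have hG0 : ∀ m < (1 : ℤ), coef 1 G m = 0 := by
    intro m hm
    rw [hG, coef_sub hF.hol (hM.smul c).hol, coef_smul]
    rcases eq_or_ne m 0 with rfl | hne
    · rw [(hMl.coef hM.mf).1]; simp [c]
    · rw [(hMl.coef hM.mf).2 m (by omega), coef_neg_of_bdd one_pos hF.hol hF.mf.per hb (by omega)]
      simp
  have hGb := hGL.mf.bdd_of_coef one_pos hG0
  obtain ⟨hdl, hdL⟩ := delta_zpow (-1)
  set Q := G * fun z => discriminant z ^ (-1 : ℤ) with hQ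
  have hQb : IsBoundedAtImInfty Q := by
    have := bdd_mul hGb (Tendsto.isBigO_one ℝ hdl)
    refine (congrArg IsBoundedAtImInfty ?_).mp this
    have e := qp_neg_mul 1 1
    rw [neg_neg, mul_mul_mul_comm, e, mul_one]
  have hQL : Lv (k - 12) Q := (hGL.mul hdL).cast (by ring)
  have hQv : Q z₁ * l ^ 12 = l ^ k * Q z₀ := by
    by_cases hk12 : k < 12
    · rw [Lv.weight_neg (by omega) hQL hQb]; simp
    · have := ih (k - 12) (by omega) Q (hQL.cast (by omega)) hQb
      rw [this]
      have : l ^ k = l ^ (k - 12) * l ^ 12 := by rw [← pow_add]; congr 1; omega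
      rw [this]; ring
  have hFv : ∀ z, F z = Q z * discriminant z + c * (E₄ z ^ a * E₆ z ^ b) := by
    intro z
    have := discriminant_ne_zero z
    simp only [hQ, hG, ee, Pi.mul_apply, Pi.sub_apply, Pi.smul_apply, Pi.pow_apply, zpow_zero,
      smul_eq_mul, zpow_neg_one]
    field_simp
    ring
  rw [hFv, hFv, hΔ, h4, h6, mul_add, ← mul_assoc (l ^ k), ← hQv, mul_pow, mul_pow, ← pow_mul,
    ← pow_mul, hab, pow_add]
  ring

lemma lat_eq {z : ℍ} {a b c d : ℤ} (h : (a * z + b : ℂ) = c * z + d) : a = c ∧ b = d := by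
  have h1 := congrArg Complex.im h
  have h2 := congrArg Complex.re h
  simp at h1 h2
  rcases h1 with h1 | h1
  · subst h1; simpa using h2
  · exact absurd h1 z.im_ne_zero

lemma eis_inj (z : ℍ) : Injective fun v : Fin 2 → ℤ => ((v 0 * z + v 1 : ℂ))⁻¹ := by
  intro v w h
  obtain ⟨h1, h2⟩ := lat_eq (inv_injective h)
  ext i; fin_cases i
  · exact h1
  · exact h2

/-- Two points of the upper half plane at which `(E₄, E₆)` agree up to weighted scaling are
equivalent under the modular group. -/
lemma orbit_unique {z₀ z₁ : ℍ} {l : ℂ} (hl : l ≠ 0) (h4 : E₄ z₁ = l ^ 4 * E₄ z₀)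
    (h6 : E₆ z₁ = l ^ 6 * E₆ z₀) : ∃ γ : SL(2, ℤ), z₁ = γ • z₀ := by
  set x : (Fin 2 → ℤ) → ℂ := fun v => (v 0 * z₁ + v 1 : ℂ)⁻¹ with hx
  set y : (Fin 2 → ℤ) → ℂ := fun v => l * (v 0 * z₀ + v 1 : ℂ)⁻¹ with hy
  have e : ∀ (k : ℕ) (v : Fin 2 → ℤ) (z : ℍ), (v 0 * z + v 1 : ℂ)⁻¹ ^ k = eisSummand k v z := by
    intro k v z; rw [eisSummand, zpow_neg, zpow_natCast, inv_pow]
  have hs : ∀ z : ℍ, Summable fun v : Fin 2 → ℤ => ‖((v 0 * z + v 1 : ℂ))⁻¹‖ ^ 3 := by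
    intro z
    have := summable_norm_eisSummand (k := 3) le_rfl z
    refine this.congr fun v => ?_
    rw [← norm_pow]; exact congrArg _ (e 3 v z).symm
  have hsx : Summable fun v => ‖x v‖ ^ 3 := hs z₁
  have hsy : Summable fun v => ‖y v‖ ^ 3 := by
    refine ((hs z₀).mul_left (‖l‖ ^ 3)).congr fun v => ?_
    rw [hy, norm_mul, mul_pow]
  have hxi : Injective x := eis_inj z₁
  have hyi : Injective y := fun v w h => eis_inj z₀ (mul_left_cancel₀ hl h)
  have hsum : ∀ n : ℕ, ∑' v, x v ^ (n + 3) = ∑' v, y v ^ (n + 3) := by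
    intro n
    simp only [hx, hy, mul_pow, e]
    rw [tsum_mul_left, tsum_eisSummand_eq_riemannZeta_mul_eisensteinSeries (by omega),
      tsum_eisSummand_eq_riemannZeta_mul_eisensteinSeries (by omega)]
    obtain ⟨hL, hb⟩ := Lv.of_modularForm (E (k := n + 3) (by omega))
    have hE : ∀ z, E (k := n + 3) (by omega) z = 1 / 2 * eisensteinSeries (N := 1) 0 (n + 3 : ℕ) z :=
      fun z => rfl
    have := forms_match h4 h6 (n + 3) _ hL hb
    rw [hE, hE] at this
    have h2 : eisensteinSeries (N := 1) 0 (n + 3 : ℕ) z₁ =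
      l ^ (n + 3) * eisensteinSeries (N := 1) 0 (n + 3 : ℕ) z₀ := by linear_combination 2 * this
    rw [h2]; ring
  have nz : ∀ (z : ℍ) (v : Fin 2 → ℤ), v ≠ 0 → (v 0 * z + v 1 : ℂ) ≠ 0 := by
    intro z v hv h0
    obtain ⟨h1, h2⟩ := lat_eq (z := z) (c := 0) (d := 0) (by simpa using h0)
    exact hv (by ext i; fin_cases i; exacts [h1, h2])
  have nzx : ∀ v, v ≠ 0 → x v ≠ 0 := fun v hv => inv_ne_zero (nz _ _ hv)
  have nzy : ∀ v, v ≠ 0 → y v ≠ 0 := fun v hv => mul_ne_zero hl (inv_ne_zero (nz _ _ hv))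
  have A : ∀ p q : ℤ, ![p, q] ≠ 0 → ∃ a b : ℤ, l * (p * z₁ + q) = a * z₀ + b := by
    intro p q hpq
    obtain ⟨v, hv⟩ := powsum_mem hsx hsy hxi hsum _ (nzx _ hpq)
    have := nz z₀ v (fun h => by
      rw [h] at hv; simp only [hy] at hv
      refine nzx _ hpq ?_
      rw [← hv]; simp)
    refine ⟨v 0, v 1, ?_⟩
    have h1 := nz z₁ _ hpq
    simp [hx, hy] at hv h1
    field_simp at hv
    linear_combination hv
  have B : ∀ p q : ℤ, ![p, q] ≠ 0 → ∃ a b : ℤ, (p * z₀ + q : ℂ) = l * (a * z₁ + b) := by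
    intro p q hpq
    obtain ⟨v, hv⟩ := powsum_mem hsy hsx hyi (fun n => (hsum n).symm) _ (nzy _ hpq)
    have := nz z₁ v (fun h => by
      rw [h] at hv; simp only [hx] at hv
      refine nzy _ hpq ?_
      rw [← hv]; simp)
    refine ⟨v 0, v 1, ?_⟩
    have h1 := nz z₀ _ hpq
    simp [hx, hy] at hv h1
    field_simp at hv
    linear_combination hv
  obtain ⟨a, b, hab⟩ := A 1 0 (by simp)
  obtain ⟨c, d, hcd⟩ := A 0 1 (by simp)
  obtain ⟨a', b', hab'⟩ := B 1 0 (by simp)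
  obtain ⟨c', d', hcd'⟩ := B 0 1 (by simp)
  push_cast at hab hcd hab' hcd'
  obtain ⟨e1, e2⟩ := lat_eq (z := z₀) (a := a' * a + b' * c) (b := a' * b + b' * d) (c := 1) (d := 0)
    (by push_cast; linear_combination -hab' - a' * hab - b' * hcd)
  obtain ⟨e3, e4⟩ := lat_eq (z := z₀) (a := c' * a + d' * c) (b := c' * b + d' * d) (c := 0) (d := 1)
    (by push_cast; linear_combination -hcd' - c' * hab - d' * hcd)
  have hdet : (a' * d' - b' * c') * (a * d - b * c) = 1 := by
    linear_combination (c' * b + d' * d) * e1 + e4 - (c' * a + d' * c) * e2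
  have hl' : l = c * z₀ + d := by simpa using hcd
  have hpos : 0 < ((a * d - b * c : ℤ) : ℝ) * z₀.im := by
    have h1 : Complex.normSq l * z₁.im = ((a * d - b * c : ℤ) : ℝ) * z₀.im := by
      have e1 : ((starRingEnd ℂ) l * (l * z₁)) = (starRingEnd ℂ) (c * z₀ + d) * (a * z₀ + b) := by
        rw [← hl']; linear_combination (starRingEnd ℂ) l * hab
      have e2 := congrArg Complex.im e1
      rw [← mul_assoc, mul_comm ((starRingEnd ℂ) l) l, Complex.mul_conj] at e2
      simp at e2
      rw [e2]; push_cast; ring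
    rw [← h1]
    exact mul_pos (Complex.normSq_pos.2 hl) z₁.im_pos
  have hdet1 : a * d - b * c = 1 := by
    have h0 : 0 < a * d - b * c := by
      have := (pos_iff_pos_of_mul_pos hpos).2 z₀.im_pos
      exact_mod_cast this
    exact Int.eq_one_of_mul_eq_one_left h0.le hdet
  obtain ⟨γ, hγ⟩ : ∃ γ : SL(2, ℤ), γ.1 = !![a, b; c, d] :=
    ⟨⟨!![a, b; c, d], by rw [Matrix.det_fin_two_of, hdet1]⟩, rfl⟩
  refine ⟨γ, UpperHalfPlane.ext ?_⟩
  rw [UpperHalfPlane.coe_specialLinearGroup_apply]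
  have g : ∀ i j, γ i j = !![a, b; c, d] i j := fun i j => by rw [← hγ]
  simp [g]
  rw [← hl', eq_div_iff hl]
  linear_combination hab

end MC

end

/-! ### Level one forms with simple zeros on a single orbit -/

section
open UpperHalfPlane Filter Topology Asymptotics Function Complex
open scoped MatrixGroups Manifold ModularForm
namespace MC

open ModularForm EisensteinSeries Derivative

/-- The Rankin–Cohen bracket of `E₄` and `E₆`, a multiple of `Δ`. -/
def wr : ℍ → ℂ := (4 : ℂ) • (E₄ * normalizedDerivOfComplex E₆) -
  (6 : ℂ) • (E₆ * normalizedDerivOfComplex E₄)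

lemma lv_wr : Lv 12 wr := by
  have hm : Mf 1 wr := ((lv_E4.mf.mul lv_E6.mf.D).smul 4).sub one_pos
    ((lv_E6.mf.mul lv_E4.mf.D).smul 6)
  refine ⟨hm.hol, fun γ z => ?_, hm.mer⟩
  have e : ∀ z, wr z = 4 * (E₄ z * serreDerivative (6 : ℤ) E₆ z) -
      6 * (E₆ z * serreDerivative (4 : ℤ) E₄ z) := by
    intro z; simp [wr]; ring
  have h4 := (tr_iff_slash γ).2 (serreDerivative_slash_invariant lv_E4.hol (lv_E4.slash γ)) z
  have h6 := (tr_iff_slash γ).2 (serreDerivative_slash_invariant lv_E6.hol (lv_E6.slash γ)) z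
  rw [e, e, h4, h6, lv_E4.tr, lv_E6.tr]
  rw [show (12 : ℤ) = 4 + (6 + 2) by norm_num, show (6 : ℤ) + 2 = 8 by norm_num,
    show (4 : ℤ) + 2 = 6 by norm_num, zpow_add₀ (denom_ne_zero _ _)]
  have : denom γ z ^ (8 : ℤ) * denom γ z ^ (4 : ℤ) = denom γ z ^ (6 : ℤ) * denom γ z ^ (6 : ℤ) := by
    rw [← zpow_add₀ (denom_ne_zero _ _), ← zpow_add₀ (denom_ne_zero _ _)]; norm_num
  linear_combination (-6 * (E₆ z * serreDerivative (4 : ℤ) E₄ z)) * (-this)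

lemma lim_D_E {F : ℍ → ℂ} (hF : Mf 1 F) (hb : IsBoundedAtImInfty F) :
    Tendsto (normalizedDerivOfComplex F * qp 1 (-1)) atImInfty (𝓝 (coef 1 F 1)) := by
  have hb' : IsBoundedAtImInfty (normalizedDerivOfComplex F * qp 1 (-1)) :=
    hF.D.bdd_of_coef one_pos fun m hm => by
      rw [coef_D hF]
      rcases eq_or_ne m 0 with rfl | hne
      · simp
      · rw [coef_neg_of_bdd one_pos hF.hol hF.per hb (by omega), mul_zero]
  have := (hF.D.mul (Mf.qp one_pos (-1))).tendsto one_pos hb'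
  rwa [coef_mul_qp, zero_sub, neg_neg, coef_D hF, Int.cast_one, one_mul] at this

lemma E4_lim : Tendsto E₄ atImInfty (𝓝 1) := by simpa [Lead, qp_zero] using lead_E4
lemma E6_lim : Tendsto E₆ atImInfty (𝓝 1) := by simpa [Lead, qp_zero] using lead_E6

/-- The quotient of the bracket by `Δ` is a bounded form of weight zero, hence the constant `-3456`. -/
lemma wr_ne_zero (z : ℍ) : wr z ≠ 0 := by
  have b4 := (Lv.of_modularForm E₄).2
  have b6 := (Lv.of_modularForm E₆).2
  have h4 : coef 1 E₄ 1 = 240 := by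
    have := coef_nat one_pos lv_E4.hol lv_E4.mf.per b4 1
    rw [Nat.cast_one] at this
    exact this.trans E₄_qExpansion_coeff_one
  have h6 : coef 1 E₆ 1 = -504 := by
    have := coef_nat one_pos lv_E6.hol lv_E6.mf.per b6 1
    rw [Nat.cast_one] at this
    exact this.trans E₆_qExpansion_coeff_one
  have l4 := lim_D_E lv_E4.mf b4
  have l6 := lim_D_E lv_E6.mf b6
  obtain ⟨hdl, hdL⟩ := delta_zpow (-1)
  set Q := wr * fun z => discriminant z ^ (-1 : ℤ) with hQ
  have hlim : Tendsto Q atImInfty (𝓝 (-3456)) := by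
    have := ((((E4_lim.mul l6).const_mul 4).sub ((E6_lim.mul l4).const_mul 6)).mul hdl)
    rw [h4, h6] at this
    norm_num at this
    refine this.congr fun z => ?_
    have e := congrFun (qp_neg_mul 1 1) z
    simp only [Pi.mul_apply, Pi.one_apply] at e
    simp [hQ, wr]
    linear_combination (4 * (E₄ z * normalizedDerivOfComplex E₆ z) -
      6 * (E₆ z * normalizedDerivOfComplex E₄ z)) * (discriminant z)⁻¹ * e
  have hQL : Lv 0 Q := (lv_wr.mul hdL).cast (by ring)
  obtain ⟨c, hc⟩ := hQL.weight_zero (Tendsto.isBigO_one ℝ hlim)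
  have hc' : c = -3456 := by
    rw [hc] at hlim
    exact tendsto_nhds_unique tendsto_const_nhds hlim
  intro h0
  have := congrFun hc z
  simp [hQ, h0, hc'] at this

/-- `H` is a level one form of weight `w`, nonvanishing at the cusp, whose zeros are simple and
lie in the orbit of `z₀`. -/
structure Dv (w : ℤ) (z₀ : ℍ) (H : ℍ → ℂ) : Prop where
  lv : Lv w H
  lim : ∃ c ≠ 0, Tendsto H atImInfty (𝓝 c)
  orb : ∀ z, H z = 0 → ∃ γ : SL(2, ℤ), z = γ • z₀
  simple : ∀ z, H z = 0 → normalizedDerivOfComplex H z ≠ 0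

lemma E4_E6_ne {z : ℍ} (h : E₄ z = 0) : E₆ z ≠ 0 := fun h6 => by
  have := discriminant_ne_zero z
  rw [discriminant_eq_E₄_cube_sub_E₆_sq, h, h6] at this
  simp at this

lemma dv_E6 {z₀ : ℍ} (h0 : E₆ z₀ = 0) : Dv 6 z₀ E₆ := by
  refine ⟨lv_E6, ⟨1, one_ne_zero, E6_lim⟩, fun z hz => ?_, fun z hz h => ?_⟩
  · have h40 : E₄ z₀ ≠ 0 := fun h => E4_E6_ne h h0
    have h4 : E₄ z ≠ 0 := fun h => E4_E6_ne h hz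
    obtain ⟨l, hl⟩ := IsAlgClosed.exists_pow_nat_eq (E₄ z / E₄ z₀) (n := 4) (by norm_num)
    refine orbit_unique (l := l) ?_ (by rw [hl]; field_simp) (by rw [hz, h0, mul_zero])
    rintro rfl
    exact div_ne_zero h4 h40 (by rw [← hl]; norm_num)
  · exact wr_ne_zero z (by simp [wr, hz, h])

lemma dv_E4 {z₀ : ℍ} (h0 : E₄ z₀ = 0) : Dv 4 z₀ E₄ := by
  refine ⟨lv_E4, ⟨1, one_ne_zero, E4_lim⟩, fun z hz => ?_, fun z hz h => ?_⟩
  · obtain ⟨l, hl⟩ := IsAlgClosed.exists_pow_nat_eq (E₆ z / E₆ z₀) (n := 6) (by norm_num)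
    have := E4_E6_ne h0
    refine orbit_unique (l := l) ?_ (by rw [hz, h0, mul_zero]) (by rw [hl]; field_simp)
    rintro rfl
    exact div_ne_zero (E4_E6_ne hz) (E4_E6_ne h0) (by rw [← hl]; norm_num)
  · exact wr_ne_zero z (by simp [wr, hz, h])

/-- The form `E₆(z₀)² E₄³ - E₄(z₀)³ E₆²` has simple zeros, all on the orbit of `z₀`. -/
lemma dv_gen {z₀ : ℍ} (h4 : E₄ z₀ ≠ 0) (h6 : E₆ z₀ ≠ 0) : ∃ H, Dv 12 z₀ H := by
  have hL := ((lv_E4.pow 3).smul (E₆ z₀ ^ 2)).sub (((lv_E6.pow 2).cast (v := (3 : ℕ) * 4)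
    (by norm_num)).smul (E₄ z₀ ^ 3))
  set H : ℍ → ℂ := E₆ z₀ ^ 2 • (E₄ : ℍ → ℂ) ^ 3 - E₄ z₀ ^ 3 • (E₆ : ℍ → ℂ) ^ 2 with hH
  have hv : ∀ z, H z = E₆ z₀ ^ 2 * E₄ z ^ 3 - E₄ z₀ ^ 3 * E₆ z ^ 2 := fun z => by simp [hH]
  have hne : ∀ z, H z = 0 → E₄ z ≠ 0 ∧ E₆ z ≠ 0 := by
    intro z hz
    rw [hv] at hz
    have h4' : E₄ z ≠ 0 := fun h => by
      have := E4_E6_ne h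
      rw [h] at hz
      simp [h4, this] at hz
    refine ⟨h4', fun h => ?_⟩
    rw [h] at hz
    simp [h6, h4'] at hz
  refine ⟨H, hL.cast (by norm_num), ⟨E₆ z₀ ^ 2 * 1 ^ 3 - E₄ z₀ ^ 3 * 1 ^ 2, ?_, ?_⟩,
    fun z hz => ?_, fun z hz h => ?_⟩
  · intro h
    apply discriminant_ne_zero z₀
    rw [discriminant_eq_E₄_cube_sub_E₆_sq]
    linear_combination -h / 1728
  · exact (((E4_lim.pow 3).const_mul _).sub ((E6_lim.pow 2).const_mul _)).congr
      fun z => (hv z).symm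
  · obtain ⟨h4', h6'⟩ := hne z hz
    rw [hv] at hz
    obtain ⟨l, hl⟩ := IsAlgClosed.exists_pow_nat_eq ((E₆ z / E₆ z₀) / (E₄ z / E₄ z₀)) (n := 2)
      (by norm_num)
    refine orbit_unique (l := l) ?_ ?_ ?_
    · rintro rfl
      exact div_ne_zero (div_ne_zero h6' h6) (div_ne_zero h4' h4) (by rw [← hl]; norm_num)
    · rw [show l ^ 4 = (l ^ 2) ^ 2 by ring, hl]
      field_simp
      linear_combination hz
    · rw [show l ^ 6 = (l ^ 2) ^ 3 by ring, hl]
      field_simp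
      linear_combination hz
  · obtain ⟨h4', h6'⟩ := hne z hz
    rw [hv] at hz
    rw [hH, normalizedDerivOfComplex_sub _ _ ((lv_E4.pow 3).smul (E₆ z₀ ^ 2)).hol
      ((lv_E6.pow 2).smul _).hol, normalizedDerivOfComplex_smul _ _ (lv_E4.pow 3).hol,
      normalizedDerivOfComplex_smul _ _ (lv_E6.pow 2).hol,
      normalizedDerivOfComplex_pow _ _ lv_E4.hol, normalizedDerivOfComplex_pow _ _ lv_E6.hol] at h
    simp at h
    have hw := wr_ne_zero z
    apply mul_ne_zero (mul_ne_zero (pow_ne_zero 3 h4) h6') hw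
    simp only [wr, Pi.sub_apply, Pi.smul_apply, Pi.mul_apply, smul_eq_mul]
    linear_combination (-2 * E₄ z) * h + 6 * normalizedDerivOfComplex E₄ z * hz

end MC

end

/-! ### Vector-valued forms and division -/

section
open UpperHalfPlane Filter Topology Asymptotics Function Complex
open scoped MatrixGroups Manifold ModularForm
namespace MC

open ModularForm EisensteinSeries Derivative

/-- Division of holomorphic functions by a function with simple zeros. -/
lemma exists_div {F H : ℍ → ℂ} (hF : MDiff F) (hH : MDiff H)
    (hs : ∀ z, H z = 0 → normalizedDerivOfComplex H z ≠ 0) (h0 : ∀ z, H z = 0 → F z = 0) :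
    ∃ G : ℍ → ℂ, MDiff G ∧ F = H * G := by
  classical
  refine ⟨fun z => if H z = 0 then deriv (F ∘ ofComplex) z / deriv (H ∘ ofComplex) z
    else F z / H z, ?_, ?_⟩
  swap
  · ext z
    by_cases hz : H z = 0
    · simp [hz, h0 z hz]
    · simp [hz, mul_div_cancel₀]
  rw [UpperHalfPlane.mdifferentiable_iff] at hF hH ⊢
  set U : Set ℂ := {z | 0 < z.im} with hU
  have hUo : IsOpen U := isOpen_upperHalfPlaneSet
  intro z hz
  refine DifferentiableAt.differentiableWithinAt ?_
  have hUz : U ∈ 𝓝 z := hUo.mem_nhds hz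
  have dF := hF.differentiableAt hUz
  have dH := hH.differentiableAt hUz
  by_cases hz0 : H (ofComplex z) = 0
  · have h1 : DifferentiableAt ℂ (dslope (F ∘ ofComplex) z) z :=
      ((differentiableOn_dslope hUz).2 hF).differentiableAt hUz
    have h2 : DifferentiableAt ℂ (dslope (H ∘ ofComplex) z) z :=
      ((differentiableOn_dslope hUz).2 hH).differentiableAt hUz
    have hne : dslope (H ∘ ofComplex) z z ≠ 0 := by
      rw [dslope_same]
      intro h
      apply hs _ hz0
      rw [normalizedDerivOfComplex, ofComplex_apply_of_im_pos hz]
      show _ * deriv (H ∘ ofComplex) z = 0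
      rw [h, mul_zero]
    refine (h1.div h2 hne).congr_of_eventuallyEq ?_
    filter_upwards [hUz, h2.continuousAt.eventually_ne hne] with y hy hy'
    simp only [comp_apply, Pi.div_apply]
    rcases eq_or_ne y z with rfl | hyz
    · rw [if_pos hz0, dslope_same, dslope_same, ofComplex_apply_of_im_pos hy]
    · rw [dslope_of_ne _ hyz, dslope_of_ne _ hyz, slope_def_field, slope_def_field]
      rw [dslope_of_ne _ hyz, slope_def_field] at hy'
      simp only [comp_apply, hz0, h0 _ hz0, sub_zero] at hy' ⊢
      have hyz' := sub_ne_zero.2 hyz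
      have : H (ofComplex y) ≠ 0 := fun h => hy' (by rw [h, zero_div])
      rw [if_neg this]
      field_simp
  · refine (dF.div dH hz0).congr_of_eventuallyEq ?_
    filter_upwards [dH.continuousAt.eventually_ne hz0] with y hy
    simp only [comp_apply] at hy
    simp [hy]

set_option linter.unusedSectionVars false

variable {ι : Type*} [Fintype ι] [DecidableEq ι] [MulAction SL(2, ℤ) ι]

/-- Holomorphic vector valued forms of weight `w` for a signed permutation action of the modular
group. -/
structure VV (ε : SL(2, ℤ) → ι → ℂ) (w : ℤ) (v : ι → ℍ → ℂ) : Prop where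
  hol : ∀ i, MDiff (v i)
  tr : ∀ (γ : SL(2, ℤ)) (i : ι) (z : ℍ),
    v i (γ • z) = ε γ i * denom γ z ^ w * v (γ⁻¹ • i) z

lemma VV.cast {ε : SL(2, ℤ) → ι → ℂ} {w w' : ℤ} {v : ι → ℍ → ℂ} (hv : VV ε w v) (h : w = w') :
    VV ε w' v := h ▸ hv

lemma VV.add {ε : SL(2, ℤ) → ι → ℂ} {w : ℤ} {u v : ι → ℍ → ℂ} (hu : VV ε w u) (hv : VV ε w v) :
    VV ε w (u + v) :=
  ⟨fun i => MDiff_add (hu.hol i) (hv.hol i), fun γ i z => by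
    simp only [Pi.add_apply, hu.tr, hv.tr]; ring⟩

lemma VV.zero (ε : SL(2, ℤ) → ι → ℂ) (w : ℤ) : VV ε w (0 : ι → ℍ → ℂ) :=
  ⟨fun _ => MDiff_const 0, fun γ i z => by simp⟩

lemma VV.sum {κ : Type*} {ε : SL(2, ℤ) → ι → ℂ} {w : ℤ} (s : Finset κ) {v : κ → ι → ℍ → ℂ}
    (h : ∀ a ∈ s, VV ε w (v a)) : VV ε w (∑ a ∈ s, v a) := by
  classical
  induction s using Finset.induction_on with
  | empty => simpa using VV.zero ε w
  | insert a s ha ih =>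
    rw [Finset.sum_insert ha]
    exact (h a (Finset.mem_insert_self _ _)).add (ih fun b hb => h b (Finset.mem_insert_of_mem hb))

lemma VV.lmul {ε : SL(2, ℤ) → ι → ℂ} {w w' : ℤ} {v : ι → ℍ → ℂ} {F : ℍ → ℂ} (hF : Lv w' F)
    (hv : VV ε w v) : VV ε (w' + w) (fun i => F * v i) :=
  ⟨fun i => MDiff_mul hF.hol (hv.hol i), fun γ i z => by
    simp only [Pi.mul_apply, hv.tr, hF.tr, zpow_add₀ (denom_ne_zero _ _)]; ring⟩

lemma MDiff_act {F : ℍ → ℂ} (hF : MDiff F) (γ : SL(2, ℤ)) : MDiff (fun z => F (γ • z)) := by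
  have h : (0 : ℝ) < (γ : GL (Fin 2) ℝ).det.val := by simp
  exact hF.comp (mdifferentiable_smul h)

/-- A vector valued form vanishing at `z₀` is divisible by a form with simple zeros along the
orbit of `z₀`. -/
lemma VV.div {ε : SL(2, ℤ) → ι → ℂ} {w w₀ : ℤ} {v : ι → ℍ → ℂ} {z₀ : ℍ} {H : ℍ → ℂ}
    (hH : Dv w₀ z₀ H) (hv : VV ε w v) (hb : ∀ i, IsBoundedAtImInfty (v i)) (h0 : ∀ i, v i z₀ = 0) :
    ∃ u : ι → ℍ → ℂ, VV ε (w - w₀) u ∧ (∀ i, IsBoundedAtImInfty (u i)) ∧ ∀ i, v i = H * u i := by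
  have : ∀ i, ∃ G : ℍ → ℂ, MDiff G ∧ v i = H * G := fun i =>
    exists_div (hv.hol i) hH.lv.hol hH.simple fun z hz => by
      obtain ⟨γ, rfl⟩ := hH.orb z hz
      rw [hv.tr, h0, mul_zero]
  choose u hu hvu using this
  obtain ⟨c, hc, hlim⟩ := hH.lim
  have hH0 : H ≠ 0 := by
    rintro h
    rw [h] at hlim
    exact hc (tendsto_nhds_unique hlim tendsto_const_nhds)
  refine ⟨u, ⟨hu, fun γ i => ?_⟩, fun i => ?_, hvu⟩
  · have hd : MDiff (fun z : ℍ => denom γ z ^ (w - w₀)) := mdifferentiable_denom_zpow _ _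
    have h1 : MDiff ((fun z => u i (γ • z)) -
        (ε γ i • ((fun z : ℍ => denom γ z ^ (w - w₀)) * u (γ⁻¹ • i)))) :=
      (MDiff_act (hu i) γ).sub ((MDiff_mul hd (hu _)).const_smul _)
    have h2 := (UpperHalfPlane.mul_eq_zero_iff hH.lv.hol h1).1 (by
      ext z
      have e := hv.tr γ i z
      rw [hvu, hvu] at e
      simp only [Pi.mul_apply, hH.lv.tr] at e
      have hz := denom_ne_zero (γ : GL (Fin 2) ℝ) z
      rw [show w = w₀ + (w - w₀) by ring, zpow_add₀ hz] at e
      apply mul_left_cancel₀ (zpow_ne_zero w₀ hz)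
      simp only [Pi.mul_apply, Pi.sub_apply, Pi.smul_apply, smul_eq_mul, Pi.zero_apply]
      linear_combination e)
    intro z
    have := congrFun (h2.resolve_left hH0) z
    simp only [Pi.mul_apply, Pi.sub_apply, Pi.smul_apply, smul_eq_mul, Pi.zero_apply] at this
    linear_combination this
  · have hi : IsBoundedAtImInfty (fun z => (H z)⁻¹) := Tendsto.isBigO_one ℝ (hlim.inv₀ hc)
    have := bdd_mul (hb i) hi
    refine IsBigO.congr' this ?_ EventuallyEq.rfl
    filter_upwards [hlim.eventually_ne hc] with z hz
    rw [hvu]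
    simp only [Pi.mul_apply]
    field_simp

/-- The determinant of a square array of functions. -/
def dA (f : ι → ι → ℍ → ℂ) (z : ℍ) : ℂ := (Matrix.of fun a i => f a i z).det

/-- Tuples of bounded vector valued forms with nonzero determinant, of weights congruent to `k`
modulo two. -/
structure Bs (ε : SL(2, ℤ) → ι → ℂ) (k : ℤ) (wt : ι → ℤ) (f : ι → ι → ℍ → ℂ) : Prop where
  vv : ∀ a, VV ε (wt a) (f a)
  bdd : ∀ a i, IsBoundedAtImInfty (f a i)
  par : ∀ a, Even (wt a - k)
  det : dA f ≠ 0

lemma dA_eq (f : ι → ι → ℍ → ℂ) : dA f = ∑ σ : Equiv.Perm ι,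
    ((Equiv.Perm.sign σ : ℤ) : ℂ) • ∏ i, f (σ i) i := by
  ext z
  simp [dA, Matrix.det_apply, Finset.sum_apply, Finset.prod_apply, Units.smul_def]

lemma MDiff_prod {κ : Type*} (s : Finset κ) {F : κ → ℍ → ℂ} (h : ∀ a ∈ s, MDiff (F a)) :
    MDiff (∏ a ∈ s, F a) := by
  classical
  induction s using Finset.induction_on with
  | empty => exact MDiff_const 1
  | insert a s ha ih =>
    rw [Finset.prod_insert ha]
    exact MDiff_mul (h a (Finset.mem_insert_self _ _))
      (ih fun b hb => h b (Finset.mem_insert_of_mem hb))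

lemma bdd_prod {κ : Type*} (s : Finset κ) {F : κ → ℍ → ℂ} (h : ∀ a ∈ s, IsBoundedAtImInfty (F a)) :
    IsBoundedAtImInfty (∏ a ∈ s, F a) := by
  classical
  induction s using Finset.induction_on with
  | empty => exact const_boundedAtFilter atImInfty (1 : ℂ)
  | insert a s ha ih =>
    rw [Finset.prod_insert ha]
    exact bdd_mul (h a (Finset.mem_insert_self _ _))
      (ih fun b hb => h b (Finset.mem_insert_of_mem hb))

lemma bdd_sum {κ : Type*} (s : Finset κ) {F : κ → ℍ → ℂ} (h : ∀ a ∈ s, IsBoundedAtImInfty (F a)) :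
    IsBoundedAtImInfty (∑ a ∈ s, F a) := by
  classical
  induction s using Finset.induction_on with
  | empty => exact const_boundedAtFilter atImInfty (0 : ℂ)
  | insert a s ha ih =>
    rw [Finset.sum_insert ha]
    exact BoundedAtFilter.add (h a (Finset.mem_insert_self _ _))
      (ih fun b hb => h b (Finset.mem_insert_of_mem hb))

lemma dA_hol {f : ι → ι → ℍ → ℂ} (h : ∀ a i, MDiff (f a i)) : MDiff (dA f) := by
  rw [dA_eq]
  exact MDiff_sum _ fun σ _ => (MDiff_prod _ fun i _ => h _ _).const_smul _

lemma dA_bdd {f : ι → ι → ℍ → ℂ} (h : ∀ a i, IsBoundedAtImInfty (f a i)) :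
    IsBoundedAtImInfty (dA f) := by
  rw [dA_eq]
  exact bdd_sum _ fun σ _ => BoundedAtFilter.smul _ (bdd_prod _ fun i _ => h _ _)

lemma dA_tr {ε : SL(2, ℤ) → ι → ℂ} (hε : ∀ γ i, ε γ i ^ 2 = 1) {wt : ι → ℤ}
    {f : ι → ι → ℍ → ℂ} (h : ∀ a, VV ε (wt a) (f a)) (γ : SL(2, ℤ)) (z : ℍ) :
    dA f (γ • z) ^ 2 = denom γ z ^ (2 * ∑ a, wt a) * dA f z ^ 2 := by
  have e : dA f (γ • z) = (∏ a, denom γ z ^ wt a) * ((∏ i, ε γ i) *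
      (((Equiv.Perm.sign (MulAction.toPerm γ⁻¹ : Equiv.Perm ι) : ℤ) : ℂ) * dA f z)) := by
    rw [dA, dA, ← Matrix.det_permute', ← Matrix.det_mul_row, ← Matrix.det_mul_column]
    congr 1
    ext a i
    simp only [Matrix.of_apply, (h a).tr, Matrix.submatrix_apply, id_eq, MulAction.toPerm_apply]
    ring
  rw [e, mul_pow, mul_pow, mul_pow, ← Finset.prod_pow _ _ (fun i => ε γ i),
    Finset.prod_congr rfl (fun i _ => hε γ i), Finset.prod_const_one, one_mul]
  have : (((Equiv.Perm.sign (MulAction.toPerm γ⁻¹ : Equiv.Perm ι) : ℤ) : ℂ)) ^ 2 = 1 := by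
    rcases Int.units_eq_one_or (Equiv.Perm.sign (MulAction.toPerm γ⁻¹ : Equiv.Perm ι)) with h | h <;>
      simp [h]
  rw [this, one_mul]
  congr 1
  have hz := denom_ne_zero (γ : GL (Fin 2) ℝ) z
  rw [mul_comm 2, zpow_mul]
  congr 1
  induction (Finset.univ : Finset ι) using Finset.induction_on with
  | empty => simp
  | insert a s ha ih => rw [Finset.prod_insert ha, Finset.sum_insert ha, ih, zpow_add₀ hz]

lemma Bs.lv {ε : SL(2, ℤ) → ι → ℂ} (hε : ∀ γ i, ε γ i ^ 2 = 1) {k : ℤ} {wt : ι → ℤ}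
    {f : ι → ι → ℍ → ℂ} (h : Bs ε k wt f) : Lv (2 * ∑ a, wt a) (dA f ^ 2) ∧
      IsBoundedAtImInfty (dA f ^ 2) := by
  have hb : IsBoundedAtImInfty (dA f ^ 2) := by
    rw [pow_two]; exact bdd_mul (dA_bdd h.bdd) (dA_bdd h.bdd)
  refine ⟨⟨?_, fun γ z => dA_tr hε h.vv γ z, 0, ?_⟩, hb⟩
  · rw [pow_two]; exact MDiff_mul (dA_hol fun a => (h.vv a).hol) (dA_hol fun a => (h.vv a).hol)
  · simpa [qp_zero] using hb

lemma Bs.weight_nonneg {ε : SL(2, ℤ) → ι → ℂ} (hε : ∀ γ i, ε γ i ^ 2 = 1) {k : ℤ} {wt : ι → ℤ}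
    {f : ι → ι → ℍ → ℂ} (h : Bs ε k wt f) : 0 ≤ ∑ a, wt a := by
  by_contra! hn
  obtain ⟨hl, hb⟩ := h.lv hε
  exact h.det (pow_eq_zero_iff two_ne_zero |>.1 (hl.weight_neg (by omega) hb))

/-- The reduction step: a linear relation at `z₀` between basis elements allows one of them to be
replaced by a form of lower weight. -/
lemma Bs.reduce {ε : SL(2, ℤ) → ι → ℂ} {k : ℤ} {wt : ι → ℤ}
    {f : ι → ι → ℍ → ℂ} (h : Bs ε k wt f) {z₀ : ℍ} {H : ℍ → ℂ} {w₀ W : ℤ} (hH : Dv w₀ z₀ H)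
    (hw₀ : Even w₀) (m : ι → ℍ → ℂ) (c : ι → ℂ) (hc : ∀ i, ∑ a, c a * f a i z₀ = 0)
    (hm : ∀ a, Lv (W - wt a) (m a)) (hmb : ∀ a, IsBoundedAtImInfty (m a))
    (hmz : ∀ a, c a ≠ 0 → m a z₀ ≠ 0) {a₀ : ι} (ha₀ : c a₀ ≠ 0) (hW : W - w₀ < wt a₀)
    (hWe : Even (W - k)) : ∃ wt' f', Bs ε k wt' f' ∧ ∑ a, wt' a < ∑ a, wt a := by
  set v : ι → ι → ℍ → ℂ := fun a i => ((c a / m a z₀) • m a) * f a i with hv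
  have hvv : VV ε W (∑ a, v a) := VV.sum _ fun a _ =>
    (VV.lmul ((hm a).smul (c a / m a z₀)) (h.vv a)).cast (by ring)
  obtain ⟨u, hu, hub, hvu⟩ := hvv.div hH (fun i => by
    rw [Finset.sum_apply]
    exact bdd_sum _ fun a _ => bdd_mul (BoundedAtFilter.smul _ (hmb a)) (h.bdd a i)) (fun i => by
    rw [Finset.sum_apply, Finset.sum_apply, ← hc i]
    refine Finset.sum_congr rfl fun a _ => ?_
    by_cases hca : c a = 0
    · simp [hv, hca]
    · have := hmz a hca
      simp only [hv, Pi.mul_apply, Pi.smul_apply, smul_eq_mul]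
      field_simp)
  refine ⟨update wt a₀ (W - w₀), update f a₀ u, ⟨fun a => ?_, fun a => ?_, fun a => ?_, fun hd => ?_⟩,
    ?_⟩
  · rcases eq_or_ne a a₀ with rfl | hne
    · simpa using hu
    · simpa [hne] using h.vv a
  · rcases eq_or_ne a a₀ with rfl | hne
    · simpa using hub
    · simpa [hne] using h.bdd a
  · rcases eq_or_ne a a₀ with rfl | hne
    · rw [update_self, show W - w₀ - k = W - k - w₀ by ring]; exact hWe.sub hw₀
    · simpa [hne] using h.par a
  · have key : H * dA (update f a₀ u) = ((c a₀ / m a₀ z₀) • m a₀) * dA f := by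
      ext z
      have e1 : (Matrix.of fun a i => update f a₀ u a i z) =
          (Matrix.of fun a i => f a i z).updateRow a₀ (fun i => u i z) := by
        ext a i
        rcases eq_or_ne a a₀ with rfl | hne
        · simp
        · simp [hne]
      have e2 : H z • (fun i => u i z) =
          ∑ a, ((c a / m a z₀) * m a z) • (Matrix.of fun a i => f a i z) a := by
        ext i
        have := congrFun (hvu i) z
        simp only [Finset.sum_apply, hv, Pi.mul_apply, Pi.smul_apply, smul_eq_mul] at this
        simp [Finset.sum_apply, this]
      simp only [Pi.mul_apply, dA, Pi.smul_apply, smul_eq_mul]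
      rw [e1, ← Matrix.det_updateRow_smul, e2, Matrix.det_updateRow_sum,
        smul_eq_mul]
    rw [hd, mul_zero] at key
    rcases (UpperHalfPlane.mul_eq_zero_iff ((hm a₀).smul _).hol
      (dA_hol fun a => (h.vv a).hol)).1 key.symm with h1 | h1
    · have := congrFun h1 z₀
      have h2 := hmz a₀ ha₀
      simp [ha₀, h2] at this
    · exact h.det h1
  · refine Finset.sum_lt_sum (fun a _ => ?_) ⟨a₀, Finset.mem_univ _, by simpa using hW⟩
    rcases eq_or_ne a a₀ with rfl | hne
    · simpa using hW.le
    · simp [hne]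

end MC

end

/-! ### Lowering the weights of a basis -/

section
open UpperHalfPlane Filter Topology Asymptotics Function Complex
open scoped MatrixGroups Manifold ModularForm
namespace MC

open ModularForm EisensteinSeries Derivative

set_option linter.unusedSectionVars false

variable {ι : Type*} [Fintype ι] [DecidableEq ι] [MulAction SL(2, ℤ) ι]

/-- At a fixed point of `γ`, a relation can be chosen to involve only basis elements on whose
weights the automorphy factor agrees. -/
lemma exists_relation {ε : SL(2, ℤ) → ι → ℂ} {wt : ι → ℤ} {f : ι → ι → ℍ → ℂ}
    (hvv : ∀ a, VV ε (wt a) (f a)) {γ : SL(2, ℤ)} {z₀ : ℍ} (hγ : γ • z₀ = z₀) (n : ℕ) :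
    ∀ c : ι → ℂ, c ≠ 0 → (∀ i, ∑ a, c a * f a i z₀ = 0) →
      (Finset.univ.filter fun a => c a ≠ 0).card ≤ n →
      ∃ c : ι → ℂ, c ≠ 0 ∧ (∀ i, ∑ a, c a * f a i z₀ = 0) ∧ ∀ a b, c a ≠ 0 → c b ≠ 0 →
        denom γ z₀ ^ wt a = denom γ z₀ ^ wt b := by
  have hμ := denom_ne_zero (γ : GL (Fin 2) ℝ) z₀
  set μ := denom γ z₀
  induction n with
  | zero =>
    intro c hc _ hn
    exfalso
    apply hc
    ext a
    by_contra h
    have : a ∈ Finset.univ.filter fun a => c a ≠ 0 := by simpa using h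
    simp [Finset.card_eq_zero.1 (Nat.le_zero.1 hn)] at this
  | succ n ih =>
    intro c hc hrel hn
    by_cases hall : ∀ a b, c a ≠ 0 → c b ≠ 0 → μ ^ wt a = μ ^ wt b
    · exact ⟨c, hc, hrel, hall⟩
    push Not at hall
    obtain ⟨a, b, ha, hb, hab⟩ := hall
    set c' : ι → ℂ := fun x => (μ ^ (-wt a) - μ ^ (-wt x)) * c x with hc'
    refine ih c' (fun h => ?_) (fun i => ?_) ?_
    · have := congrFun h b
      simp only [hc', Pi.zero_apply, mul_eq_zero, hb, or_false, zpow_neg, sub_eq_zero] at this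
      exact hab (inv_injective this)
    · have h1 : ∑ x, μ ^ (-wt x) * c x * f x i z₀ = ε γ i * ∑ x, c x * f x (γ⁻¹ • i) z₀ := by
        rw [Finset.mul_sum]
        refine Finset.sum_congr rfl fun x _ => ?_
        have := (hvv x).tr γ i z₀
        rw [hγ] at this
        rw [this, zpow_neg]
        have := zpow_ne_zero (wt x) hμ
        change _ * _ * (_ * μ ^ wt x * _) = _
        field_simp
      rw [hrel, mul_zero] at h1
      have h2 : ∑ x, μ ^ (-wt a) * c x * f x i z₀ = 0 := by
        simp_rw [mul_assoc]; rw [← Finset.mul_sum, hrel, mul_zero]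
      have h3 : ∑ x, c' x * f x i z₀ =
          ∑ x, μ ^ (-wt a) * c x * f x i z₀ - ∑ x, μ ^ (-wt x) * c x * f x i z₀ := by
        rw [← Finset.sum_sub_distrib]
        exact Finset.sum_congr rfl fun x _ => by simp only [hc']; ring
      rw [h3, h1, h2, sub_zero]
    · refine Nat.le_of_lt_succ (lt_of_lt_of_le (Finset.card_lt_card ?_) hn)
      refine ⟨fun x hx => ?_, fun hsub => ?_⟩
      · simp only [Finset.mem_filter, Finset.mem_univ, true_and, hc'] at hx ⊢
        exact right_ne_zero_of_mul hx
      · have := hsub (x := a) (by simpa using ha)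
        simp [hc'] at this

/-- The elliptic point of order three. -/
def rho : ℍ := ⟨⟨1 / 2, Real.sqrt 3 / 2⟩, by
  have : (0 : ℝ) < Real.sqrt 3 := by positivity
  simpa using this⟩

lemma rho_sq : (rho : ℂ) ^ 2 = rho - 1 := by
  have h3 : Real.sqrt 3 * Real.sqrt 3 = 3 := Real.mul_self_sqrt (by norm_num)
  have e : (rho : ℂ) = ⟨1 / 2, Real.sqrt 3 / 2⟩ := rfl
  rw [e]
  apply Complex.ext
  · simp [pow_two]; linear_combination -h3 / 4
  · simp [pow_two]; ring

lemma rho_ne : (rho : ℂ) ≠ 0 := UpperHalfPlane.ne_zero rho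

lemma rho_im : (rho : ℂ).im ≠ 0 := rho.im_ne_zero

lemma TS_entries : (ModularGroup.T * ModularGroup.S : SL(2, ℤ)).1 = !![1, -1; 1, 0] := by
  rw [Matrix.SpecialLinearGroup.coe_mul, ModularGroup.coe_T, ModularGroup.coe_S]
  decide

lemma rho_fix : (ModularGroup.T * ModularGroup.S : SL(2, ℤ)) • rho = rho := by
  apply UpperHalfPlane.ext
  rw [UpperHalfPlane.coe_specialLinearGroup_apply, TS_entries]
  simp only [Matrix.of_apply, Matrix.cons_val', Matrix.cons_val_zero, Matrix.cons_val_one,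
    Matrix.cons_val_fin_one, algebraMap_int_eq, eq_intCast, Int.cast_one, Int.cast_neg,
    Int.cast_zero, Complex.ofReal_one, Complex.ofReal_neg, Complex.ofReal_zero, add_zero, one_mul]
  rw [div_eq_iff rho_ne]
  linear_combination -rho_sq

lemma rho_denom : denom (ModularGroup.T * ModularGroup.S : SL(2, ℤ)) rho = rho := by
  rw [ModularGroup.denom_apply, TS_entries]
  simp

lemma rho_cube : (rho : ℂ) ^ 3 = -1 := by linear_combination ((rho : ℂ) + 1) * rho_sq

lemma E4_rho : E₄ rho = 0 := by
  have h := lv_E4.tr (ModularGroup.T * ModularGroup.S) rho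
  rw [rho_fix, rho_denom] at h
  by_contra h0
  have h1 : (rho : ℂ) ^ (4 : ℤ) = 1 := by
    apply mul_right_cancel₀ h0; rw [one_mul, ← h]
  have h2 : (rho : ℂ) ^ 4 = 1 := by exact_mod_cast h1
  have h3 : (rho : ℂ) = -1 := by linear_combination -h2 + (rho : ℂ) * rho_cube
  exact rho_im (by rw [h3]; simp)

lemma I_fix : (ModularGroup.S : SL(2, ℤ)) • UpperHalfPlane.I = UpperHalfPlane.I := by
  apply UpperHalfPlane.ext
  rw [UpperHalfPlane.coe_specialLinearGroup_apply]
  simp [ModularGroup.S]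

lemma E6_I : E₆ UpperHalfPlane.I = 0 := by
  have h := lv_E6.tr ModularGroup.S UpperHalfPlane.I
  rw [I_fix, ModularGroup.denom_S] at h
  have h1 : (Complex.I) ^ (6 : ℤ) = -1 := by
    rw [show (6 : ℤ) = ((6 : ℕ) : ℤ) by norm_num, zpow_natCast,
      show (6 : ℕ) = 2 * 3 by norm_num, pow_mul, Complex.I_sq]; norm_num
  rw [UpperHalfPlane.coe_I, h1] at h
  linear_combination h / 2

lemma rho_zpow {n : ℤ} (hn : Even n) (h : (rho : ℂ) ^ n = 1) : (6 : ℤ) ∣ n := by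
  have h6 : (rho : ℂ) ^ (6 : ℤ) = 1 := by
    rw [show (6 : ℤ) = ((6 : ℕ) : ℤ) by norm_num, zpow_natCast,
      show (6 : ℕ) = 3 * 2 by norm_num, pow_mul, rho_cube]; norm_num
  rw [← Int.mul_ediv_add_emod n 6, zpow_add₀ rho_ne, zpow_mul, h6, one_zpow, one_mul] at h
  have h0 : n % 6 = 0 ∨ n % 6 = 2 ∨ n % 6 = 4 := by obtain ⟨r, rfl⟩ := hn; omega
  rcases h0 with h0 | h0 | h0
  · exact Int.dvd_of_emod_eq_zero h0
  · rw [h0] at h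
    have h2 : (rho : ℂ) ^ 2 = 1 := by exact_mod_cast h
    have h3 : (rho : ℂ) = 2 := by linear_combination h2 - rho_sq
    exact absurd (by rw [h3]; simp) rho_im
  · rw [h0] at h
    have h2 : (rho : ℂ) ^ 4 = 1 := by exact_mod_cast h
    have h3 : (rho : ℂ) = -1 := by linear_combination -h2 + (rho : ℂ) * rho_cube
    exact absurd (by rw [h3]; simp) rho_im

lemma I_zpow {n : ℤ} (hn : Even n) (h : Complex.I ^ n = 1) : (4 : ℤ) ∣ n := by
  obtain ⟨r, rfl⟩ := hn
  rw [← two_mul, zpow_mul, zpow_ofNat, Complex.I_sq] at h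
  have : Even r := by
    by_contra ho
    rw [Int.not_even_iff_odd] at ho
    rw [ho.neg_one_zpow] at h
    norm_num at h
  obtain ⟨s, rfl⟩ := this
  omega

lemma ee_bdd (a b : ℕ) : IsBoundedAtImInfty (ee a b 0) := by
  have := ee_lead a b 0
  exact Tendsto.isBigO_one ℝ (by simpa [Lead, qp_zero] using this)

/-- If the determinant vanishes at some point, the total weight can be lowered. At the elliptic
points the division is by `E₆` or `E₄`, and the relation must be chosen so that the weights involved
agree modulo `4` or `6`; elsewhere the division is by a form of weight `12`. -/
lemma Bs.reduce_all {ε : SL(2, ℤ) → ι → ℂ} (hε : ∀ γ i, ε γ i ^ 2 = 1) {k : ℤ} {wt : ι → ℤ}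
    {f : ι → ι → ℍ → ℂ} (h : Bs ε k wt f) {z₀ : ℍ} (hz : dA f z₀ = 0) :
    ∃ wt' f', Bs ε k wt' f' ∧ ∑ a, wt' a < ∑ a, wt a := by
  have horb : ∀ (γ : SL(2, ℤ)) z, dA f (γ • z) = 0 → dA f z = 0 := by
    intro γ z h0
    have := dA_tr hε h.vv γ z
    rw [h0, zero_pow two_ne_zero] at this
    have := (mul_eq_zero.1 this.symm).resolve_left (zpow_ne_zero _ (denom_ne_zero _ _))
    exact pow_eq_zero_iff two_ne_zero |>.1 this
  have hrel : ∀ z, dA f z = 0 → ∃ c : ι → ℂ, c ≠ 0 ∧ ∀ i, ∑ a, c a * f a i z = 0 := by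
    intro z h0
    obtain ⟨c, hc, hv⟩ := Matrix.exists_vecMul_eq_zero_iff.2 h0
    refine ⟨c, hc, fun i => ?_⟩
    simpa [Matrix.vecMul, dotProduct] using congrFun hv i
  have hmax : ∀ c : ι → ℂ, c ≠ 0 → ∃ a₀, c a₀ ≠ 0 ∧ ∀ a, c a ≠ 0 → wt a ≤ wt a₀ := by
    intro c hc
    obtain ⟨b, hb⟩ := Function.ne_iff.1 hc
    obtain ⟨a₀, h1, h2⟩ := Finset.exists_max_image (Finset.univ.filter fun a => c a ≠ 0) wt
      ⟨b, by simpa using hb⟩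
    exact ⟨a₀, by simpa using h1, fun a ha => h2 a (by simpa using ha)⟩
  have hpar : ∀ a b, Even (wt a - wt b) := fun a b => by
    have := (h.par a).sub (h.par b)
    rwa [sub_sub_sub_cancel_right] at this
  by_cases h6 : E₆ z₀ = 0
  · obtain ⟨γ, rfl⟩ := (dv_E6 E6_I).orb z₀ h6
    obtain ⟨c, hc, hr⟩ := hrel _ (horb _ _ hz)
    obtain ⟨c, hc, hr, hcon⟩ := exists_relation h.vv I_fix _ c hc hr le_rfl
    obtain ⟨a₀, ha₀, hmx⟩ := hmax c hc
    rw [ModularGroup.denom_S, UpperHalfPlane.coe_I] at hcon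
    have hdiv : ∀ a, c a ≠ 0 → (4 : ℤ) ∣ wt a₀ - wt a := fun a ha => I_zpow (hpar _ _) (by
      rw [zpow_sub₀ Complex.I_ne_zero, hcon a₀ a ha₀ ha,
        div_self (zpow_ne_zero _ Complex.I_ne_zero)])
    have h4 : E₄ UpperHalfPlane.I ≠ 0 := fun h => E4_E6_ne h E6_I
    refine h.reduce (dv_E6 E6_I) (by decide) (W := wt a₀)
      (fun a => if c a = 0 then 0 else ee ((wt a₀ - wt a) / 4).toNat 0 0) c hr (fun a => ?_)
      (fun a => ?_) (fun a ha => ?_) ha₀ (by omega) (h.par _)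
    · split_ifs with hca
      · exact Lv.zero _
      · refine (ee_lv _ _ _).cast ?_
        have := hdiv a hca
        have := hmx a hca
        push_cast; omega
    · split_ifs with hca
      · exact const_boundedAtFilter atImInfty (0 : ℂ)
      · exact ee_bdd _ _
    · simp [ha, ee, h4]
  by_cases h4 : E₄ z₀ = 0
  · obtain ⟨γ, rfl⟩ := (dv_E4 E4_rho).orb z₀ h4
    obtain ⟨c, hc, hr⟩ := hrel _ (horb _ _ hz)
    obtain ⟨c, hc, hr, hcon⟩ := exists_relation h.vv rho_fix _ c hc hr le_rfl
    obtain ⟨a₀, ha₀, hmx⟩ := hmax c hc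
    rw [rho_denom] at hcon
    have hdiv : ∀ a, c a ≠ 0 → (6 : ℤ) ∣ wt a₀ - wt a := fun a ha => rho_zpow (hpar _ _) (by
      rw [zpow_sub₀ rho_ne, hcon a₀ a ha₀ ha, div_self (zpow_ne_zero _ rho_ne)])
    have h6 : E₆ rho ≠ 0 := E4_E6_ne E4_rho
    refine h.reduce (dv_E4 E4_rho) (by decide) (W := wt a₀)
      (fun a => if c a = 0 then 0 else ee 0 ((wt a₀ - wt a) / 6).toNat 0) c hr (fun a => ?_)
      (fun a => ?_) (fun a ha => ?_) ha₀ (by omega) (h.par _)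
    · split_ifs with hca
      · exact Lv.zero _
      · refine (ee_lv _ _ _).cast ?_
        have := hdiv a hca
        have := hmx a hca
        push_cast; omega
    · split_ifs with hca
      · exact const_boundedAtFilter atImInfty (0 : ℂ)
      · exact ee_bdd _ _
    · simp [ha, ee, h6]
  -- Every even integer `≥ 10` is of the form `4 p + 6 q`, so weight `wt a₀ + 10` is reachable from
  -- each `wt a ≤ wt a₀`, and division by a form of weight `12` lands below `wt a₀`.
  obtain ⟨H, hH⟩ := dv_gen h4 h6
  obtain ⟨c, hc, hr⟩ := hrel _ hz
  obtain ⟨a₀, ha₀, hmx⟩ := hmax c hc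
  have hex : ∀ a, c a ≠ 0 → ∃ p : ℕ × ℕ, 4 * (p.1 : ℤ) + 6 * p.2 = wt a₀ + 10 - wt a := by
    intro a ha
    have h1 := hmx a ha
    obtain ⟨r, hr⟩ := hpar a₀ a
    rcases Int.even_or_odd r with ⟨s, hs⟩ | ⟨s, hs⟩
    · exact ⟨(s.toNat + 1, 1), by push_cast; omega⟩
    · exact ⟨(s.toNat + 3, 0), by push_cast; omega⟩
  choose! p hp using hex
  refine h.reduce hH (by decide) (W := wt a₀ + 10)
    (fun a => if c a = 0 then 0 else ee (p a).1 (p a).2 0) c hr (fun a => ?_)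
    (fun a => ?_) (fun a ha => ?_) ha₀ (by omega) ?_
  · split_ifs with hca
    · exact Lv.zero _
    · refine (ee_lv _ _ _).cast ?_
      have := hp a hca
      omega
  · split_ifs with hca
    · exact const_boundedAtFilter atImInfty (0 : ℂ)
    · exact ee_bdd _ _
  · simp [ha, ee, h6, h4]
  · rw [add_sub_right_comm]
    exact (h.par a₀).add (by decide)

/-- Repeated weight reduction stops at a tuple whose determinant vanishes nowhere, because the total
weight is nonnegative. -/
lemma exists_nonvanishing {ε : SL(2, ℤ) → ι → ℂ} (hε : ∀ γ i, ε γ i ^ 2 = 1) {k : ℤ} (n : ℕ) :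
    ∀ (wt : ι → ℤ) (f : ι → ι → ℍ → ℂ), Bs ε k wt f → ∑ a, wt a ≤ n →
    ∃ (wt' : ι → ℤ) (f' : ι → ι → ℍ → ℂ), Bs ε k wt' f' ∧ ∀ z, dA f' z ≠ 0 := by
  induction n with
  | zero =>
    intro wt f h hn
    refine ⟨wt, f, h, fun z hz => ?_⟩
    obtain ⟨wt', f', h', hlt⟩ := h.reduce_all hε hz
    have := h'.weight_nonneg hε
    push_cast at hn
    omega
  | succ n ih =>
    intro wt f h hn
    by_cases hz : ∀ z, dA f z ≠ 0
    · exact ⟨wt, f, h, hz⟩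
    push Not at hz
    obtain ⟨z, hz⟩ := hz
    obtain ⟨wt', f', h', hlt⟩ := h.reduce_all hε hz
    exact ih wt' f' h' (by push_cast at hn; omega)

end MC

end

/-! ### Duality for vector-valued forms -/

section
open UpperHalfPlane Filter Topology Asymptotics Function Complex
open scoped MatrixGroups Manifold ModularForm
namespace MC

open ModularForm EisensteinSeries Derivative

set_option linter.unusedSectionVars false

/-- A nonvanishing function meromorphic at infinity has an inverse meromorphic at infinity. -/
lemma Mf.inv {h : ℝ} (hh : 0 < h) {F : ℍ → ℂ} (hF : Mf h F) (h0 : ∀ z, F z ≠ 0) :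
    Mf h (fun z => (F z)⁻¹) := by
  obtain ⟨N, hN⟩ := hF.coef_bddBelow hh
  have hex : ∃ n : ℕ, MC.coef h F (n - N) ≠ 0 := by
    by_contra hc
    push Not at hc
    have : F = 0 := hF.ext hh (Mf.zero h) fun m => by
      rw [coef_zero_fun]
      by_cases hm : m < -N
      · exact hN m hm
      · have := hc (m + N).toNat
        rwa [show (((m + N).toNat : ℤ) - N) = m by omega] at this
    exact h0 UpperHalfPlane.I (by rw [this]; rfl)
  classical
  set n := Nat.find hex
  have hn : MC.coef h F (n - N) ≠ 0 := Nat.find_spec hex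
  have hlow : ∀ m < (n - N : ℤ), MC.coef h F m = 0 := fun m hm => by
    by_cases hm' : m < -N
    · exact hN m hm'
    · have := Nat.find_min hex (m := (m + N).toNat) (by omega)
      push Not at this
      rwa [show (((m + N).toNat : ℤ) - N) = m by omega] at this
  have hb := hF.bdd_of_coef hh hlow
  have hlim := (hF.mul (Mf.qp hh (-(n - N : ℤ)))).tendsto hh hb
  rw [coef_mul_qp, sub_neg_eq_add, zero_add] at hlim
  refine Mf.mk' hh (MDiff_inv hF.hol h0) (fun z => by rw [hF.per]) (n := (n - N : ℤ)) ?_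
  refine IsBigO.congr' (Tendsto.isBigO_one ℝ (hlim.inv₀ hn)) (Eventually.of_forall fun z => ?_)
    EventuallyEq.rfl
  have := congrFun (qp_neg_mul h (n - N : ℤ)) z
  simp only [Pi.mul_apply, Pi.one_apply] at this ⊢
  rw [mul_inv, eq_inv_of_mul_eq_one_left this, inv_inv]

lemma qp_one_eq {n : ℕ} (hn : 0 < n) (m : ℤ) : qp 1 m = qp n (n * m) := by
  ext z
  have : (n : ℂ) ≠ 0 := by exact_mod_cast hn.ne'
  rw [qp_exp, qp_exp]; congr 1; push_cast; field_simp

lemma Mf.to_one {n : ℕ} (hn : 0 < n) {F : ℍ → ℂ} (hF : Mf n F)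
    (hp : ∀ z : ℍ, F ((1 : ℝ) +ᵥ z) = F z) : Mf 1 F := by
  obtain ⟨N, hN⟩ := hF.mer
  refine ⟨hF.hol, hp, N, ?_⟩
  rw [qp_one_eq hn]
  refine bdd_mono (by exact_mod_cast hn) ?_ hN
  have : (1 : ℤ) ≤ n := by exact_mod_cast hn
  nlinarith [Int.natCast_nonneg N]

lemma vadd_hol {F : ℍ → ℂ} (hF : MDiff F) (r : ℕ) : MDiff (fun z : ℍ => F ((r : ℝ) +ᵥ z)) := by
  have := MDiff_act hF (ModularGroup.T ^ (r : ℤ))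
  simpa only [modular_T_zpow_smul, Int.cast_natCast] using this

/-- Constant terms for period one and period `n` are related by summing over translates. -/
lemma ct_trace {n : ℕ} (hn : 0 < n) {F : ℍ → ℂ} (hF : MDiff F) :
    ct 1 (∑ r ∈ Finset.range n, fun z : ℍ => F ((r : ℝ) +ᵥ z)) = n * ct n F := by
  have hc := cont_line hF
  have hs := intervalIntegral.sum_integral_adjacent_intervals (μ := MeasureTheory.volume)
    (f := fun x : ℝ => F (x +ᵥ UpperHalfPlane.I)) (a := fun r : ℕ => (r : ℝ)) (n := n)
    (fun r _ => hc.intervalIntegrable _ _)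
  have hn' : ((n : ℝ) : ℂ) ≠ 0 := by exact_mod_cast hn.ne'
  simp only [Nat.cast_zero] at hs
  rw [ct, ct, ← hs]
  simp only [Finset.sum_apply]
  rw [intervalIntegral.integral_finsetSum fun r _ =>
    (cont_line (vadd_hol hF r)).intervalIntegrable _ _]
  rw [← mul_assoc, show (n : ℂ) * (1 / ((n : ℝ) : ℂ)) = 1 / ((1 : ℝ) : ℂ) by
    push_cast at hn' ⊢; field_simp]
  congr 1
  refine Finset.sum_congr rfl fun r _ => ?_
  have := intervalIntegral.integral_comp_add_left
    (fun x : ℝ => F (x +ᵥ UpperHalfPlane.I)) (a := 0) (b := 1) (r : ℝ)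
  rw [add_zero] at this
  push_cast
  rw [← this]
  congr 1; ext x; rw [add_vadd]

lemma qp_vadd (h : ℝ) (m : ℤ) (x : ℝ) (z : ℍ) :
    qp h m (x +ᵥ z) = cexp (2 * Real.pi * Complex.I * m * x / h) * qp h m z := by
  rw [qp_exp, qp_exp, ← Complex.exp_add, coe_vadd]; congr 1; ring

/-- A functional can be modified so as to vanish on `U` without changing it on `N`, provided it
vanishes on `U ⊓ N`. -/
lemma ext_dual {V : Type*} [AddCommGroup V] [Module ℂ V] (U N : Submodule ℂ V) (ℓ : V →ₗ[ℂ] ℂ)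
    (h : ∀ x ∈ U, x ∈ N → ℓ x = 0) :
    ∃ L : V →ₗ[ℂ] ℂ, (∀ x ∈ U, L x = 0) ∧ ∀ x ∈ N, L x = ℓ x := by
  set p : N →ₗ[ℂ] V ⧸ U := U.mkQ ∘ₗ N.subtype
  have hm : ℓ ∘ₗ N.subtype ∈ LinearMap.range p.dualMap := by
    rw [LinearMap.range_dualMap_eq_dualAnnihilator_ker, Submodule.mem_dualAnnihilator]
    intro x hx
    have : (x : V) ∈ U := by simpa [p] using hx
    exact h _ this x.2
  obtain ⟨L, hL⟩ := hm
  refine ⟨L ∘ₗ U.mkQ, fun x hx => ?_, fun x hx => ?_⟩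
  · have : U.mkQ x = 0 := by simpa using hx
    rw [LinearMap.comp_apply, this, map_zero]
  · exact LinearMap.congr_fun hL ⟨x, hx⟩

variable {ι : Type*} [Fintype ι] [DecidableEq ι] [MulAction SL(2, ℤ) ι]

/-- A sign system `ε` on a finite `SL(2, ℤ)`-set on which `T ^ N` acts trivially, with a
distinguished point fixed by `T` corresponding to the cusp `∞`. -/
structure Ctx (ε : SL(2, ℤ) → ι → ℂ) (N : ℕ) (i0 : ι) : Prop where
  pos : 0 < N
  sq : ∀ γ i, ε γ i ^ 2 = 1
  fixN : ∀ i : ι, (ModularGroup.T ^ (N : ℤ) : SL(2, ℤ)) • i = i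
  epsN : ∀ i, ε (ModularGroup.T ^ (N : ℤ)) i = 1
  fix1 : (ModularGroup.T : SL(2, ℤ)) • i0 = i0
  eps1 : ε ModularGroup.T i0 = 1

lemma T_zpow_denom (n : ℤ) (z : ℍ) : denom (ModularGroup.T ^ n : SL(2, ℤ)) z = 1 := by
  rw [ModularGroup.denom_apply, ModularGroup.coe_T_zpow]; simp

lemma VV.T_tr {ε : SL(2, ℤ) → ι → ℂ} {w : ℤ} {v : ι → ℍ → ℂ} (hv : VV ε w v) (n : ℤ) (i : ι)
    (z : ℍ) : v i ((n : ℝ) +ᵥ z) = ε (ModularGroup.T ^ n) i *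
      v ((ModularGroup.T ^ n : SL(2, ℤ))⁻¹ • i) z := by
  rw [← modular_T_zpow_smul, hv.tr, T_zpow_denom]; simp

lemma VV.perN {ε : SL(2, ℤ) → ι → ℂ} {N : ℕ} {i0 : ι} (C : Ctx ε N i0) {w : ℤ} {v : ι → ℍ → ℂ}
    (hv : VV ε w v) (i : ι) (z : ℍ) : v i ((N : ℝ) +ᵥ z) = v i z := by
  have := hv.T_tr N i z
  rw [C.epsN, inv_smul_eq_iff.2 (C.fixN i).symm, one_mul] at this
  exact_mod_cast this

lemma VV.per1 {ε : SL(2, ℤ) → ι → ℂ} {N : ℕ} {i0 : ι} (C : Ctx ε N i0) {w : ℤ} {v : ι → ℍ → ℂ}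
    (hv : VV ε w v) (z : ℍ) : v i0 ((1 : ℝ) +ᵥ z) = v i0 z := by
  have := hv.T_tr 1 i0 z
  rw [zpow_one, C.eps1, inv_smul_eq_iff.2 C.fix1.symm, one_mul] at this
  exact_mod_cast this

lemma dA_mf {h : ℝ} (hh : 0 < h) {f : ι → ι → ℍ → ℂ} (hf : ∀ a i, Mf h (f a i)) : Mf h (dA f) := by
  rw [dA_eq]
  exact Mf.sum hh _ fun σ _ => (Mf.prod _ fun i _ => hf _ _).smul _

/-- The transposed inverse of the array `f`. -/
def dB (f : ι → ι → ℍ → ℂ) (a i : ι) (z : ℍ) : ℂ := (Matrix.of fun a i => f a i z)⁻¹ i a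

lemma dB_mul {f : ι → ι → ℍ → ℂ} (hnv : ∀ z, dA f z ≠ 0) (i j : ι) (z : ℍ) :
    ∑ a, f a j z * dB f a i z = if j = i then 1 else 0 := by
  have := Matrix.nonsing_inv_mul (Matrix.of fun a i => f a i z) (isUnit_iff_ne_zero.2 (hnv z))
  have := congrFun (congrFun this i) j
  rw [Matrix.mul_apply, Matrix.one_apply] at this
  simp only [eq_comm (a := j)]
  rw [← this]
  exact Finset.sum_congr rfl fun a _ => mul_comm _ _

lemma dB_unique {f : ι → ι → ℍ → ℂ} (z : ℍ) (C : ι → ι → ℂ)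
    (h : ∀ i j, ∑ a, f a j z * C a i = if j = i then 1 else 0) (a i : ι) : dB f a i z = C a i := by
  have : (Matrix.of fun a i => f a i z)⁻¹ = Matrix.of fun i a => C a i := by
    apply Matrix.inv_eq_left_inv
    ext i j
    rw [Matrix.mul_apply, Matrix.one_apply]
    simp only [eq_comm (a := i)]
    rw [← h]
    exact Finset.sum_congr rfl fun a _ => mul_comm _ _
  rw [dB, this]; rfl

lemma dB_tr {ε : SL(2, ℤ) → ι → ℂ} (hε : ∀ γ i, ε γ i ^ 2 = 1) {wt : ι → ℤ}
    {f : ι → ι → ℍ → ℂ} (h : ∀ a, VV ε (wt a) (f a)) (hnv : ∀ z, dA f z ≠ 0) (γ : SL(2, ℤ))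
    (z : ℍ) (a i : ι) :
    dB f a i (γ • z) = ε γ i * denom γ z ^ (-wt a) * dB f a (γ⁻¹ • i) z := by
  refine dB_unique (γ • z) (fun a i => ε γ i * denom γ z ^ (-wt a) * dB f a (γ⁻¹ • i) z)
    (fun i j => ?_) a i
  have e : ∀ a, f a j (γ • z) * (ε γ i * denom γ z ^ (-wt a) * dB f a (γ⁻¹ • i) z) =
      ε γ j * ε γ i * (f a (γ⁻¹ • j) z * dB f a (γ⁻¹ • i) z) := fun a => by
    rw [(h a).tr, zpow_neg]
    have := zpow_ne_zero (wt a) (denom_ne_zero (γ : GL (Fin 2) ℝ) z)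
    field_simp
  simp_rw [e]
  rw [← Finset.mul_sum, dB_mul hnv]
  by_cases hij : j = i
  · subst hij; simp [← pow_two, hε]
  · rw [if_neg hij, if_neg (fun h => hij (smul_left_cancel _ h)), mul_zero]

lemma dB_mf {h : ℝ} (hh : 0 < h) {f : ι → ι → ℍ → ℂ} (hf : ∀ a i, Mf h (f a i))
    (hnv : ∀ z, dA f z ≠ 0) (a i : ι) : Mf h (dB f a i) := by
  have e : dB f a i = (fun z => (dA f z)⁻¹) *
      dA (Function.update f a (fun j _ => if j = i then 1 else 0)) := by
    ext z
    rw [dB, Matrix.inv_def, Ring.inverse_eq_inv', Matrix.smul_apply, smul_eq_mul,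
      Matrix.adjugate_apply, Pi.mul_apply]
    simp only [dA]
    congr 2
    ext b j
    simp only [Matrix.updateRow_apply, Matrix.of_apply, Function.update_apply, Pi.single_apply]
    by_cases hb : b = a <;> simp [hb]
  rw [e]
  refine ((dA_mf hh hf).inv hh hnv).mul (dA_mf hh fun b j => ?_)
  rw [Function.update_apply]
  split_ifs
  · exact Mf.const h _
  · exact hf b j

/-- The pairing of the principal part of `G` with the sequence `d`. -/
def pair (d : ℕ → ℂ) : Msub 1 one_pos →ₗ[ℂ] ℂ where
  toFun G := ∑ᶠ m : ℕ, coef 1 G.1 (-m) * d m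
  map_add' G H := by
    have hfin : ∀ G : Msub 1 one_pos,
        (Function.support fun m : ℕ => coef 1 G.1 (-m) * d m).Finite := fun G => by
      obtain ⟨n, hn⟩ := Mf.coef_bddBelow one_pos (F := G.1) G.2
      refine (Set.finite_Iic n).subset fun m hm => ?_
      by_contra h
      rw [Set.mem_Iic, not_le] at h
      exact hm (by simp only; rw [hn _ (by omega), zero_mul])
    rw [← finsum_add_distrib (hfin G) (hfin H)]
    refine finsum_congr fun m => ?_
    have hG : Mf 1 G.1 := G.2
    have hH : Mf 1 H.1 := H.2
    rw [← add_mul, ← coef_add hG.hol hH.hol]; rfl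
  map_smul' c G := by
    simp only [Submodule.coe_smul, coef_smul, mul_assoc, RingHom.id_apply, smul_eq_mul]
    exact (smul_finsum c fun m : ℕ => coef 1 G.1 (-m) * d m).symm

variable {ε : SL(2, ℤ) → ι → ℂ} {N : ℕ} {i0 : ι}

lemma Bs.mfN (C : Ctx ε N i0) {k : ℤ} {wt : ι → ℤ} {f : ι → ι → ℍ → ℂ} (h : Bs ε k wt f)
    (a i : ι) : Mf N (f a i) :=
  Mf.mk' (by exact_mod_cast C.pos) ((h.vv a).hol i) ((h.vv a).perN C i) (n := 0)
    (by simpa [qp_zero] using h.bdd a i)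

lemma Bs.mf1 (C : Ctx ε N i0) {k : ℤ} {wt : ι → ℤ} {f : ι → ι → ℍ → ℂ} (h : Bs ε k wt f)
    (a : ι) : Mf 1 (f a i0) := (h.mfN C a i0).to_one C.pos ((h.vv a).per1 C)

lemma dB_T {wt : ι → ℤ} {f : ι → ι → ℍ → ℂ} (hε : ∀ γ i, ε γ i ^ 2 = 1)
    (h : ∀ a, VV ε (wt a) (f a)) (hnv : ∀ z, dA f z ≠ 0) (n : ℤ) (a i : ι) (z : ℍ) :
    dB f a i ((n : ℝ) +ᵥ z) = ε (ModularGroup.T ^ n) i *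
      dB f a ((ModularGroup.T ^ n : SL(2, ℤ))⁻¹ • i) z := by
  rw [← modular_T_zpow_smul, dB_tr hε h hnv, T_zpow_denom]; simp

lemma dB_mf1 (C : Ctx ε N i0) {k : ℤ} {wt : ι → ℤ} {f : ι → ι → ℍ → ℂ} (h : Bs ε k wt f)
    (hnv : ∀ z, dA f z ≠ 0) (a : ι) : Mf 1 (dB f a i0) :=
  (dB_mf (by exact_mod_cast C.pos) (h.mfN C) hnv a i0).to_one C.pos fun z => by
    have := dB_T C.sq h.vv hnv 1 a i0 z
    rw [zpow_one, C.eps1, inv_smul_eq_iff.2 C.fix1.symm, one_mul] at this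
    exact_mod_cast this

/-- The vector valued function with coordinates `s` in the basis `f`. -/
def phi (f : ι → ι → ℍ → ℂ) : (ι → Msub 1 one_pos) →ₗ[ℂ] (ι → ℍ → ℂ) where
  toFun s i := ∑ a, f a i * (s a).1
  map_add' s t := by
    ext i z
    simp [Finset.sum_apply, mul_add, Finset.sum_add_distrib]
  map_smul' c s := by
    ext i z
    simp only [Pi.smul_apply, Submodule.coe_smul, Finset.sum_apply, Pi.mul_apply, smul_eq_mul,
      RingHom.id_apply, Finset.mul_sum]
    exact Finset.sum_congr rfl fun a _ => by ring

/-- Coordinate vectors of forms of weight `w`. -/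
def Usub (wt : ι → ℤ) (w : ℤ) : Submodule ℂ (ι → Msub 1 one_pos) where
  carrier := {s | ∀ a, Lv (w - wt a) (s a).1}
  add_mem' hs ht a := (hs a).add (ht a)
  zero_mem' _ := Lv.zero _
  smul_mem' c _ hs a := (hs a).smul c

/-- Coordinate vectors of functions bounded at all cusps other than `∞`. -/
def Nsub (f : ι → ι → ℍ → ℂ) (i0 : ι) : Submodule ℂ (ι → Msub 1 one_pos) where
  carrier := {s | ∀ i ≠ i0, IsBoundedAtImInfty (phi f s i)}
  add_mem' hs ht i hi := by
    rw [map_add]; exact BoundedAtFilter.add (hs i hi) (ht i hi)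
  zero_mem' i hi := by
    rw [map_zero]; exact const_boundedAtFilter atImInfty (0 : ℂ)
  smul_mem' c s hs i hi := by
    rw [map_smul]; exact BoundedAtFilter.smul c (hs i hi)

lemma phi_vv {wt : ι → ℤ} {w : ℤ} {f : ι → ι → ℍ → ℂ} (h : ∀ a, VV ε (wt a) (f a))
    {s : ι → Msub 1 one_pos} (hs : s ∈ Usub wt w) : VV ε w (phi f s) := by
  have e : phi f s = ∑ a, fun i => (s a).1 * f a i := by
    ext i z
    simp only [phi, LinearMap.coe_mk, AddHom.coe_mk, Finset.sum_apply, Pi.mul_apply]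
    exact Finset.sum_congr rfl fun a _ => mul_comm _ _
  rw [e]
  exact VV.sum _ fun a _ => ((h a).lmul (hs a)).cast (by ring)

lemma phi_mf1 (C : Ctx ε N i0) {k : ℤ} {wt : ι → ℤ} {f : ι → ι → ℍ → ℂ} (h : Bs ε k wt f)
    (s : ι → Msub 1 one_pos) : Mf 1 (phi f s i0) :=
  Mf.sum one_pos _ fun a _ => (h.mf1 C a).mul (s a).2

/-- The `i0`-component of `phi`. -/
def phi0 (C : Ctx ε N i0) {k : ℤ} {wt : ι → ℤ} {f : ι → ι → ℍ → ℂ} (h : Bs ε k wt f) :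
    (ι → Msub 1 one_pos) →ₗ[ℂ] Msub 1 one_pos :=
  LinearMap.codRestrict (Msub 1 one_pos)
    (LinearMap.proj (R := ℂ) (φ := fun _ : ι => ℍ → ℂ) i0 ∘ₗ phi f) fun s => phi_mf1 C h s

lemma phi_single (f : ι → ι → ℍ → ℂ) (a : ι) (G : Msub 1 one_pos) (i : ι) :
    phi f (Pi.single a G) i = f a i * G.1 := by
  simp only [phi, LinearMap.coe_mk, AddHom.coe_mk]
  rw [Finset.sum_eq_single a]
  · simp
  · intro b _ hb; simp [Pi.single_eq_of_ne hb]
  · simp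

lemma pair_phi0 (C : Ctx ε N i0) {k : ℤ} {wt : ι → ℤ} {f : ι → ι → ℍ → ℂ} (h : Bs ε k wt f)
    (d : ℕ → ℂ) (s : ι → Msub 1 one_pos) :
    pair d (phi0 C h s) = ∑ᶠ m : ℕ, coef 1 (phi f s i0) (-m) * d m := rfl

/-- The functional `pair d ∘ phi0`, which kills forms of weight `2 - k`, is represented by pairing
with a tuple of level one forms. -/
lemma exists_tuple (C : Ctx ε N i0) {k : ℤ} {wt : ι → ℤ} {f : ι → ι → ℍ → ℂ}
    (hB : Bs ε k wt f) (d : ℕ → ℂ)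
    (H : ∀ v, VV ε (2 - k) v → (∀ i ≠ i0, IsBoundedAtImInfty (v i)) → Mf 1 (v i0) →
      ∑ᶠ m : ℕ, coef 1 (v i0) (-m) * d m = 0) :
    ∃ t : ι → ℍ → ℂ, (∀ a, Lv (k + wt a) (t a)) ∧ ∀ s ∈ Nsub f i0,
      coef 1 (∑ a, t a * (s a).1) 0 = pair d (phi0 C hB s) := by
  obtain ⟨L, hLU, hLN⟩ := ext_dual (Usub wt (2 - k)) (Nsub f i0) (pair d ∘ₗ phi0 C hB)
    fun s hU hN => by
      rw [LinearMap.comp_apply, pair_phi0]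
      exact H (phi f s) (phi_vv hB.vv hU) hN (phi_mf1 C hB s)
  set La : ι → Msub 1 one_pos →ₗ[ℂ] ℂ := fun a => L ∘ₗ LinearMap.single ℂ (fun _ : ι => Msub 1 one_pos) a with hLa
  have hvan : ∀ a (G : Msub 1 one_pos), IsBoundedAtImInfty (G.1 * qp 1 (-1)) → La a G = 0 := by
    intro a G hG
    have hGb : IsBoundedAtImInfty G.1 := by
      have := bdd_mono one_pos (show (-1 : ℤ) ≤ 0 by norm_num) hG
      simpa [qp_zero] using this
    have hN : (Pi.single a G : ι → Msub 1 one_pos) ∈ Nsub f i0 := fun i _ => by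
      rw [phi_single]; exact bdd_mul (hB.bdd a i) hGb
    have : La a G = (pair d ∘ₗ phi0 C hB) (Pi.single a G) := hLN _ hN
    rw [this, LinearMap.comp_apply, pair_phi0, phi_single]
    rw [finsum_congr (g := fun _ => 0), finsum_zero]
    intro m
    rw [((hB.mf1 C a).mul G.2).coef_lt one_pos (M := 1)
      (by rw [mul_assoc]; exact bdd_mul (hB.bdd a i0) hG) (by omega), zero_mul]
  have hex := fun a G => functional_expand one_pos (La a) (hvan a) G
  set t : ι → ℤ → ℂ := fun a m => La a ⟨qp 1 (-m), Mf.qp one_pos (-m)⟩ with ht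
  have hT : ∀ a, ∃ T, Lv (2 - (2 - k - wt a)) T ∧ coef 1 T = t a := fun a => by
    refine level_one_duality ?_ (t a) (N := 0) (fun n hn => hvan a _ ?_) fun s hs => ?_
    · obtain ⟨r, hr⟩ := hB.par a
      exact ⟨1 - k - r, by linarith⟩
    · change IsBoundedAtImInfty (qp 1 (-n) * qp 1 (-1))
      rw [← qp_add]
      have := qp_bdd one_pos (-n + -1).toNat
      rwa [show (((-n + -1).toNat : ℕ) : ℤ) = -n + -1 by omega] at this
    · have h1 : La a ⟨s, hs.mf⟩ = 0 := hLU _ fun b => by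
        rw [LinearMap.single_apply]
        by_cases hb : b = a
        · subst hb; rw [Pi.single_eq_same]; exact hs
        · rw [Pi.single_eq_of_ne hb]; exact Lv.zero _
      rw [hex] at h1
      rw [← h1, ← finsum_comp_equiv (Equiv.neg ℤ)]
      exact finsum_congr fun n => by simp [ht, mul_comm]
  choose T hTl hTc using hT
  refine ⟨T, fun a => (hTl a).cast (by ring), fun s hs => ?_⟩
  have h1 : L s = ∑ a, La a (s a) := by
    conv_lhs => rw [← Finset.univ_sum_single s]
    rw [map_sum]; rfl
  rw [← LinearMap.comp_apply, ← hLN s hs, h1,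
    coef_sum _ fun a _ => MDiff_mul (hTl a).hol (Mf.hol (s a).2)]
  refine Finset.sum_congr rfl fun a _ => ?_
  rw [hex, coef_mul one_pos (hTl a).mf (s a).2]
  exact finsum_congr fun m => by simp [hTc, ht]

lemma mem_Nsub_of {f : ι → ι → ℍ → ℂ} {s : ι → Msub 1 one_pos}
    (h : ∀ i ≠ i0, IsBoundedAtImInfty (fun z => ∑ a, f a i z * (s a).1 z)) : s ∈ Nsub f i0 :=
  fun i hi => by
    have : phi f s i = fun z => ∑ a, f a i z * (s a).1 z := by
      ext z; simp [phi, Finset.sum_apply]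
    rw [this]; exact h i hi

lemma phi_apply (f : ι → ι → ℍ → ℂ) (s : ι → Msub 1 one_pos) (i : ι) (z : ℍ) :
    phi f s i z = ∑ a, f a i z * (s a).1 z := by
  simp [phi, Finset.sum_apply]

/-- Translation by `r` carries `dB f a i * qp N m` to a multiple of another function of this kind,
with a factor independent of `a`. -/
lemma trace_formula (C : Ctx ε N i0) {k : ℤ} {wt : ι → ℤ} {f : ι → ι → ℍ → ℂ}
    (hB : Bs ε k wt f) (hnv : ∀ z, dA f z ≠ 0) (i : ι) (m : ℤ) : ∃ c : ℕ → ℂ, ∀ (r : ℕ) a z,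
      dB f a i ((r : ℝ) +ᵥ z) * qp N m ((r : ℝ) +ᵥ z) =
        c r * (dB f a ((ModularGroup.T ^ (r : ℤ) : SL(2, ℤ))⁻¹ • i) z * qp N m z) := by
  refine ⟨fun r => ε (ModularGroup.T ^ (r : ℤ)) i *
    cexp (2 * Real.pi * Complex.I * m * (r : ℝ) / (N : ℝ)), fun r a z => ?_⟩
  have := dB_T C.sq hB.vv hnv r a i z
  rw [Int.cast_natCast] at this
  rw [this, qp_vadd]; ring

lemma trace_mf (hN : 0 < N) {F : ℍ → ℂ} (hF : Mf N F)
    (h : Mf N (∑ r ∈ Finset.range N, fun z : ℍ => F ((r : ℝ) +ᵥ z))) :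
    Mf 1 (∑ r ∈ Finset.range N, fun z : ℍ => F ((r : ℝ) +ᵥ z)) := by
  refine h.to_one hN fun z => ?_
  simp only [Finset.sum_apply]
  have e : ∀ r : ℕ, F ((r : ℝ) +ᵥ (1 : ℝ) +ᵥ z) = F (((r + 1 : ℕ) : ℝ) +ᵥ z) := fun r => by
    rw [vadd_vadd]; push_cast; rfl
  simp only [e]
  have h1 := Finset.sum_range_succ (fun r : ℕ => F ((r : ℝ) +ᵥ z)) N
  rw [Finset.sum_range_succ', hF.per] at h1
  simpa using h1

/-- A sequence orthogonal to all principal parts in weight `2 - k` is the coefficient sequence of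
a form of weight `k` vanishing at all cusps other than `∞`. -/
theorem dual_abs (C : Ctx ε N i0) {k : ℤ} {wt : ι → ℤ} {f : ι → ι → ℍ → ℂ}
    (hB : Bs ε k wt f) (hnv : ∀ z, dA f z ≠ 0) (d : ℕ → ℂ)
    (H : ∀ v, VV ε (2 - k) v → (∀ i ≠ i0, IsBoundedAtImInfty (v i)) → Mf 1 (v i0) →
      ∑ᶠ m : ℕ, coef 1 (v i0) (-m) * d m = 0) :
    ∃ g, VV ε k g ∧ Mf 1 (g i0) ∧ (∀ m : ℕ, coef 1 (g i0) m = d m) ∧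
      (∀ m < 0, coef 1 (g i0) m = 0) ∧ (∀ i ≠ i0, Mf N (g i) ∧ IsZeroAtImInfty (g i)) := by
  obtain ⟨t, ht, hpair⟩ := exists_tuple C hB d H
  have hN : (0 : ℝ) < N := by exact_mod_cast C.pos
  have hBN := dB_mf hN (hB.mfN C) hnv
  have hB1 := dB_mf1 C hB hnv
  set g : ι → ℍ → ℂ := fun i => ∑ a, t a * dB f a i with hg
  have hgN : ∀ i, Mf N (g i) := fun i => Mf.sum hN _ fun a _ => ((ht a).mf.of_one C.pos).mul (hBN a i)
  have hg1 : Mf 1 (g i0) := Mf.sum one_pos _ fun a _ => (ht a).mf.mul (hB1 a)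
  -- The vector with single nonzero component `q ^ (-m)` at `i0` extracts the `m`-th coefficient
  -- of `g i0`.
  have hval : ∀ m : ℤ, coef 1 (g i0) m = ∑ᶠ n : ℕ, (if -(n : ℤ) = -m then 1 else 0) * d n := by
    intro m
    set s : ι → Msub 1 one_pos := fun a => ⟨dB f a i0 * qp 1 (-m), (hB1 a).mul (Mf.qp one_pos _)⟩
      with hs
    have hφ : ∀ i z, phi f s i z = (if i = i0 then 1 else 0) * qp 1 (-m) z := fun i z => by
      rw [phi_apply, ← dB_mul hnv, Finset.sum_mul]
      exact Finset.sum_congr rfl fun a _ => by simp only [hs, Pi.mul_apply]; ring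
    have hsN : s ∈ Nsub f i0 := fun i hi => by
      have : phi f s i = 0 := by ext z; rw [hφ, if_neg hi, zero_mul]; rfl
      rw [this]; exact const_boundedAtFilter atImInfty (0 : ℂ)
    have h1 := hpair s hsN
    have h2 : phi f s i0 = qp 1 (-m) := by ext z; rw [hφ, if_pos rfl, one_mul]
    have h3 : ∑ a, t a * (s a).1 = g i0 * qp 1 (-m) := by
      rw [hg, Finset.sum_mul]
      exact Finset.sum_congr rfl fun a _ => by simp only [hs]; ring
    rw [pair_phi0, h2, h3, coef_mul_qp, sub_neg_eq_add, zero_add] at h1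
    rw [h1]
    exact finsum_congr fun n => by rw [coef_qp one_pos]
  refine ⟨g, ⟨fun i => (hgN i).hol, fun γ i z => ?_⟩, hg1, fun m => ?_, fun m hm => ?_,
    fun i hi => ⟨hgN i, ?_⟩⟩
  · simp only [hg, Finset.sum_apply, Pi.mul_apply, Finset.mul_sum]
    refine Finset.sum_congr rfl fun a _ => ?_
    rw [(ht a).tr, dB_tr C.sq hB.vv hnv, zpow_add₀ (denom_ne_zero _ _), zpow_neg]
    have := zpow_ne_zero (wt a) (denom_ne_zero (γ : GL (Fin 2) ℝ) z)
    field_simp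
  · rw [hval, finsum_eq_single _ m fun n hn => by rw [if_neg (by omega), zero_mul]]
    simp
  · rw [hval, finsum_congr (g := fun _ => 0) fun n => by rw [if_neg (by omega), zero_mul],
      finsum_zero]
  · refine (hgN i).zero_of_coef hN fun m hm => ?_
    -- The vector supported at `i` with component `q ^ (-m / N)` need not have coordinates of period
    -- one, so it is averaged over translates. For `m ≤ 0` it is bounded and zero at `i0`.
    obtain ⟨c, hc⟩ := trace_formula C hB hnv i (-m)
    have e : ∀ a, (∑ r ∈ Finset.range N, fun z : ℍ => (dB f a i * qp N (-m)) ((r : ℝ) +ᵥ z)) =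
        ∑ r ∈ Finset.range N,
          c r • (dB f a ((ModularGroup.T ^ (r : ℤ) : SL(2, ℤ))⁻¹ • i) * qp N (-m)) := by
      intro a; ext z
      simp only [Finset.sum_apply, Pi.smul_apply, Pi.mul_apply, smul_eq_mul, hc]
    have hm1 : ∀ a, Mf 1
        (∑ r ∈ Finset.range N, fun z : ℍ => (dB f a i * qp N (-m)) ((r : ℝ) +ᵥ z)) := fun a => by
      refine trace_mf C.pos ((hBN a i).mul (Mf.qp hN _)) ?_
      rw [e]
      exact Mf.sum hN _ fun r _ => ((hBN a _).mul (Mf.qp hN _)).smul _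
    set s : ι → Msub 1 one_pos := fun a => ⟨_, hm1 a⟩ with hs
    have hφ : ∀ j, phi f s j = ∑ r ∈ Finset.range N,
        (c r * if j = (ModularGroup.T ^ (r : ℤ) : SL(2, ℤ))⁻¹ • i then 1 else 0) • qp N (-m) := by
      intro j; ext z
      rw [phi_apply]
      simp only [hs, Finset.sum_apply, Pi.smul_apply, Pi.mul_apply, smul_eq_mul, hc]
      simp only [← dB_mul hnv _ _ z, Finset.mul_sum, Finset.sum_mul]
      rw [Finset.sum_comm]
      exact Finset.sum_congr rfl fun r _ => Finset.sum_congr rfl fun a _ => by ring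
    have hq : IsBoundedAtImInfty (qp N (-m)) := by
      have := qp_bdd hN (-m).toNat
      rwa [show (((-m).toNat : ℕ) : ℤ) = -m by omega] at this
    have hsN : s ∈ Nsub f i0 := fun j _ => by
      rw [hφ]; exact bdd_sum _ fun r _ => BoundedAtFilter.smul _ hq
    have hfix : ∀ r : ℕ, (ModularGroup.T ^ r : SL(2, ℤ)) • i0 = i0 := fun r => by
      induction r with
      | zero => simp
      | succ r ih => rw [pow_succ, mul_smul, C.fix1, ih]
    have h0 : phi f s i0 = 0 := by
      rw [hφ]
      refine Finset.sum_eq_zero fun r _ => ?_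
      rw [if_neg, mul_zero, zero_smul]
      intro h
      rw [eq_inv_smul_iff, zpow_natCast, hfix] at h
      exact hi h.symm
    have h1 := hpair s hsN
    rw [pair_phi0, h0, finsum_congr (g := fun _ => 0) (fun n => by
      rw [coef_zero_fun, zero_mul]), finsum_zero] at h1
    have h3 : ∑ a, t a * (s a).1 =
        ∑ r ∈ Finset.range N, fun z : ℍ => (g i * qp N (-m)) ((r : ℝ) +ᵥ z) := by
      ext z
      simp only [hs, hg, Finset.sum_apply, Pi.mul_apply, Finset.mul_sum, Finset.sum_mul]
      rw [Finset.sum_comm]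
      refine Finset.sum_congr rfl fun r _ => Finset.sum_congr rfl fun a _ => ?_
      have : t a ((r : ℝ) +ᵥ z) = t a z := by
        have := (ht a).tr (ModularGroup.T ^ (r : ℤ)) z
        rw [modular_T_zpow_smul, T_zpow_denom, one_zpow, one_mul] at this
        exact_mod_cast this
      rw [this]; ring
    rw [h3, coef_zero, ct_trace C.pos ((hgN i).mul (Mf.qp hN _)).hol] at h1
    have hN0 : (N : ℂ) ≠ 0 := by exact_mod_cast C.pos.ne'
    exact (mul_eq_zero.1 h1).resolve_left hN0

/-- The residue theorem direction: principal parts in weight `2 - k` are orthogonal to forms of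
weight `k` vanishing at the other cusps. -/
theorem orth_abs (C : Ctx ε N i0) {k : ℤ} {F G : ι → ℍ → ℂ} (hF : VV ε (2 - k) F) (hG : VV ε k G)
    (hF1 : Mf 1 (F i0)) (hG1 : Mf 1 (G i0)) (hFb : ∀ i ≠ i0, IsBoundedAtImInfty (F i))
    (hG0 : ∀ i ≠ i0, IsZeroAtImInfty (G i)) : coef 1 (F i0 * G i0) 0 = 0 := by
  set P : ι → ℍ → ℂ := fun i => F i * G i with hP
  have hz : IsZeroAtImInfty (∑ i ∈ Finset.univ.erase i0, P i) := by
    have := tendsto_finsetSum (Finset.univ.erase i0) (f := P) (x := atImInfty) (a := fun _ => 0)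
      fun i hi => zero_mul_bdd (hFb i (Finset.ne_of_mem_erase hi)) (hG0 i (Finset.ne_of_mem_erase hi))
    simp only [Finset.sum_const_zero] at this
    refine this.congr fun z => by simp [Finset.sum_apply]
  have hsum : ∑ i, P i = P i0 + ∑ i ∈ Finset.univ.erase i0, P i :=
    (Finset.add_sum_erase _ _ (Finset.mem_univ i0)).symm
  have hm : MDiff (∑ i, P i) := MDiff_sum _ fun i _ => MDiff_mul (hF.hol i) (hG.hol i)
  have htr : ∀ (γ : SL(2, ℤ)) (z : ℍ), (∑ i, P i) (γ • z) = denom γ z ^ (2 : ℤ) * (∑ i, P i) z := by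
    intro γ z
    simp only [Finset.sum_apply, hP, Pi.mul_apply, Finset.mul_sum]
    rw [← Equiv.sum_comp (MulAction.toPerm γ)
      (fun i => F i (γ • z) * G i (γ • z))]
    refine Finset.sum_congr rfl fun i _ => ?_
    have h2 : denom γ z ^ (2 : ℤ) = denom γ z ^ (2 - k) * denom γ z ^ k := by
      rw [← zpow_add₀ (denom_ne_zero _ _), sub_add_cancel]
    rw [MulAction.toPerm_apply, hF.tr, hG.tr, inv_smul_smul, h2]
    linear_combination (denom γ z ^ (2 - k) * denom γ z ^ k * F i z * G i z) * C.sq γ (γ • i)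
  have hP1 : Mf 1 (P i0) := hF1.mul hG1
  have hlv : Lv 2 (∑ i, P i) := by
    refine ⟨hm, htr, ?_⟩
    obtain ⟨n, hn⟩ := hP1.mer
    refine ⟨n, ?_⟩
    rw [hsum, add_mul]
    exact BoundedAtFilter.add hn (bdd_mul (hz.isBigO_one ℝ) (qp_bdd one_pos n))
  have hE : Mf 1 (∑ i ∈ Finset.univ.erase i0, P i) := by
    rw [← add_sub_cancel_left (P i0) (∑ i ∈ Finset.univ.erase i0, P i), ← hsum]
    exact hlv.mf.sub one_pos hP1
  have h1 := hlv.ct_zero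
  rw [hsum, coef_add hP1.hol hE.hol, hE.coef_of_zero one_pos hz le_rfl, add_zero] at h1
  exact h1

end MC

end

/-! ### An initial basis -/

section
open UpperHalfPlane Filter Topology Asymptotics Function Complex
open scoped MatrixGroups Manifold ModularForm
namespace MC

open ModularForm EisensteinSeries Derivative

set_option linter.unusedSectionVars false

variable {ι : Type*} [Fintype ι] [DecidableEq ι] [MulAction SL(2, ℤ) ι]

lemma prod_ne_zero_fun {κ : Type*} (s : Finset κ) {F : κ → ℍ → ℂ} (h : ∀ a ∈ s, MDiff (F a))
    (h0 : ∀ a ∈ s, F a ≠ 0) : ∏ a ∈ s, F a ≠ 0 := by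
  classical
  induction s using Finset.induction_on with
  | empty => simp
  | insert a s ha ih =>
    rw [Finset.prod_insert ha]
    intro hz
    rcases (UpperHalfPlane.mul_eq_zero_iff (h a (Finset.mem_insert_self _ _))
      (MDiff_prod s fun b hb => h b (Finset.mem_insert_of_mem hb))).1 hz with h1 | h1
    · exact h0 a (Finset.mem_insert_self _ _) h1
    · exact ih (fun b hb => h b (Finset.mem_insert_of_mem hb))
        (fun b hb => h0 b (Finset.mem_insert_of_mem hb)) h1

lemma VV.odd_pow {ε : SL(2, ℤ) → ι → ℂ} (hε : ∀ γ i, ε γ i ^ 2 = 1) {w : ℤ} {v : ι → ℍ → ℂ}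
    (hv : VV ε w v) (n : ℕ) : VV ε ((2 * n + 1 : ℕ) * w) (fun i => v i ^ (2 * n + 1)) := by
  refine ⟨fun i => ?_, fun γ i z => ?_⟩
  · have := MDiff_prod (Finset.range (2 * n + 1)) (F := fun _ => v i) fun _ _ => hv.hol i
    simpa using this
  · have h1 : ε γ i ^ (2 * n + 1) = ε γ i := by rw [pow_succ, pow_mul, hε, one_pow, one_mul]
    simp only [Pi.pow_apply]
    rw [hv.tr, mul_pow, mul_pow, h1, mul_comm (((2 * n + 1 : ℕ) : ℤ)), zpow_mul, zpow_natCast]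

/-- Odd powers of a form that is nonzero at exactly one cusp are linearly independent: their
determinant is essentially a Vandermonde determinant in the squares of the components, which are
pairwise distinct. -/
lemma initial_basis {ε : SL(2, ℤ) → ι → ℂ} (hε : ∀ γ i, ε γ i ^ 2 = 1) {w k : ℤ} {v : ι → ℍ → ℂ}
    {i0 : ι} (hv : VV ε w v) (hb : ∀ i, IsBoundedAtImInfty (v i))
    (htrans : ∀ i : ι, ∃ γ : SL(2, ℤ), γ⁻¹ • i = i0) {c : ℂ} (hc : c ≠ 0)
    (hlim : Tendsto (v i0) atImInfty (𝓝 c)) (h0 : ∀ i ≠ i0, IsZeroAtImInfty (v i))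
    (hwk : Even (w - k)) : ∃ wt f, Bs ε k wt (f : ι → ι → ℍ → ℂ) := by
  have hne : ∀ i, v i ≠ 0 := fun i hi => by
    obtain ⟨γ, hγ⟩ := htrans i
    have : v i0 = 0 := by
      ext z
      have h := hv.tr γ i z
      rw [hi, hγ] at h
      have hd := zpow_ne_zero w (denom_ne_zero (γ : GL (Fin 2) ℝ) z)
      have he : ε γ i ≠ 0 := fun h => by simpa [h] using hε γ i
      simpa [hd, he] using h.symm
    rw [this] at hlim
    exact hc (tendsto_nhds_unique hlim tendsto_const_nhds)
  have hsq : ∀ i j, i ≠ j → v i ^ 2 - v j ^ 2 ≠ 0 := fun i j hij h => by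
    obtain ⟨γ, hγ⟩ := htrans j
    have hi : γ⁻¹ • i ≠ i0 := fun h => hij (smul_left_cancel γ⁻¹ (h.trans hγ.symm))
    have e : v (γ⁻¹ • i) ^ 2 = v i0 ^ 2 := by
      ext z
      have h1 := congrFun h (γ • z)
      simp only [Pi.sub_apply, Pi.pow_apply, Pi.zero_apply] at h1 ⊢
      rw [hv.tr, hv.tr, hγ, mul_pow, mul_pow, mul_pow, mul_pow, hε, hε, one_mul] at h1
      have hd := pow_ne_zero 2 (zpow_ne_zero w (denom_ne_zero (γ : GL (Fin 2) ℝ) z))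
      apply mul_left_cancel₀ hd
      linear_combination h1
    have l1 : Tendsto (v (γ⁻¹ • i) ^ 2) atImInfty (𝓝 (0 ^ 2)) := (h0 _ hi).pow 2
    have l2 : Tendsto (v i0 ^ 2) atImInfty (𝓝 (c ^ 2)) := hlim.pow 2
    rw [e] at l1
    have := tendsto_nhds_unique l1 l2
    exact hc (by simpa using this.symm)
  set e := Fintype.equivFin ι
  refine ⟨fun a => (2 * (e a : ℕ) + 1 : ℕ) * w, fun a i => v i ^ (2 * (e a : ℕ) + 1),
    fun a => hv.odd_pow hε _, fun a i => ?_, fun a => ?_, ?_⟩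
  · have := bdd_prod (Finset.range (2 * (e a : ℕ) + 1)) (F := fun _ => v i) fun _ _ => hb i
    simpa using this
  · obtain ⟨r, hr⟩ := hwk
    exact ⟨(e a : ℕ) * w + r, by push_cast; linear_combination hr⟩
  · have hd : dA (fun a i => v i ^ (2 * (e a : ℕ) + 1)) = (∏ i, v i) *
        ∏ l, ∏ m ∈ Finset.Ioi l, (v (e.symm m) ^ 2 - v (e.symm l) ^ 2) := by
      ext z
      have h1 := Matrix.det_vandermonde fun l => v (e.symm l) z ^ 2
      simp only [Pi.mul_apply, Finset.prod_apply, Pi.sub_apply, Pi.pow_apply]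
      rw [← h1, ← Matrix.det_transpose, ← Matrix.det_submatrix_equiv_self e, dA,
        ← Matrix.det_mul_row]
      congr 1
      ext a i
      simp [Matrix.vandermonde_apply, pow_succ, pow_mul, mul_comm]
    rw [hd]
    have hd2 : ∀ i, MDiff (v i ^ 2) := fun i => by rw [pow_two]; exact MDiff_mul (hv.hol i) (hv.hol i)
    intro hz
    rcases (UpperHalfPlane.mul_eq_zero_iff (MDiff_prod _ fun i _ => hv.hol i)
      (MDiff_prod _ fun l _ => MDiff_prod _ fun m _ => (hd2 _).sub (hd2 _))).1 hz with h1 | h1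
    · exact prod_ne_zero_fun _ (fun i _ => hv.hol i) (fun i _ => hne i) h1
    · refine prod_ne_zero_fun _ (fun l _ => MDiff_prod _ fun m _ => (hd2 _).sub (hd2 _))
        (fun l _ => prod_ne_zero_fun _ (fun m _ => (hd2 _).sub (hd2 _)) fun m hm => ?_) h1
      exact hsq _ _ fun h => (Finset.mem_Ioi.1 hm).ne' (e.symm.injective h)

end MC

end

/-! ### Constant terms of Eisenstein series -/

section
open UpperHalfPlane Filter Topology Asymptotics Function Complex
open scoped MatrixGroups Manifold ModularForm
namespace MC

open ModularForm EisensteinSeries Derivative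

set_option linter.unusedSectionVars false

/-- The constant term of the level `N` Eisenstein series attached to `a`: only the summands with
vanishing `z`-coefficient survive as `Im z → ∞`. -/
def eisLim {N : ℕ} (w : ℤ) (a : Fin 2 → ZMod N) : ℂ :=
  ∑' x : gammaSet N 1 a, if x.1 0 = 0 then ((x.1 1 : ℤ) : ℂ) ^ (-w) else 0

/-- The sequence `(n + 2) i` tending to `i∞`. -/
def iseq (n : ℕ) : ℍ := ⟨⟨0, (n : ℝ) + 2⟩, by positivity⟩

lemma iseq_tendsto : Tendsto iseq atTop atImInfty := by
  rw [atImInfty, tendsto_comap_iff]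
  exact tendsto_atTop_add_const_right _ _ tendsto_natCast_atTop_atTop

lemma summand_tendsto {w : ℤ} (hw : 3 ≤ w) (x : Fin 2 → ℤ) :
    Tendsto (fun n => eisSummand w x (iseq n)) atTop
      (𝓝 (if x 0 = 0 then ((x 1 : ℤ) : ℂ) ^ (-w) else 0)) := by
  by_cases h : x 0 = 0
  · simp [eisSummand, h]
  · rw [if_neg h, tendsto_zero_iff_norm_tendsto_zero]
    have h1 : Tendsto (fun n : ℕ => ((n : ℝ) + 2) ^ (-w)) atTop (𝓝 0) :=
      (tendsto_zpow_atTop_zero (by lia)).comp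
        (tendsto_atTop_add_const_right _ _ tendsto_natCast_atTop_atTop)
    refine squeeze_zero (fun _ => norm_nonneg _) (fun n => ?_) h1
    rw [eisSummand, norm_zpow, zpow_neg, zpow_neg]
    have h2 : (n : ℝ) + 2 ≤ ‖(x 0 : ℂ) * (iseq n : ℂ) + x 1‖ := by
      refine le_trans ?_ (Complex.abs_im_le_norm _)
      have h3 : ((x 0 : ℂ) * (iseq n : ℂ) + x 1).im = (x 0 : ℝ) * ((n : ℝ) + 2) := by
        simp [iseq]
      rw [h3, abs_mul, abs_of_pos (by positivity : (0 : ℝ) < n + 2)]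
      have h4 : (1 : ℝ) ≤ |(x 0 : ℝ)| := by exact_mod_cast Int.one_le_abs h
      nlinarith [(by positivity : (0 : ℝ) < n + 2)]
    have hp : (0 : ℝ) < n + 2 := by positivity
    lift w to ℕ using (by lia)
    simp only [zpow_natCast]
    gcongr

lemma eis_seq_tendsto {N : ℕ} {w : ℤ} (hw : 3 ≤ w) (a : Fin 2 → ZMod N) :
    Tendsto (fun n => eisensteinSeries a w (iseq n)) atTop (𝓝 (eisLim w a)) := by
  have hw' : (2 : ℝ) < w := by norm_cast
  have hs : Summable fun x : Fin 2 → ℤ => r ⟨⟨1, 2⟩, Nat.ofNat_pos⟩ ^ (-w) * ‖x‖ ^ (-w) := by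
    exact_mod_cast (summable_one_div_norm_rpow hw').mul_left <| r ⟨⟨1, 2⟩, Nat.ofNat_pos⟩ ^ (-w)
  refine tendsto_tsum_of_dominated_convergence (hs.subtype (gammaSet N 1 a))
    (fun x => summand_tendsto hw x.1) (Eventually.of_forall fun n x => ?_)
  simp_rw [eisSummand, norm_zpow]
  have hn : iseq n ∈ verticalStrip 1 2 := by
    rw [mem_verticalStrip_iff]
    refine ⟨?_, ?_⟩
    · change |(0 : ℝ)| ≤ 1
      simp
    · change (2 : ℝ) ≤ n + 2
      linarith [n.cast_nonneg (α := ℝ)]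
  exact_mod_cast summand_bound_of_mem_verticalStrip (lt_trans two_pos hw').le x.1 two_pos hn

lemma eis_hol {N : ℕ} {w : ℤ} (hw : 3 ≤ w) (a : Fin 2 → ZMod N) :
    MDiff (eisensteinSeries a w) := eisensteinSeriesSIF_mdifferentiable hw a

lemma eis_bdd {N : ℕ} [NeZero N] {w : ℤ} (hw : 3 ≤ w) (a : Fin 2 → ZMod N) :
    IsBoundedAtImInfty (eisensteinSeries a w) := by
  have := isBoundedAtImInfty_eisensteinSeriesSIF a hw 1
  rwa [SlashAction.slash_one] at this

lemma eis_Mf {N : ℕ} [NeZero N] {w : ℤ} (hw : 3 ≤ w) (a : Fin 2 → ZMod N) :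
    Mf N (eisensteinSeries a w) := by
  refine Mf.mk' (by exact_mod_cast NeZero.pos N) (eis_hol hw a) (fun z => ?_) (n := 0) ?_
  · have h := SlashInvariantForm.T_zpow_width_invariant N w 1 (eisensteinSeriesSIF a w) z
    rw [modular_T_zpow_smul] at h
    rw [mul_one] at h
    simpa only [Int.cast_natCast, eisensteinSeriesSIF_apply] using h
  · simpa [qp_zero] using eis_bdd hw a

lemma eis_tendsto {N : ℕ} [NeZero N] {w : ℤ} (hw : 3 ≤ w) (a : Fin 2 → ZMod N) :
    Tendsto (eisensteinSeries a w) atImInfty (𝓝 (eisLim w a)) := by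
  have h := (eis_Mf hw a).tendsto (by exact_mod_cast NeZero.pos N) (eis_bdd hw a)
  rwa [tendsto_nhds_unique (h.comp iseq_tendsto) (eis_seq_tendsto hw a)] at h

lemma eisLim_zero {N : ℕ} {w : ℤ} {a : Fin 2 → ZMod N} (ha : a 0 ≠ 0) : eisLim w a = 0 := by
  rw [eisLim]
  convert tsum_zero with x
  rw [if_neg]
  intro h
  apply ha
  have := congrFun x.2.1 0
  simp only [Function.comp, h, Int.cast_zero] at this
  exact this.symm

open Classical in
lemma eisLim_eq {N : ℕ} {w : ℤ} (d : ZMod N) : eisLim w ![0, d] =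
    (if d = 1 then 1 else 0) + (if d = -1 then (-1 : ℂ) ^ w else 0) := by
  set g : (Fin 2 → ℤ) → ℂ := fun x => if x 0 = 0 then ((x 1 : ℤ) : ℂ) ^ (-w) else 0 with hg
  have h1 : eisLim w ![0, d] = ∑' x : Fin 2 → ℤ, (gammaSet N 1 ![0, d]).indicator g x := by
    rw [← tsum_subtype]; rfl
  have hmem : ∀ b : ℤ, (![0, b] : Fin 2 → ℤ) ∈ gammaSet N 1 ![0, d] ↔
      ((b : ZMod N) = d ∧ b.natAbs = 1) := by
    intro b
    simp only [gammaSet, Set.mem_ofPred_eq, funext_iff, Fin.forall_fin_two]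
    simp [Int.gcd]
  rw [h1, tsum_eq_sum (s := {![0, 1], ![0, -1]})]
  · rw [Finset.sum_pair (by intro h; simpa using congrFun h 1)]
    simp only [Set.indicator_apply, hmem, hg]
    have e : (-1 : ℂ) ^ (-w) = (-1) ^ w := by
      rw [zpow_neg, ← inv_zpow]; norm_num
    simp [e, eq_comm]
  · intro x hx
    rw [Set.indicator_apply]
    split_ifs with h
    · simp only [hg]
      rw [if_neg]
      intro h0
      have hx' : x = ![0, x 1] := by
        ext i; fin_cases i <;> simp [h0]
      rw [hx', hmem] at h
      rcases Int.natAbs_eq_iff.mp h.2 with h | h <;> rw [h] at hx' <;> apply hx <;>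
        rw [hx'] <;> simp
    · rfl
end MC

end

/-! ### Induction from `Γ₀(D)` -/

section
open UpperHalfPlane Filter Topology Asymptotics Function Complex
open scoped MatrixGroups Manifold ModularForm
namespace MC

open ModularForm EisensteinSeries

set_option linter.unusedSectionVars false

section Concrete
variable {D : ℕ} {χ : ℤ → ℂ}

lemma chi_one (hχ : IsQuadDirChar D χ) : χ 1 = 1 := by
  have h0 : χ 1 ≠ 0 := fun h => (hχ.eq_zero_iff 1).mp h isCoprime_one_left
  have h1 := hχ.mul 1 1
  rw [mul_one] at h1
  exact (mul_left_cancel₀ h0 (by rw [mul_one]; exact h1)).symm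

lemma chi_congr (hχ : IsQuadDirChar D χ) {a b : ℤ} (h : (a : ZMod D) = b) : χ a = χ b := by
  obtain ⟨n, hn⟩ := (ZMod.intCast_eq_intCast_iff_dvd_sub a b D).mp h
  have hp : Function.Periodic χ (D : ℤ) := hχ.periodic
  have e : b = a + n * D := by linarith [mul_comm (D : ℤ) n]
  rw [e]
  exact ((hp.int_mul n) a).symm

lemma chi_sq (hχ : IsQuadDirChar D χ) {a : ℤ} (h : IsCoprime a (D : ℤ)) : χ a ^ 2 = 1 := by
  have h0 : χ a ≠ 0 := fun h' => (hχ.eq_zero_iff a).mp h' h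
  rcases hχ.sq_vals a with h1 | h1 | h1
  · exact absurd h1 h0
  · simp [h1]
  · simp [h1]

lemma mem_G0 {γ : SL(2, ℤ)} : γ ∈ CongruenceSubgroup.Gamma0 D ↔ (D : ℤ) ∣ γ 1 0 := by
  rw [CongruenceSubgroup.Gamma0_mem, ZMod.intCast_zmod_eq_zero_iff_dvd]

lemma cop_G0 {γ : SL(2, ℤ)} (h : γ ∈ CongruenceSubgroup.Gamma0 D) :
    IsCoprime (γ 1 1) (D : ℤ) := by
  obtain ⟨n, hn⟩ := mem_G0.mp h
  have hd := Matrix.SpecialLinearGroup.det_coe γ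
  rw [Matrix.det_fin_two] at hd
  refine ⟨γ 0 0, -(γ 0 1 * n), ?_⟩
  rw [hn] at hd
  linear_combination hd

lemma chi_G0_sq (hχ : IsQuadDirChar D χ) {γ : SL(2, ℤ)} (h : γ ∈ CongruenceSubgroup.Gamma0 D) :
    χ (γ 1 1) ^ 2 = 1 := chi_sq hχ (cop_G0 h)

lemma chi_G0_mul (hχ : IsQuadDirChar D χ) {γ : SL(2, ℤ)} (δ : SL(2, ℤ))
    (h : γ ∈ CongruenceSubgroup.Gamma0 D) :
    χ ((γ * δ) 1 1) = χ (γ 1 1) * χ (δ 1 1) := by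
  rw [← hχ.mul]
  apply chi_congr hχ
  have : (γ * δ) 1 1 = γ 1 0 * δ 0 1 + γ 1 1 * δ 1 1 := by
    simp [Matrix.SpecialLinearGroup.coe_mul, Matrix.mul_apply, Fin.sum_univ_two]
  rw [this, Int.cast_add, Int.cast_mul, CongruenceSubgroup.Gamma0_mem.mp h]
  simp

/-- The coset space `SL₂(ℤ)/Γ₀(D)`, indexing the components of the induced vector-valued forms. -/
abbrev Cst (D : ℕ) : Type := SL(2, ℤ) ⧸ CongruenceSubgroup.Gamma0 D

/-- The trivial coset, corresponding to the cusp `∞`. -/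
def i0 (D : ℕ) : Cst D := ((1 : SL(2, ℤ)) : SL(2, ℤ) ⧸ CongruenceSubgroup.Gamma0 D)

open Classical in
/-- A choice of coset representatives, normalised to be `1` at the trivial coset. -/
def sec (i : Cst D) : SL(2, ℤ) := if i = i0 D then 1 else i.out

lemma sec_mk (i : Cst D) : ((sec i : SL(2, ℤ)) : Cst D) = i := by
  unfold sec
  split_ifs with h
  · exact h.symm
  · exact QuotientGroup.out_eq' i

@[simp] lemma sec_i0 : sec (i0 D) = 1 := by simp [sec]

lemma sec_smul (i : Cst D) : (sec i) • (i0 D) = i := by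
  rw [i0, MulAction.Quotient.smul_mk, smul_eq_mul, mul_one, sec_mk]

lemma smul_i0 (γ : SL(2, ℤ)) : γ • (i0 D) = i0 D ↔ γ ∈ CongruenceSubgroup.Gamma0 D := by
  rw [i0, MulAction.Quotient.smul_mk, smul_eq_mul, mul_one, eq_comm, QuotientGroup.eq]
  simp

lemma inv_smul_i0 (γ : SL(2, ℤ)) :
    γ⁻¹ • (i0 D) = i0 D ↔ γ ∈ CongruenceSubgroup.Gamma0 D := by
  rw [smul_i0, inv_mem_iff]

/-- The cocycle `SL₂(ℤ) × SL₂(ℤ)/Γ₀(D) → Γ₀(D)` attached to the coset representatives. -/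
def delta (γ : SL(2, ℤ)) (i : Cst D) : SL(2, ℤ) := (sec i)⁻¹ * γ * sec (γ⁻¹ • i)

lemma delta_mem (γ : SL(2, ℤ)) (i : Cst D) : delta γ i ∈ CongruenceSubgroup.Gamma0 D := by
  rw [← smul_i0, delta, mul_smul, mul_smul, sec_smul, smul_inv_smul]
  nth_rewrite 2 [← sec_smul i]
  rw [inv_smul_smul]

/-- The signs by which `SL₂(ℤ)` acts on the induced vector-valued forms. -/
def eps (χ : ℤ → ℂ) (γ : SL(2, ℤ)) (i : Cst D) : ℂ := χ ((delta γ i) 1 1)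

lemma eps_sq (hχ : IsQuadDirChar D χ) (γ : SL(2, ℤ)) (i : Cst D) : eps χ γ i ^ 2 = 1 :=
  chi_G0_sq hχ (delta_mem γ i)

lemma eps_i0 {γ : SL(2, ℤ)} (h : γ ∈ CongruenceSubgroup.Gamma0 D) :
    eps χ γ (i0 D) = χ (γ 1 1) := by
  rw [eps, delta, (inv_smul_i0 γ).mpr h, sec_i0]
  simp

/-- The vector-valued form with components `F ∣ s⁻¹`, `s` running over coset representatives. -/
def comp (w : ℤ) (F : ℍ → ℂ) (i : Cst D) : ℍ → ℂ := F ∣[w] (sec i)⁻¹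

lemma comp_i0 (w : ℤ) (F : ℍ → ℂ) : comp w F (i0 D) = F := by
  rw [comp, sec_i0, inv_one, SlashAction.slash_one]

/-- Forms of level `Γ₀(D)` and character `χ` induce vector-valued forms. -/
lemma comp_VV {w : ℤ} {F : ℍ → ℂ} (hF : MDiff F)
    (htr : ∀ γ ∈ CongruenceSubgroup.Gamma0 D, F ∣[w] γ = χ (γ 1 1) • F) :
    VV (eps (D := D) χ) w (comp w F) := by
  refine ⟨fun i => hF.slash w _, fun γ i z => ?_⟩
  have h1 : comp w F i ∣[w] γ = eps χ γ i • comp w F (γ⁻¹ • i) := by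
    have e : (sec i)⁻¹ * γ = delta γ i * (sec (γ⁻¹ • i))⁻¹ := by
      rw [delta, mul_inv_cancel_right]
    rw [comp, ← SlashAction.slash_mul, e, SlashAction.slash_mul, htr _ (delta_mem γ i),
      ModularForm.SL_smul_slash]
    rfl
  have h2 := congrFun h1 z
  rw [ModularForm.SL_slash_apply] at h2
  have hd : denom γ z ≠ 0 := denom_ne_zero _ _
  rw [zpow_neg, mul_inv_eq_iff_eq_mul₀ (zpow_ne_zero _ hd)] at h2
  rw [h2, Pi.smul_apply, smul_eq_mul]
  ring

/-- Slashing the component at `i0` gives, up to sign, the other components. -/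
lemma VV.slash_i0 {w : ℤ} {v : Cst D → ℍ → ℂ} (hv : VV (eps χ) w v) (γ : SL(2, ℤ)) (z : ℍ) :
    (v (i0 D) ∣[w] γ) z = eps χ γ (i0 D) * v (γ⁻¹ • i0 D) z := by
  rw [ModularForm.SL_slash_apply, hv.tr γ (i0 D) z]
  have hd : denom γ z ≠ 0 := denom_ne_zero _ _
  rw [zpow_neg]
  field_simp

lemma ctx (hχ : IsQuadDirChar D χ) (hD : 0 < D) : Ctx (eps (D := D) χ) D (i0 D) := by
  have hT1 : ModularGroup.T ∈ CongruenceSubgroup.Gamma0 D := by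
    rw [mem_G0, ModularGroup.coe_T]; simp
  have hTD : ModularGroup.T ^ (D : ℤ) ∈ CongruenceSubgroup.Gamma D := by
    exact CongruenceSubgroup.ModularGroup_T_pow_mem_Gamma (D : ℤ) (D : ℤ) dvd_rfl
  have hconj : ∀ i : Cst D, (sec i)⁻¹ * ModularGroup.T ^ (D : ℤ) * sec i ∈
      CongruenceSubgroup.Gamma D := fun i => by
    simpa using (CongruenceSubgroup.Gamma_normal D).conj_mem _ hTD (sec i)⁻¹
  have hfix : ∀ i : Cst D, (ModularGroup.T ^ (D : ℤ)) • i = i := fun i => by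
    have h := CongruenceSubgroup.Gamma_mem.mp (hconj i)
    have h' : (sec i)⁻¹ * ModularGroup.T ^ (D : ℤ) * sec i ∈ CongruenceSubgroup.Gamma0 D :=
      CongruenceSubgroup.Gamma0_mem.mpr h.2.2.1
    rw [← smul_i0, mul_smul, mul_smul, sec_smul, inv_smul_eq_iff, sec_smul] at h'
    exact h'
  refine ⟨hD, eps_sq hχ, hfix, fun i => ?_, (smul_i0 _).mpr hT1, ?_⟩
  · have h := CongruenceSubgroup.Gamma_mem.mp (hconj i)
    rw [eps, delta, inv_smul_eq_iff.mpr (hfix i).symm, ← chi_one hχ]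
    apply chi_congr hχ
    simpa using h.2.2.2
  · rw [eps_i0 hT1, ModularGroup.coe_T]
    simpa using chi_one hχ
end Concrete
end MC

end

/-! ### The Eisenstein series supported at `∞` -/

section
open UpperHalfPlane Filter Topology Asymptotics Function Complex
open scoped MatrixGroups Manifold ModularForm
namespace MC

open ModularForm EisensteinSeries

set_option linter.unusedSectionVars false

section Eis
variable {D : ℕ} {χ : ℤ → ℂ} [NeZero D]

/-- The weight `w` Eisenstein series with character `χ` that is nonzero only at the cusp `∞`
(for `w ≥ 3` and `χ(-1) = (-1) ^ w`). -/
def hE (χ : ℤ → ℂ) (D : ℕ) [NeZero D] (w : ℤ) : ℍ → ℂ :=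
  ∑ d : ZMod D, χ (d.val : ℤ) • eisensteinSeries ![0, d] w

lemma hE_slash (w : ℤ) (γ : SL(2, ℤ)) : hE χ D w ∣[w] γ =
    ∑ d : ZMod D, χ (d.val : ℤ) •
      eisensteinSeries ![d * ((γ 1 0 : ℤ) : ZMod D), d * ((γ 1 1 : ℤ) : ZMod D)] w := by
  have hs : ∀ s : Finset (ZMod D),
      (∑ d ∈ s, χ (d.val : ℤ) • eisensteinSeries ![0, d] w) ∣[w] γ =
      ∑ d ∈ s, χ (d.val : ℤ) •
        eisensteinSeries ![d * ((γ 1 0 : ℤ) : ZMod D), d * ((γ 1 1 : ℤ) : ZMod D)] w := by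
    intro s
    classical
    induction s using Finset.induction_on with
    | empty => simp [SlashAction.zero_slash]
    | insert a s ha ih =>
      rw [Finset.sum_insert ha, Finset.sum_insert ha, SlashAction.add_slash, ih,
        ModularForm.SL_smul_slash, eisensteinSeries_slash_apply]
      congr 3
      ext i
      fin_cases i <;> simp [Matrix.vecMul, dotProduct, Fin.sum_univ_two]
  exact hs _

lemma hE_hol {w : ℤ} (hw : 3 ≤ w) : MDiff (hE χ D w) := by
  unfold hE
  exact MDiff_sum _ fun d _ => (eis_hol hw _).const_smul _

lemma hE_tr (hχ : IsQuadDirChar D χ) (w : ℤ) {γ : SL(2, ℤ)}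
    (hγ : γ ∈ CongruenceSubgroup.Gamma0 D) : hE χ D w ∣[w] γ = χ (γ 1 1) • hE χ D w := by
  rw [hE_slash, hE, Finset.smul_sum]
  have h0 : ((γ 1 0 : ℤ) : ZMod D) = 0 := CongruenceSubgroup.Gamma0_mem.mp hγ
  have hu : IsUnit ((γ 1 1 : ℤ) : ZMod D) := by
    obtain ⟨a, b, hab⟩ := cop_G0 hγ
    have := congrArg (Int.cast : ℤ → ZMod D) hab
    push_cast at this
    rw [ZMod.natCast_self, mul_zero, add_zero] at this
    exact IsUnit.of_mul_eq_one_right _ this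
  refine Fintype.sum_bijective (fun d : ZMod D => d * ((γ 1 1 : ℤ) : ZMod D))
    (Units.mulRight_bijective hu.unit) _ _ fun d => ?_
  have h1 : χ (((d * ((γ 1 1 : ℤ) : ZMod D) : ZMod D)).val : ℤ) = χ (d.val : ℤ) * χ (γ 1 1) := by
    rw [← hχ.mul]
    apply chi_congr hχ
    push_cast
    simp
  simp only [h0, mul_zero, h1, smul_smul]
  congr 1
  linear_combination (-χ (d.val : ℤ)) * chi_G0_sq hχ hγ

lemma hE_tendsto {w : ℤ} (hw : 3 ≤ w) (γ : SL(2, ℤ)) :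
    Tendsto (hE χ D w ∣[w] γ) atImInfty (𝓝 (∑ d : ZMod D, χ (d.val : ℤ) *
      eisLim w ![d * ((γ 1 0 : ℤ) : ZMod D), d * ((γ 1 1 : ℤ) : ZMod D)])) := by
  rw [hE_slash]
  have := tendsto_finsetSum (Finset.univ : Finset (ZMod D))
    (fun d _ => (eis_tendsto hw ![d * ((γ 1 0 : ℤ) : ZMod D), d * ((γ 1 1 : ℤ) : ZMod D)]).const_mul (χ (d.val : ℤ)))
  refine this.congr fun z => ?_
  simp [Finset.sum_apply]

lemma hE_zero (hχ : IsQuadDirChar D χ) {w : ℤ} (hw : 3 ≤ w) {γ : SL(2, ℤ)}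
    (hγ : γ ∉ CongruenceSubgroup.Gamma0 D) : IsZeroAtImInfty (hE χ D w ∣[w] γ) := by
  have h := hE_tendsto (χ := χ) (D := D) hw γ
  rwa [Finset.sum_eq_zero] at h
  intro d _
  by_cases hd : IsCoprime (d.val : ℤ) (D : ℤ)
  · rw [eisLim_zero, mul_zero]
    obtain ⟨a, b, hab⟩ := hd
    have := congrArg (Int.cast : ℤ → ZMod D) hab
    push_cast at this
    rw [ZMod.natCast_self, mul_zero, add_zero, ZMod.natCast_zmod_val] at this
    intro h0
    apply hγ
    rw [CongruenceSubgroup.Gamma0_mem]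
    have h0' : d * ((γ 1 0 : ℤ) : ZMod D) = 0 := h0
    calc ((γ 1 0 : ℤ) : ZMod D) = (a * d) * (γ 1 0 : ℤ) := by rw [this, one_mul]
      _ = 0 := by rw [mul_assoc, h0', mul_zero]
  · rw [(hχ.eq_zero_iff _).mpr hd, zero_mul]

/-- Only the pairs `(0, ±1)` contribute to the constant term. -/
lemma hE_lim (hχ : IsQuadDirChar D χ) {w : ℤ} (hw : 3 ≤ w) (hpar : χ (-1) = (-1) ^ w) :
    Tendsto (hE χ D w) atImInfty (𝓝 2) := by
  have h := hE_tendsto (χ := χ) (D := D) hw 1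
  rw [SlashAction.slash_one] at h
  convert h
  symm
  have e : ∀ d : ZMod D, (![d * (((1 : SL(2, ℤ)) 1 0 : ℤ) : ZMod D),
      d * (((1 : SL(2, ℤ)) 1 1 : ℤ) : ZMod D)] : Fin 2 → ZMod D) = ![0, d] := by
    intro d; simp
  simp only [e, eisLim_eq, mul_add, mul_ite, mul_one, mul_zero, Finset.sum_add_distrib,
    Finset.sum_ite_eq', Finset.mem_univ, if_true]
  have e1 : χ ((1 : ZMod D).val : ℤ) = 1 := by
    rw [← chi_one hχ]; apply chi_congr hχ; simp
  have e2 : χ ((-1 : ZMod D).val : ℤ) = (-1) ^ w := by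
    rw [← hpar]; apply chi_congr hχ; simp
  rw [e1, e2, ← mul_zpow]
  norm_num

/-- There are bounded vector-valued forms, as many as cosets, whose determinant vanishes nowhere. -/
lemma exists_basis [Fintype (Cst D)] [DecidableEq (Cst D)]
    (hχ : IsQuadDirChar D χ) {k : ℤ} (hk : 2 ≤ k) (hpar : χ (-1) = (-1) ^ k) :
    ∃ wt f, Bs (eps (D := D) χ) k wt f ∧ ∀ z, dA f z ≠ 0 := by
  have hw : (3 : ℤ) ≤ k + 2 := by lia
  have hpar' : χ (-1) = (-1) ^ (k + 2) := by
    rw [zpow_add₀ (by norm_num), hpar]; norm_num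
  have hlim := hE_lim hχ hw hpar'
  have hVV : VV (eps (D := D) χ) (k + 2) (comp (k + 2) (hE χ D (k + 2))) :=
    comp_VV (hE_hol hw) fun γ hγ => hE_tr hχ _ hγ
  have h0 : ∀ i : Cst D, i ≠ i0 D → IsZeroAtImInfty (comp (k + 2) (hE χ D (k + 2)) i) := by
    intro i hi
    refine hE_zero hχ hw fun hm => hi ?_
    rw [← inv_smul_i0, inv_inv, sec_smul] at hm
    exact hm
  obtain ⟨wt, f, hB⟩ := initial_basis (k := k) (i0 := i0 D) (c := 2) (eps_sq hχ) hVV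
    (fun i => by
      by_cases hi : i = i0 D
      · rw [hi, comp_i0]
        exact hlim.isBigO_one ℝ
      · exact (h0 i hi).isBoundedAtImInfty)
    (fun i => ⟨sec i, by rw [inv_smul_eq_iff, sec_smul]⟩) two_ne_zero
    (by rwa [comp_i0]) h0 (by rw [show k + 2 - k = 2 by ring]; exact even_two)
  obtain ⟨wt', f', h⟩ := exists_nonvanishing (eps_sq hχ) (∑ a, wt a).toNat wt f hB
    (Int.self_le_toNat _)
  exact ⟨wt', f', h⟩
end Eis
end MC

end

/-! ### Forms on the upper half-plane and the criterion -/

section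
open UpperHalfPlane Filter Topology Asymptotics Function Complex
open scoped MatrixGroups Manifold ModularForm
namespace MC

open ModularForm EisensteinSeries

section Bridge
variable {D : ℕ} {χ : ℤ → ℂ}

/-- Restriction to the bundled upper half-plane. -/
def up (f : ℂ → ℂ) : ℍ → ℂ := fun z => f z

/-- Extension of a function on the bundled upper half-plane to `ℂ`, with irrelevant values outside
the upper half-plane. -/
def dn (F : ℍ → ℂ) : ℂ → ℂ := fun τ => F (ofComplex τ)

lemma up_dn (F : ℍ → ℂ) : up (dn F) = F := by
  funext z
  rw [up, dn, ofComplex_apply]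

lemma slash_eq (w : ℤ) (γ : SL(2, ℤ)) (f : ℂ → ℂ) (z : ℍ) :
    slash w (matR γ) f z = (up f ∣[w] γ) z := by
  have hdet : (matR γ).det = 1 := by
    have h := Matrix.SpecialLinearGroup.det_coe γ
    rw [Matrix.det_fin_two] at h
    rw [Matrix.det_fin_two]
    simp only [matR, Matrix.map_apply]
    exact_mod_cast h
  rw [ModularForm.SL_slash_apply, ModularGroup.denom_apply, up, coe_specialLinearGroup_apply,
    slash, hdet]
  simp only [matR, Matrix.map_apply, Real.sqrt_one, Complex.ofReal_one, one_zpow, one_mul,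
    Complex.ofReal_intCast, algebraMap_int_eq, eq_intCast]
  ring

lemma up_hol {f : ℂ → ℂ} (hf : DifferentiableOn ℂ f UHP) : MDiff (up f) := by
  rw [UpperHalfPlane.mdifferentiable_iff]
  refine hf.congr fun τ hτ => ?_
  rw [Function.comp, up, ofComplex_apply_of_im_pos hτ]

lemma dn_hol {F : ℍ → ℂ} (hF : MDiff F) : DifferentiableOn ℂ (dn F) UHP :=
  UpperHalfPlane.mdifferentiable_iff.mp hF

lemma up_tr {w : ℤ} {f : ℂ → ℂ}
    (h : ∀ γ : SL(2, ℤ), (D : ℤ) ∣ γ 1 0 → ∀ τ ∈ UHP, slash w (matR γ) f τ = χ (γ 1 1) * f τ) :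
    ∀ γ ∈ CongruenceSubgroup.Gamma0 D, up f ∣[w] γ = χ (γ 1 1) • up f := by
  intro γ hγ
  funext z
  rw [← slash_eq, h γ (mem_G0.mp hγ) z z.im_pos]
  rfl

lemma dn_tr {w : ℤ} {v : Cst D → ℍ → ℂ} (hv : VV (eps χ) w v) (γ : SL(2, ℤ))
    (hγ : (D : ℤ) ∣ γ 1 0) (τ : ℂ) (hτ : τ ∈ UHP) :
    slash w (matR γ) (dn (v (i0 D))) τ = χ (γ 1 1) * dn (v (i0 D)) τ := by
  have hγ' := mem_G0.mpr hγ
  have h := slash_eq w γ (dn (v (i0 D))) ⟨τ, hτ⟩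
  rw [up_dn, hv.slash_i0, eps_i0 hγ', (inv_smul_i0 γ).mpr hγ'] at h
  rw [dn, ofComplex_apply_of_im_pos hτ]
  exact h

lemma dn_slash {w : ℤ} {v : Cst D → ℍ → ℂ} (hv : VV (eps χ) w v) (γ : SL(2, ℤ)) (z : ℍ) :
    slash w (matR γ) (dn (v (i0 D))) z = eps χ γ (i0 D) * v (γ⁻¹ • i0 D) z := by
  rw [slash_eq, up_dn, hv.slash_i0]

lemma norm_eps (hχ : IsQuadDirChar D χ) (γ : SL(2, ℤ)) (i : Cst D) : ‖eps χ γ i‖ = 1 := by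
  have h := congrArg norm (eps_sq hχ γ i)
  rw [norm_pow, norm_one] at h
  exact (pow_eq_one_iff_of_nonneg (norm_nonneg _) two_ne_zero).mp h

lemma sec_inv_notMem {i : Cst D} (hi : i ≠ i0 D) : ¬ (D : ℤ) ∣ (sec i)⁻¹ 1 0 := by
  intro h
  rw [← mem_G0, inv_mem_iff, ← smul_i0, sec_smul] at h
  exact hi h

lemma ofComplex_tendsto : Tendsto ofComplex (comap Complex.im atTop) atImInfty := by
  rw [atImInfty, tendsto_comap_iff]
  refine (tendsto_comap (f := Complex.im)).congr' ?_
  filter_upwards [tendsto_comap.eventually (eventually_gt_atTop (0 : ℝ))] with τ hτ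
  rw [Function.comp, ofComplex_apply_of_im_pos hτ]
  rfl

lemma coe_tendsto : Tendsto (fun z : ℍ => (z : ℂ)) atImInfty (comap Complex.im atTop) := by
  rw [tendsto_comap_iff]
  exact tendsto_comap

lemma exp_eq_qp (m : ℤ) (z : ℍ) : cexp (2 * (Real.pi : ℂ) * Complex.I * m * z) = qp 1 m z := by
  rw [qp_exp]; simp

/-- The coefficient sequence over `ℤ` extending `d` by zero. -/
def extd (d : ℕ → ℂ) (m : ℤ) : ℂ := if 0 ≤ m then d m.toNat else 0

lemma extd_neg (d : ℕ → ℂ) {m : ℤ} (hm : m < 0) : extd d m = 0 := if_neg (by lia)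
lemma extd_nat (d : ℕ → ℂ) (m : ℕ) : extd d m = d m := by simp [extd]

lemma hasSum_extd (d : ℕ → ℂ) (z : ℍ) (a : ℂ) :
    HasSum (fun m : ℕ => d m * cexp (2 * (Real.pi : ℂ) * Complex.I * m * z)) a ↔
      HasSum (fun m : ℤ => extd d m * qp 1 m z) a := by
  rw [← hasSum_shift (N := 0) (fun m hm => by rw [extd_neg d (by simpa using hm), zero_mul])]
  simp only [sub_zero, extd_nat, ← exp_eq_qp, Int.cast_natCast]

/-- Coefficients of a form vanishing at the other cusps are orthogonal to all principal parts. -/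
theorem criterion_mpr (hD : 0 < D) {k : ℤ} (hχ : IsQuadDirChar D χ) (d : ℕ → ℂ) {g : ℂ → ℂ}
    (hg : MemMInftySpace D χ k g)
    (hs : ∀ τ ∈ UHP, HasSum (fun m : ℕ => d m * cexp (2 * (Real.pi : ℂ) * Complex.I * m * τ))
      (g τ)) {f : ℂ → ℂ} {c : ℤ → ℂ} (hf : IsWeaklyHolInfty D χ (2 - k) f c) :
    ∑ᶠ m : ℕ, c (-(m : ℤ)) * d m = 0 := by
  classical
  have : NeZero D := ⟨hD.ne'⟩
  have : Fintype (Cst D) := Fintype.ofFinite _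
  obtain ⟨m₀, hm₀⟩ := hf.coeff_bddBelow
  obtain ⟨hF1, -, hFc⟩ := Mf.of_hasSum one_pos (up_hol hf.holo) hm₀ (fun z => by
    have := hf.fourier z z.im_pos
    simp only [exp_eq_qp] at this
    exact this)
  obtain ⟨hG1, -, hGc⟩ := Mf.of_hasSum (F := up g) (N := 0) one_pos (up_hol hg.holo)
    (fun m hm => extd_neg d (by simpa using hm))
    (fun z => (hasSum_extd d z _).mp (hs z z.im_pos))
  have hFV : VV (eps (D := D) χ) (2 - k) (comp (2 - k) (up f)) :=
    comp_VV (up_hol hf.holo) (up_tr hf.transform)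
  have hGV : VV (eps (D := D) χ) k (comp k (up g)) :=
    comp_VV (up_hol hg.holo) (up_tr hg.transform)
  have h := orth_abs (ctx hχ hD) hFV hGV (by rwa [comp_i0]) (by rwa [comp_i0])
    (fun i hi => by
      obtain ⟨C, hC⟩ := hf.bdd_at_other_cusps _ (sec_inv_notMem hi)
      rw [isBoundedAtImInfty_iff]
      refine ⟨C, 1, fun z hz => ?_⟩
      rw [comp, ← slash_eq]
      exact hC z hz)
    (fun i hi => by
      refine ((hg.vanish_at_other_cusps _ (sec_inv_notMem hi)).comp coe_tendsto).congr fun z => ?_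
      rw [comp, ← slash_eq, Function.comp])
  rw [comp_i0, comp_i0, coef_mul one_pos hF1 hG1, hFc, hGc] at h
  change ∑ᶠ m : ℤ, extd d m * c (-m) = 0 at h
  have hsub : Function.support (fun m : ℤ => extd d m * c (-m)) =
      Set.range (Nat.cast : ℕ → ℤ) ∩ Function.support (fun m : ℤ => extd d m * c (-m)) := by
    symm
    rw [Set.inter_eq_right]
    intro m hm
    by_contra hm'
    apply hm
    rcases lt_or_ge m 0 with h0 | h0
    · change extd d m * c (-m) = 0
      rw [extd_neg d h0, zero_mul]
    · exact absurd ⟨m.toNat, by simp [h0]⟩ hm'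
  rw [← finsum_mem_support, hsub, finsum_mem_inter_support,
    finsum_mem_range Nat.cast_injective] at h
  rw [← h]
  refine finsum_congr fun m => ?_
  rw [extd_nat, mul_comm]

/-- A sequence orthogonal to all principal parts is the `q`-expansion of a form. -/
theorem criterion_mp (hD : 0 < D) {k : ℤ} (hk : 2 ≤ k) (hχ : IsQuadDirChar D χ)
    (hpar : χ (-1) = (-1) ^ k) (d : ℕ → ℂ)
    (H : ∀ (f : ℂ → ℂ) (c : ℤ → ℂ), IsWeaklyHolInfty D χ (2 - k) f c →
        ∑ᶠ m : ℕ, c (-(m : ℤ)) * d m = 0) :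
    ∃ g : ℂ → ℂ, MemMInftySpace D χ k g ∧ ∀ τ ∈ UHP,
      HasSum (fun m : ℕ => d m * cexp (2 * (Real.pi : ℂ) * Complex.I * m * τ)) (g τ) := by
  classical
  have : NeZero D := ⟨hD.ne'⟩
  have : Fintype (Cst D) := Fintype.ofFinite _
  have hD' : (0 : ℝ) < D := by exact_mod_cast hD
  obtain ⟨wt, f, hB, hnv⟩ := exists_basis hχ hk hpar
  have hne : ∀ γ : SL(2, ℤ), ¬ (D : ℤ) ∣ γ 1 0 → γ⁻¹ • i0 D ≠ i0 D := fun γ hγ h =>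
    hγ (mem_G0.mp ((inv_smul_i0 γ).mp h))
  obtain ⟨g, hgV, hg1, hgd, hgneg, hg0⟩ := dual_abs (ctx hχ hD) hB hnv d (by
    intro v hv hb h1
    refine H (dn (v (i0 D))) (coef 1 (v (i0 D))) ⟨dn_hol (hv.hol _), dn_tr hv, ?_, ?_, ?_⟩
    · obtain ⟨N, hN⟩ := h1.coef_bddBelow one_pos
      exact ⟨N, hN⟩
    · intro τ hτ
      have := h1.hasSum one_pos ⟨τ, hτ⟩
      simp only [← exp_eq_qp] at this
      rw [dn, ofComplex_apply_of_im_pos hτ]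
      exact this
    · intro γ hγ
      have hb' := hb _ (hne γ hγ)
      have hM : Mf D (v (γ⁻¹ • i0 D)) := Mf.mk' hD' (hv.hol _) (hv.perN (ctx hχ hD) _) (n := 0)
        (by simpa [qp_zero] using hb')
      obtain ⟨C, hC⟩ := hM.bdd_im hD' hb'
      refine ⟨C, fun τ hτ => ?_⟩
      have h := dn_slash hv γ ⟨τ, by linarith⟩
      rw [show slash (2 - k) (matR γ) (dn (v (i0 D))) τ = _ from h, norm_mul, norm_eps hχ, one_mul]
      exact hC _ hτ)
  have hcoef : coef 1 (g (i0 D)) = extd d := by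
    funext m
    rcases lt_or_ge m 0 with h | h
    · rw [hgneg m h, extd_neg d h]
    · lift m to ℕ using h
      rw [hgd, extd_nat]
  refine ⟨dn (g (i0 D)), ⟨dn_hol (hgV.hol _), dn_tr hgV, ?_, ?_⟩, ?_⟩
  · obtain ⟨C, hC⟩ := hg1.bdd_im one_pos (hg1.bdd_of_coef' one_pos hgneg)
    refine ⟨C, fun τ hτ => ?_⟩
    rw [dn, ofComplex_apply_of_im_pos (by linarith)]
    exact hC _ hτ
  · intro γ hγ
    have h := ((hg0 _ (hne γ hγ)).2.comp ofComplex_tendsto).const_mul (eps χ γ (i0 D))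
    rw [mul_zero] at h
    refine h.congr' ?_
    filter_upwards [tendsto_comap.eventually (eventually_gt_atTop (0 : ℝ))] with τ hτ
    have h2 := dn_slash hgV γ ⟨τ, hτ⟩
    rw [Function.comp, ofComplex_apply_of_im_pos hτ]
    exact h2.symm
  · intro τ hτ
    rw [dn, ofComplex_apply_of_im_pos hτ]
    refine (hasSum_extd d ⟨τ, hτ⟩ _).mpr ?_
    rw [← hcoef]
    exact hg1.hasSum one_pos ⟨τ, hτ⟩
end Bridge
end MC

end

/-- **Modularity criterion.**  For a formal `q`-expansion `∑_{m ≥ 0} d(m) q^m` the following are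
equivalent: (1) `∑_{m ≥ 0} c(-m) d(m) = 0` for every `f ∈ M^{!,∞}_{2-k}(D,χ)` with Fourier
coefficients `c`; (2) `∑_{m ≥ 0} d(m) q^m` is the `q`-expansion of an element of `M^∞_k(D,χ)`. -/
theorem modularity_criterion
    (D : ℕ) (hD : Odd D) (hDsf : Squarefree D) (hDpos : 0 < D)
    (k : ℤ) (hk : 2 ≤ k)
    (χ : ℤ → ℂ) (hχ : IsQuadDirChar D χ) (hpar : χ (-1) = (-1) ^ k)
    (d : ℕ → ℂ) :
    (∀ (f : ℂ → ℂ) (c : ℤ → ℂ), IsWeaklyHolInfty D χ (2 - k) f c →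
        ∑ᶠ m : ℕ, c (-(m : ℤ)) * d m = 0) ↔
      (∃ g : ℂ → ℂ, MemMInftySpace D χ k g ∧ ∀ τ ∈ UHP,
        HasSum (fun m : ℕ => d m * Complex.exp (2 * (Real.pi : ℂ) * Complex.I * m * τ))
          (g τ)) := by
  exact ⟨MC.criterion_mp hDpos hk hχ hpar d,
    fun ⟨_, hg, hs⟩ _ _ hf => MC.criterion_mpr hDpos hχ d hg hs hf⟩
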